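/- arXiv:1506.01755 — 3 statements merged into one kernel-verified Lean document; each statement's English description precedes it below -/
import Mathlib

section
/- There exists a constant C > 0 such that for all integers n ≥ 2, | Σ_{l=2}^{n} (−1)^l C(n,l) ζ(l) − [ 1/2 − n(1 − γ − h_{n−1}) ] | ≤ C · n^{1/4} · exp(−2√(πn)), where ζ(l) = Σ_{j≥1} j^{−l} is the Riemann zeta function at the integer l ≥ 2. (The case m = k = 1 of the asymptotic for H_n(m,k), recovering the asymptotics for differences of zeta values.) -/
open Finset Real

/-- The harmonic number `h_N = ∑_{i=1}^N 1/i`. -/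
noncomputable def harm (N : ℕ) : ℝ := ∑ i ∈ Finset.Icc 1 N, (1 : ℝ) / i


lemma zd_q_facts (ρ : ℝ) (hρ : 0 ≤ ρ) :
    1 ≤ ρ + 1/(ρ+1) ∧ ρ ≤ ρ + 1/(ρ+1) ∧ ρ + 1/(ρ+1) ≤ ρ + 1 := by
  have h1 : 0 < ρ + 1 := by linarith
  have h2 : 0 < 1/(ρ+1) := by positivity
  have h3 : 1/(ρ+1) ≤ 1 := by rw [div_le_one h1]; linarith
  refine ⟨?_, by linarith, by linarith⟩
  have : ρ + 1/(ρ+1) - 1 = ρ^2/(ρ+1) := by field_simp; ring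
  have h4 : 0 ≤ ρ^2/(ρ+1) := by positivity
  linarith

lemma zd_t4 (t : ℝ) : t^4 ≤ 16 * exp ((t-1)^2) := by
  have h1 : t^2 ≤ 2*((t-1)^2 + 1) := by nlinarith [sq_nonneg (t-2)]
  have h2 : (t-1)^2/2 + 1 ≤ exp ((t-1)^2/2) := add_one_le_exp _
  have h3 : exp ((t-1)^2) = exp ((t-1)^2/2)^2 := by rw [← exp_nat_mul]; congr 1; push_cast; ring
  have h4 : t^2 ≤ 4 * exp ((t-1)^2/2) := by nlinarith [sq_nonneg (t-1)]
  rw [h3]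
  nlinarith [sq_nonneg t, exp_pos ((t-1)^2/2)]

lemma zd_pre (n q q0 : ℝ) (hq : 1 ≤ q) (hq0 : 0 < q0) (hn : n = π * q0^2) :
    n*(n+2*q)*4/q^4 ≤ 2000 * exp (π/2*((q-q0)^2/q)) := by
  have hqp : 0 < q := by linarith
  set t := q0/q with ht
  have htp : 0 < t := by positivity
  have hpi : π ≤ 4 := pi_le_four
  have hpi0 := pi_pos
  have e1 : n*(n+2*q)*4/q^4 = 4*(π^2*t^4 + 2*π*t^2/q) := by
    rw [hn, ht]; field_simp
  have e2 : π/2*((q-q0)^2/q) = π/2*q*(t-1)^2 := by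
    rw [ht]; field_simp; ring
  have h3 : (t-1)^2 ≤ π/2*q*(t-1)^2 := by
    have : 1 ≤ π/2*q := by nlinarith [pi_gt_three]
    nlinarith [sq_nonneg (t-1)]
  rw [e1, e2]
  have h4 := exp_le_exp.mpr h3
  have h5 := zd_t4 t
  have h6 : 2*π*t^2/q ≤ 2*π*t^2 := div_le_self (by positivity) hq
  have h7 : π^2*t^4 ≤ 16*t^4 := by
    apply mul_le_mul_of_nonneg_right _ (by positivity); nlinarith
  have h8 : 2*π*t^2 ≤ 8*t^2 := by
    apply mul_le_mul_of_nonneg_right _ (by positivity); nlinarith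
  have h9 : t^2 ≤ (1 + t^4)/2 := by nlinarith [sq_nonneg (t^2-1)]
  have h10 : 1 ≤ exp ((t-1)^2) := one_le_exp (sq_nonneg _)
  nlinarith

lemma zd_gauss (ρ q q0 : ℝ) (h1 : ρ ≤ q) (h2 : q ≤ ρ + 1) (hq : 1 ≤ q) (hq0 : 1/2 ≤ q0) :
    exp (-(π/2*((q-q0)^2/q))) ≤
      exp 2 * exp (-(π/8/q0) * (ρ-q0)^2) + exp (-(π/8) * ρ) := by
  have hqp : 0 < q := by linarith
  have hpi0 := pi_pos
  have hq0p : 0 < q0 := by linarith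
  rcases le_total q (2*q0) with h | h
  · refine le_trans ?_ (le_add_of_nonneg_right (exp_pos _).le)
    rw [← exp_add]
    apply exp_le_exp.mpr
    have a1 : (q-q0)^2/(2*q0) ≤ (q-q0)^2/q :=
      div_le_div_of_nonneg_left (sq_nonneg _) hqp h
    have a2 : (ρ-q0)^2 ≤ 2*(q-q0)^2 + 2 := by nlinarith [sq_nonneg (q-q0 + (q - ρ))]
    have a3 : π/2*((q-q0)^2/(2*q0)) ≤ π/2*((q-q0)^2/q) := by gcongr
    have a4 : (π/8/q0) * (ρ-q0)^2 ≤ (π/8/q0) * (2*(q-q0)^2 + 2) := by gcongr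
    have a5 : (π/8/q0) * (2*(q-q0)^2 + 2) = π/2*((q-q0)^2/(2*q0)) + π/4/q0 := by
      field_simp; ring
    have a6 : π/4/q0 ≤ 2 := by
      rw [div_le_iff₀ hq0p]; nlinarith [pi_le_four]
    linarith
  · refine le_trans ?_ (le_add_of_nonneg_left (by positivity))
    apply exp_le_exp.mpr
    have a1 : q/4 ≤ (q-q0)^2/q := by
      rw [le_div_iff₀ hqp]; nlinarith
    have : π/8*ρ ≤ π/2*(q/4) := by nlinarith
    have : π/2*(q/4) ≤ π/2*((q-q0)^2/q) := by gcongr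
    linarith

/-- the pointwise bound on the ray -/
lemma zd_point (n ρ q0 : ℝ) (hρ : 0 ≤ ρ) (hq0 : 1/2 ≤ q0) (hn : n = π * q0^2) :
    n*(n+2*(ρ + 1/(ρ+1)))*4/(ρ + 1/(ρ+1))^4 * exp (-(n-2)/(ρ + 1/(ρ+1)) - π*ρ) ≤
      2000 * exp 6 * exp (-2*π*q0) *
      (exp 2 * exp (-(π/8/q0) * (ρ-q0)^2) + exp (-(π/8) * ρ)) := by
  obtain ⟨hq, h1, h2⟩ := zd_q_facts ρ hρ
  set q := ρ + 1/(ρ+1) with hqd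
  have hqp : 0 < q := by linarith
  have A := zd_pre n q q0 hq (by linarith) hn
  have B := zd_gauss ρ q q0 h1 h2 hq hq0
  have e1 : -(n-2)/q - π*ρ ≤ 6 + -2*π*q0 + -(π/2*((q-q0)^2/q)) + -(π/2*((q-q0)^2/q)) := by
    have b1 : n/q + π*q = 2*π*q0 + π*((q-q0)^2/q) := by rw [hn]; field_simp; ring
    have b2 : 2/q ≤ 2 := div_le_self (by norm_num) hq
    have b3 : -(n-2)/q = -(n/q) + 2/q := by ring
    rw [b3]
    nlinarith [pi_le_four, pi_pos]
  have e2 := exp_le_exp.mpr e1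
  rw [exp_add, exp_add, exp_add] at e2
  have e3 : exp (π/2*((q-q0)^2/q)) * exp (-(π/2*((q-q0)^2/q))) = 1 := by
    rw [← exp_add]; simp
  calc _ ≤ 2000 * exp (π/2*((q-q0)^2/q)) * (exp 6 * exp (-2*π*q0) * exp (-(π/2*((q-q0)^2/q))) * exp (-(π/2*((q-q0)^2/q)))) := by
        gcongr
    _ = 2000 * exp 6 * exp (-2*π*q0) * (exp (π/2*((q-q0)^2/q)) * exp (-(π/2*((q-q0)^2/q)))) * exp (-(π/2*((q-q0)^2/q))) := by ring
    _ = 2000 * exp 6 * exp (-2*π*q0) * exp (-(π/2*((q-q0)^2/q))) := by rw [e3, mul_one]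
    _ ≤ _ := by gcongr

lemma zd_int_bound (q0 : ℝ) (hq0 : 1/2 ≤ q0) :
    MeasureTheory.IntegrableOn (fun ρ : ℝ => exp 2 * exp (-(π/8/q0) * (ρ-q0)^2) + exp (-(π/8) * ρ)) (Set.Ioi 0) ∧
    ∫ ρ in Set.Ioi (0:ℝ), (exp 2 * exp (-(π/8/q0) * (ρ-q0)^2) + exp (-(π/8) * ρ)) ≤ (3 * exp 2 + 6) * √q0 := by
  have hpi := pi_pos
  have hq0p : 0 < q0 := by linarith
  have hb : 0 < π/8/q0 := by positivity
  have i0 : MeasureTheory.Integrable (fun ρ : ℝ => exp (-(π/8/q0) * (ρ-q0)^2)) :=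
    (integrable_exp_neg_mul_sq hb).comp_sub_right q0
  have i1 := i0.const_mul (exp 2)
  have i2 : MeasureTheory.IntegrableOn (fun ρ : ℝ => exp (-(π/8) * ρ)) (Set.Ioi 0) :=
    integrableOn_exp_mul_Ioi (by linarith) 0
  refine ⟨i1.integrableOn.add i2, ?_⟩
  rw [MeasureTheory.integral_add i1.integrableOn i2, integral_exp_mul_Ioi (by linarith)]
  have a1 : ∫ ρ in Set.Ioi (0:ℝ), exp 2 * exp (-(π/8/q0) * (ρ-q0)^2) ≤ ∫ ρ : ℝ, exp 2 * exp (-(π/8/q0) * (ρ-q0)^2) :=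
    MeasureTheory.setIntegral_le_integral i1 (Filter.Eventually.of_forall fun x => by positivity)
  rw [MeasureTheory.integral_const_mul (μ := MeasureTheory.volume), MeasureTheory.integral_sub_right_eq_self (fun ρ => exp (-(π/8/q0) * ρ^2)), integral_gaussian] at a1
  have a2 : π/(π/8/q0) = 8*q0 := by field_simp
  rw [a2] at a1
  have a3 : √(8*q0) ≤ 3 * √q0 := by
    rw [Real.sqrt_le_left (by positivity), mul_pow, Real.sq_sqrt hq0p.le]; linarith
  have a4 : (1:ℝ)/2 ≤ √q0 := by
    apply Real.le_sqrt_of_sq_le; linarith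
  have a5 : -exp (-(π/8)*0)/(-(π/8)) ≤ 3 := by
    simp only [mul_zero, exp_zero]
    rw [neg_div_neg_eq, div_le_iff₀ (by positivity)]; nlinarith [pi_gt_three]
  have := exp_pos 2
  nlinarith

/-- periodic second Bernoulli function, as a Fourier series -/
noncomputable def zdB (t : ℝ) : ℝ := ∑' k : ℕ, 1 / (π^2 * (k:ℝ)^2) * cos (2 * π * k * t)

lemma zdB_summable_bound : HasSum (fun k : ℕ => 1 / (π^2 * (k:ℝ)^2)) (1/6) := by
  have h := hasSum_zeta_two.mul_left (1/π^2)
  have e1 : (fun k : ℕ => 1 / (π^2 * (k:ℝ)^2)) = fun k : ℕ => 1/π^2 * (1/(k:ℝ)^2) := by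
    ext k
    rw [div_mul_div_comm, one_mul]
  have e2 : (1:ℝ)/6 = 1/π^2 * (π^2/6) := by
    have := pi_ne_zero
    field_simp
  rw [e1, e2]
  exact h

lemma zdB_bound (k : ℕ) (t : ℝ) : ‖1 / (π^2 * (k:ℝ)^2) * cos (2 * π * k * t)‖ ≤ 1 / (π^2 * (k:ℝ)^2) := by
  rw [norm_mul, Real.norm_of_nonneg (by positivity)]
  exact mul_le_of_le_one_right (by positivity) (abs_cos_le_one _)

lemma zdB_hasSum (t : ℝ) : HasSum (fun k : ℕ => 1 / (π^2 * (k:ℝ)^2) * cos (2 * π * k * t)) (zdB t) :=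
  (Summable.of_norm_bounded zdB_summable_bound.summable (fun k => zdB_bound k t)).hasSum

lemma zdB_continuous : Continuous zdB := by
  unfold zdB
  exact continuous_tsum (fun k => by fun_prop) zdB_summable_bound.summable (fun k t => zdB_bound k t)

lemma zdB_eq (j : ℕ) (t : ℝ) (ht : t ∈ Set.Icc (j:ℝ) (j+1)) :
    zdB t = (t-j)^2 - (t-j) + 1/6 := by
  have h := (hasSum_one_div_nat_pow_mul_cos (k := 1) one_ne_zero (x := t - j) ⟨by linarith [ht.1], by linarith [ht.2]⟩).mul_left (1/π^2)
  have h2 := zdB_hasSum t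
  have e : (fun k : ℕ => 1 / (π^2 * (k:ℝ)^2) * cos (2 * π * k * t)) = (fun k : ℕ => 1/π^2 * (1 / (k:ℝ)^(2*1) * cos (2*π*k*(t-j)))) := by
    ext k
    have : 2*π*k*(t-j) = 2*π*k*t - (k*j : ℕ) * (2*π) := by push_cast; ring
    rw [this, Real.cos_sub_nat_mul_two_pi]
    by_cases hk : (k:ℝ) = 0
    · simp [hk]
    · field_simp
      ring
  rw [e] at h2
  rw [h2.unique h]
  have hb : Polynomial.eval (t - (j:ℝ)) (Polynomial.map (algebraMap ℚ ℝ) (Polynomial.bernoulli (2*1))) = (t-j)^2 - (t-j) + 1/6 := by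
    simp [Polynomial.bernoulli, Finset.sum_range_succ, bernoulli_one, bernoulli_two]
    try ring
  rw [hb]
  norm_num [Nat.factorial]
  field_simp

lemma zd_em_step (f f1 f2 : ℝ → ℝ) (hf : ∀ t, 0 ≤ t → HasDerivAt f (f1 t) t)
    (hf1 : ∀ t, 0 ≤ t → HasDerivAt f1 (f2 t) t) (hf2 : ContinuousOn f2 (Set.Ici 0)) (j : ℕ) :
    ∫ t in (j:ℝ)..(j+1), (1/2 * (zdB t * f2 t) - f t) =
      (f1 (j+1) - f1 j)/12 - (f j + f (j+1))/2 := by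
  have hj : (0:ℝ) ≤ j := Nat.cast_nonneg j
  have hsub : Set.uIcc (j:ℝ) (j+1) ⊆ Set.Ici 0 := by
    rw [Set.uIcc_of_le (by linarith)]; intro x hx; exact le_trans hj hx.1
  have hc : ContinuousOn f (Set.Ici 0) := fun t ht => (hf t ht).continuousAt.continuousWithinAt
  have := intervalIntegral.integral_eq_sub_of_hasDerivAt (a := (j:ℝ)) (b := j+1)
    (f := fun t => 1/2 * ((t-j)^2 - (t-j) + 1/6) * f1 t - (t - j - 1/2) * f t)
    (f' := fun t => 1/2 * (zdB t * f2 t) - f t) ?_ ?_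
  · rw [this]; ring
  · intro t ht
    have h0 := hsub ht
    rw [Set.uIcc_of_le (by linarith)] at ht
    have hid : HasDerivAt (fun t : ℝ => t - j) 1 t := (hasDerivAt_id t).sub_const _
    have h1 : HasDerivAt (fun t : ℝ => 1/2 * ((t-j)^2 - (t-j) + 1/6)) (1/2 * (2*(t-j) - 1)) t := by
      have := (((hid.pow 2).sub hid).add_const (1/6)).const_mul (1/2)
      refine this.congr_deriv ?_; norm_num
    have h2 := (h1.mul (hf1 t h0)).sub ((hid.sub_const (1/2)).mul (hf t h0))
    refine h2.congr_deriv ?_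
    rw [zdB_eq j t ht]; ring
  · apply ContinuousOn.intervalIntegrable
    exact ((continuousOn_const.mul (zdB_continuous.continuousOn.mul hf2)).sub hc).mono hsub

lemma zd_em (f f1 f2 : ℝ → ℝ) (hf : ∀ t, 0 ≤ t → HasDerivAt f (f1 t) t)
    (hf1 : ∀ t, 0 ≤ t → HasDerivAt f1 (f2 t) t) (hf2 : ContinuousOn f2 (Set.Ici 0)) (N : ℕ) :
    ∑ j ∈ range N, f j = (∫ t in (0:ℝ)..N, f t) + (f1 N - f1 0)/12 - (f N - f 0)/2
      - 1/2 * ∫ t in (0:ℝ)..N, zdB t * f2 t := by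
  have hc : ContinuousOn f (Set.Ici 0) := fun t ht => (hf t ht).continuousAt.continuousWithinAt
  have hsub : ∀ a b : ℕ, Set.uIcc (a:ℝ) b ⊆ Set.Ici 0 := by
    intro a b x hx
    exact le_trans (le_min (Nat.cast_nonneg a) (Nat.cast_nonneg b)) hx.1
  have hi1 : ∀ a b : ℕ, IntervalIntegrable f MeasureTheory.volume a b := fun a b =>
    (hc.mono (hsub a b)).intervalIntegrable
  have hi2 : ∀ a b : ℕ, IntervalIntegrable (fun t => zdB t * f2 t) MeasureTheory.volume a b := fun a b =>
    ((zdB_continuous.continuousOn.mul hf2).mono (hsub a b)).intervalIntegrable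
  induction N with
  | zero => simp
  | succ N ih =>
    rw [Finset.sum_range_succ, ih]
    have s := zd_em_step f f1 f2 hf hf1 hf2 N
    have a1 := hi1 N (N+1)
    have a2 := hi2 N (N+1)
    have b1 := hi1 0 N
    have b2 := hi2 0 N
    push_cast at a1 a2 b1 b2 ⊢
    rw [intervalIntegral.integral_sub (a2.const_mul _) a1, intervalIntegral.integral_const_mul] at s
    rw [← intervalIntegral.integral_add_adjacent_intervals b1 a1, ← intervalIntegral.integral_add_adjacent_intervals b2 a2]
    linarith

noncomputable def zdg (m : ℕ) (t : ℝ) : ℝ := t^(m+2)/(1+t)^(m+2)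
noncomputable def zdg1 (m : ℕ) (t : ℝ) : ℝ := (m+2) * t^(m+1)/(1+t)^(m+3)
noncomputable def zdg2 (m : ℕ) (t : ℝ) : ℝ := (m+2) * t^m * (m+1-2*t)/(1+t)^(m+4)

lemma zdg_deriv (m : ℕ) (t : ℝ) (ht : 0 ≤ t) : HasDerivAt (zdg m) (zdg1 m t) t := by
  have h0 : (1+t) ≠ 0 := by linarith
  have h := (hasDerivAt_pow (m+2) t).div (((hasDerivAt_id t).const_add 1).pow (m+2)) (pow_ne_zero _ h0)
  refine h.congr_deriv ?_
  simp only [zdg1, id, Pi.pow_apply]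
  push_cast
  field_simp
  ring

lemma zdg1_deriv (m : ℕ) (t : ℝ) (ht : 0 ≤ t) : HasDerivAt (zdg1 m) (zdg2 m t) t := by
  have h0 : (1+t) ≠ 0 := by linarith
  have h := ((hasDerivAt_pow (m+1) t).const_mul ((m:ℝ)+2)).div (((hasDerivAt_id t).const_add 1).pow (m+3)) (pow_ne_zero _ h0)
  refine h.congr_deriv ?_
  simp only [zdg2, id, Pi.pow_apply]
  push_cast
  field_simp
  ring

lemma zdg2_cont (m : ℕ) : ContinuousOn (zdg2 m) (Set.Ici 0) := by
  unfold zdg2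
  apply ContinuousOn.div (by fun_prop) (by fun_prop)
  intro t ht
  have : (0:ℝ) < 1 + t := by have : (0:ℝ) ≤ t := ht; linarith
  positivity

/-- antiderivative of g -/
lemma zdg_integral (m : ℕ) (x : ℝ) (hx : 0 ≤ x) : ∫ t in (0:ℝ)..x, zdg m t =
    (1+x) * zdg m x - (m+2) * (log (1+x) - ∑ i ∈ range (m+1), (x/(1+x))^(i+1)/(i+1)) := by
  have := intervalIntegral.integral_eq_sub_of_hasDerivAt (a := (0:ℝ)) (b := x)
    (f := fun x => (1+x) * zdg m x - (m+2) * (log (1+x) - ∑ i ∈ range (m+1), (x/(1+x))^(i+1)/(i+1)))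
    (f' := zdg m) ?_ ?_
  · rw [this]; simp [zdg]
  · intro t ht
    rw [Set.uIcc_of_le hx] at ht
    have h0 : (1+t) ≠ 0 := by linarith [ht.1]
    have d1 : HasDerivAt (fun x : ℝ => 1 + x) 1 t := (hasDerivAt_id t).const_add 1
    have dy : HasDerivAt (fun x : ℝ => x/(1+x)) (1/(1+t)^2) t := by
      refine ((hasDerivAt_id t).div d1 h0).congr_deriv ?_
      simp
    have ds : HasDerivAt (fun x : ℝ => ∑ i ∈ range (m+1), (x/(1+x))^(i+1)/((i:ℝ)+1))
        (∑ i ∈ range (m+1), (t/(1+t))^i * (1/(1+t)^2)) t := by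
      apply HasDerivAt.fun_sum
      intro i _
      refine ((dy.pow (i+1)).div_const ((i:ℝ)+1)).congr_deriv ?_
      have : (i:ℝ)+1 ≠ 0 := by positivity
      simp only [Nat.add_sub_cancel]
      push_cast
      field_simp
    have dl : HasDerivAt (fun x : ℝ => log (1+x)) (1/(1+t)) t := d1.log h0
    refine ((d1.mul (zdg_deriv m t ht.1)).sub ((dl.sub ds).const_mul ((m:ℝ)+2))).congr_deriv ?_
    have hg : ∑ i ∈ range (m+1), (t/(1+t))^i * (1/(1+t)^2) = (1 - (t/(1+t))^(m+1)) / (1+t) := by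
      rw [← Finset.sum_mul]
      have := geom_sum_mul (t/(1+t)) (m+1)
      have h1 : t/(1+t) - 1 = -(1/(1+t)) := by field_simp; ring
      rw [h1] at this
      have h3 : 1 - (t/(1+t))^(m+1) = (∑ i ∈ range (m+1), (t/(1+t))^i) * (1/(1+t)) := by linarith
      rw [h3]; field_simp
    rw [hg]
    simp only [zdg, zdg1, div_pow]
    field_simp
    ring
  · apply ContinuousOn.intervalIntegrable
    intro t ht
    rw [Set.uIcc_of_le hx] at ht
    exact (zdg_deriv m t ht.1).continuousAt.continuousWithinAt
noncomputable def zdH (m k : ℕ) (s : ℂ) : ℂ :=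
  (m+2) * s^m * (m+1-2*s)/(1+s)^(m+4) * Complex.exp (2 * π * k * Complex.I * s)

lemma zdH_diff (m k : ℕ) (s : ℂ) (hs : 1 + s ≠ 0) : DifferentiableAt ℂ (zdH m k) s := by
  unfold zdH
  apply DifferentiableAt.mul _ (by fun_prop)
  exact DifferentiableAt.div (by fun_prop) (by fun_prop) (pow_ne_zero _ hs)

lemma zdH_norm (m k : ℕ) (s : ℂ) : ‖zdH m k s‖ = (m+2) * ‖s‖^m * ‖m+1-2*s‖/‖1+s‖^(m+4) *
    exp (-(2*π*k*s.im)) := by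
  unfold zdH
  rw [norm_mul, norm_div, norm_mul, norm_mul, norm_pow, norm_pow, Complex.norm_exp]
  have h1 : ‖(m:ℂ)+2‖ = m+2 := by
    have : (m:ℂ)+2 = ((m+2:ℕ):ℂ) := by push_cast; rfl
    rw [this, Complex.norm_natCast]; push_cast; rfl
  have h2 : (2 * π * k * Complex.I * s).re = -(2*π*k*s.im) := by
    simp [Complex.mul_re, Complex.mul_im]
  rw [h1, h2]

lemma zd_norm_s_le (s : ℂ) (hs : 0 ≤ s.re) : ‖s‖ ≤ ‖1+s‖ ∧ 1 ≤ ‖1+s‖ ∧ s.re ≤ ‖1+s‖ := by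
  refine ⟨?_, ?_, ?_⟩
  · rw [Complex.norm_eq_sqrt_sq_add_sq, Complex.norm_eq_sqrt_sq_add_sq]
    apply Real.sqrt_le_sqrt
    simp; nlinarith
  · have := Complex.re_le_norm (1+s)
    simp at this; linarith
  · have := Complex.re_le_norm (1+s)
    simp at this; linarith

lemma zd_lin_norm (m : ℕ) (s : ℂ) : ‖(m:ℂ)+1-2*s‖ ≤ m+1+2*‖s‖ := by
  have h : ‖(m:ℂ)+1‖ = m+1 := by
    have : (m:ℂ)+1 = ((m+1:ℕ):ℂ) := by push_cast; rfl
    rw [this, Complex.norm_natCast]; push_cast; rfl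
  refine (norm_sub_le _ _).trans ?_
  rw [h, norm_mul]; simp

lemma zdH_decay (m k : ℕ) (s : ℂ) (hs : 0 ≤ s.re) (hi : 0 ≤ s.im) :
    ‖zdH m k s‖ ≤ (m+2)*(m+3)/‖1+s‖^2 := by
  obtain ⟨h1, h2, h3⟩ := zd_norm_s_le s hs
  have hp : 0 < ‖1+s‖ := by linarith
  rw [zdH_norm]
  have e : exp (-(2*π*k*s.im)) ≤ 1 := by
    rw [exp_le_one_iff, neg_nonpos]; positivity
  have l := zd_lin_norm m s
  have l2 : ‖(m:ℂ)+1-2*s‖ ≤ (m+3) * ‖1+s‖ := by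
    have : (0:ℝ) ≤ m := Nat.cast_nonneg m
    nlinarith
  calc _ ≤ (m+2) * ‖1+s‖^m * ((m+3) * ‖1+s‖)/‖1+s‖^(m+4) * 1 := by gcongr
    _ = (m+2)*(m+3)/‖1+s‖^3 := by field_simp; ring
    _ ≤ _ := by
      apply div_le_div_of_nonneg_left (by positivity) (by positivity)
      exact pow_le_pow_right₀ h2 (by norm_num)

noncomputable def zde : ℂ := (1+Complex.I)/2

lemma zde_re (r : ℝ) : ((r:ℂ)*zde).re = r/2 := by simp [zde]; ring
lemma zde_im (r : ℝ) : ((r:ℂ)*zde).im = r/2 := by simp [zde]; ring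

lemma zd_rot_aux (m k : ℕ) (R : ℝ) (hR : 0 < R) :
    ‖(∫ t in (0:ℝ)..R, zdH m k t) - ∫ t in (0:ℝ)..R, zdH m k (t*zde) * zde‖ ≤
      4*(m+2)*(m+3)/R := by
  set U := Metric.ball (((2*R+1:ℝ)):ℂ) (2*R+3/2) with hU
  have hnz : ∀ s ∈ U, 1 + s ≠ 0 := by
    intro s hs h
    have : s = -1 := by linear_combination h
    rw [hU, Metric.mem_ball, this, dist_eq_norm] at hs
    have e : (-1:ℂ) - ((2*R+1:ℝ):ℂ) = ((-(2*R+2) : ℝ) : ℂ) := by push_cast; ring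
    rw [e, Complex.norm_real, norm_neg, Real.norm_of_nonneg (by linarith)] at hs
    linarith
  have hd : DifferentiableOn ℂ (zdH m k) U := fun s hs => (zdH_diff m k s (hnz s hs)).differentiableWithinAt
  obtain ⟨P, hP⟩ := hd.isExactOn_ball
  have hmem : ∀ x y : ℝ, 0 ≤ y → y ≤ x → x ≤ R → ((x:ℂ) + y * Complex.I) ∈ U := by
    intro x y hy hyx hxR
    rw [hU, Metric.mem_ball, dist_eq_norm, Complex.norm_eq_sqrt_sq_add_sq]
    rw [Real.sqrt_lt' (by linarith)]
    simp
    nlinarith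
  have hmem1 : ∀ t ∈ Set.uIcc 0 R, (t:ℂ) ∈ U := by
    intro t ht
    rw [Set.uIcc_of_le hR.le] at ht
    simpa using hmem t 0 le_rfl ht.1 ht.2
  have hmem2 : ∀ t ∈ Set.uIcc 0 R, (t:ℂ)*zde ∈ U := by
    intro t ht
    rw [Set.uIcc_of_le hR.le] at ht
    have := hmem (t/2) (t/2) (by linarith [ht.1]) le_rfl (by linarith [ht.1, ht.2])
    convert this using 1
    simp [zde]; ring
  have i1 : ∫ t in (0:ℝ)..R, zdH m k t = P R - P 0 := by
    rw [intervalIntegral.integral_eq_sub_of_hasDerivAt (f := fun t : ℝ => P t)]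
    · simp
    · intro t ht
      exact (hP t (hmem1 t ht)).comp_ofReal
    · apply ContinuousOn.intervalIntegrable
      exact hd.continuousOn.comp (by fun_prop) hmem1
  have i2 : ∫ t in (0:ℝ)..R, zdH m k (t*zde) * zde = P (R*zde) - P 0 := by
    rw [intervalIntegral.integral_eq_sub_of_hasDerivAt (f := fun t : ℝ => P (t*zde))]
    · simp
    · intro t ht
      have h1 : HasDerivAt (fun t : ℝ => (t:ℂ)*zde) zde t := by
        simpa using (Complex.ofRealCLM.hasDerivAt (x := t)).mul_const zde
      have := (hP _ (hmem2 t ht)).scomp t h1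
      refine this.congr_deriv ?_
      simp [mul_comm]
    · apply ContinuousOn.intervalIntegrable
      exact (hd.continuousOn.comp (by fun_prop) hmem2).mul continuousOn_const
  rw [i1, i2]
  have hK : Convex ℝ {s : ℂ | s ∈ U ∧ R/2 ≤ s.re ∧ 0 ≤ s.im} := by
    have := (convex_ball (((2*R+1:ℝ)):ℂ) (2*R+3/2)).inter ((convex_halfSpace_re_ge (R/2)).inter (convex_halfSpace_im_ge 0))
    exact this
  have hmv := hK.norm_image_sub_le_of_norm_hasDerivWithin_le (f := P) (f' := zdH m k)
    (C := 4*(m+2)*(m+3)/R^2) (x := R*zde) (y := R) ?_ ?_ ?_ ?_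
  · have e1 : P R - P 0 - (P (R*zde) - P 0) = P R - P (R*zde) := by ring
    rw [e1]
    refine hmv.trans ?_
    have e2 : ‖(R:ℂ) - R*zde‖ ≤ R := by
      have : (R:ℂ) - R*zde = ((R/2:ℝ):ℂ) + ((-R/2:ℝ):ℂ) * Complex.I := by
        simp [zde]; ring
      rw [this, Complex.norm_add_mul_I]
      rw [Real.sqrt_le_left hR.le]
      nlinarith
    calc _ ≤ 4*((m:ℝ)+2)*(m+3)/R^2 * R := by gcongr
      _ = _ := by field_simp
  · intro s hs
    exact (hP s hs.1).hasDerivWithinAt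
  · intro s hs
    refine (zdH_decay m k s (by linarith [hs.2.1]) hs.2.2).trans ?_
    have h3 := (zd_norm_s_le s (by linarith [hs.2.1])).2.2
    have h4 : R/2 ≤ ‖1+s‖ := hs.2.1.trans h3
    calc ((m:ℝ)+2)*(m+3)/‖1+s‖^2 ≤ ((m:ℝ)+2)*(m+3)/(R/2)^2 := by gcongr
      _ = _ := by field_simp; try norm_num
  · refine ⟨hmem2 R (by simp), ?_, ?_⟩
    · rw [zde_re]
    · rw [zde_im]; linarith
  · refine ⟨hmem1 R (by simp), ?_, ?_⟩
    · simp; linarith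
    · simp

lemma zd_norm_sq (ρ : ℝ) : ‖(1:ℂ) + ρ*zde‖^2 = (ρ^2+2*ρ+2)/2 ∧ ‖(ρ:ℂ)*zde‖^2 = ρ^2/2 := by
  constructor <;>
  · rw [Complex.sq_norm, Complex.normSq_apply]
    simp [zde]; ring

lemma zd_ratio (ρ : ℝ) (hρ : 0 < ρ) : ‖(ρ:ℂ)*zde‖ / ‖(1:ℂ) + ρ*zde‖ ≤ exp (-1/(ρ + 1/(ρ+1))) := by
  obtain ⟨h1, h2⟩ := zd_norm_sq ρ
  refine (sq_le_sq₀ (by positivity) (exp_pos _).le).mp ?_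
  rw [div_pow, h1, h2, ← exp_nat_mul]
  have hl := Real.le_log_one_add_of_nonneg (x := (2*ρ+2)/ρ^2) (by positivity)
  have e : ρ^2/2/((ρ^2+2*ρ+2)/2) = exp (-log (1 + (2*ρ+2)/ρ^2)) := by
    rw [exp_neg, exp_log (by positivity)]; field_simp; ring
  rw [e]
  apply exp_le_exp.mpr
  have e2 : 2*((2*ρ+2)/ρ^2)/((2*ρ+2)/ρ^2+2) = 2/(ρ+1/(ρ+1)) := by field_simp; ring
  rw [e2] at hl
  have : ((2:ℕ):ℝ) * (-1/(ρ + 1/(ρ+1))) = -(2/(ρ+1/(ρ+1))) := by push_cast; ring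
  rw [this]; linarith

lemma zdH_ray (m k : ℕ) (hk : 1 ≤ k) (ρ q0 : ℝ) (hρ : 0 < ρ) (hq0 : 1/2 ≤ q0) (hn : ((m:ℝ)+2) = π * q0^2) :
    ‖zdH m k (ρ*zde) * zde‖ ≤ 2000 * exp 6 * exp (-2*π*q0) *
      (exp 2 * exp (-(π/8/q0) * (ρ-q0)^2) + exp (-(π/8) * ρ)) := by
  refine le_trans ?_ (zd_point (m+2) ρ q0 hρ.le hq0 hn)
  obtain ⟨hq, g1, g2⟩ := zd_q_facts ρ hρ.le
  have hr := zd_ratio ρ hρ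
  obtain ⟨n1, n2⟩ := zd_norm_sq ρ
  have hze : ‖zde‖ ≤ 1 := by
    have := (zd_norm_sq 1).2
    norm_num at this
    nlinarith [norm_nonneg zde]
  set q := ρ + 1/(ρ+1) with hqd
  have hqp : 0 < q := by linarith
  rw [norm_mul]
  have hH : ‖zdH m k (ρ*zde)‖ ≤ _ := le_of_eq (zdH_norm m k (ρ*zde))
  rw [zde_im] at hH
  have hw : 0 < ‖(1:ℂ) + ρ*zde‖ := by
    have := (zd_norm_s_le (ρ*zde) (by rw [zde_re]; linarith)).2.1
    linarith
  have hl := zd_lin_norm m (ρ*zde)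
  set W := ‖(1:ℂ) + ρ*zde‖
  set V := ‖(ρ:ℂ)*zde‖
  have hV0 : 0 ≤ V := norm_nonneg _
  have hV : V ≤ q := by
    nlinarith
  have hW4 : q^4/4 ≤ W^4 := by
    have : q^2/2 ≤ W^2 := by rw [n1]; nlinarith
    nlinarith [sq_nonneg q]
  have hk1 : (1:ℝ) ≤ k := by exact_mod_cast hk
  have hexp : exp (-(2*π*k*(ρ/2))) ≤ exp (-(π*ρ)) := by
    apply exp_le_exp.mpr
    have : π*ρ*1 ≤ π*ρ*k := by gcongr
    linarith
  have hrm : (V/W)^m ≤ exp (-((m:ℝ)+2-2)/q) := by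
    calc (V/W)^m ≤ (exp (-1/q))^m := by gcongr
      _ = exp (-((m:ℝ)+2-2)/q) := by rw [← exp_nat_mul]; congr 1; ring
  have m0 : (0:ℝ) ≤ m := Nat.cast_nonneg m
  calc ‖zdH m k (ρ*zde)‖ * ‖zde‖ ≤ ‖zdH m k (ρ*zde)‖ * 1 := by gcongr
    _ ≤ (m+2) * V^m * ‖(m:ℂ)+1-2*(ρ*zde)‖/W^(m+4) * exp (-(2*π*k*(ρ/2))) := by rw [mul_one]; exact hH
    _ ≤ (m+2) * V^m * (m+2+2*q)/W^(m+4) * exp (-(π*ρ)) := by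
        gcongr
        linarith
    _ = (m+2) * (m+2+2*q) / W^4 * (V/W)^m * exp (-(π*ρ)) := by
        rw [div_pow, pow_add]; field_simp
    _ ≤ (m+2) * (m+2+2*q) / (q^4/4) * exp (-((m:ℝ)+2-2)/q) * exp (-(π*ρ)) := by gcongr
    _ = _ := by
        rw [sub_eq_add_neg _ (π*ρ), exp_add]
        field_simp

lemma zdH_real (m k : ℕ) (t : ℝ) : (zdH m k t).re = zdg2 m t * cos (2*π*k*t) := by
  have e1 : zdH m k t = ((zdg2 m t : ℝ) : ℂ) * Complex.exp ((2*π*k*t : ℝ) * Complex.I) := by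
    unfold zdH zdg2
    push_cast
    congr 2; ring
  rw [e1, Complex.re_ofReal_mul, Complex.exp_ofReal_mul_I_re]

lemma zdg2_bound (m : ℕ) (t : ℝ) (ht : 0 ≤ t) : ‖zdg2 m t‖ ≤ (m+2)*(m+3)/(1+t)^2 := by
  have h := zdH_decay m 0 t (by simpa using ht) (by simp)
  have e1 : zdH m 0 t = ((zdg2 m t : ℝ) : ℂ) := by
    unfold zdH zdg2
    push_cast; simp
  have e2 : (1:ℂ) + t = ((1+t:ℝ):ℂ) := by push_cast; rfl
  rw [e1, Complex.norm_real, e2, Complex.norm_real, Real.norm_of_nonneg (r := 1 + t) (by linarith)] at h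
  exact h

lemma zdg2_integrable (m : ℕ) : MeasureTheory.IntegrableOn (zdg2 m) (Set.Ioi 0) := by
  have h1 : MeasureTheory.IntegrableOn (fun t : ℝ => (1+t)^(-2:ℝ)) (Set.Ioi 0) := by
    have := integrableOn_add_rpow_Ioi_of_lt (a := -2) (c := 0) (m := 1) (by norm_num) (by norm_num)
    refine this.congr_fun (fun t _ => by simp [add_comm]) measurableSet_Ioi
  refine MeasureTheory.Integrable.mono' (h1.const_mul (((m:ℝ)+2)*(m+3))) ?_ ?_
  · exact ((zdg2_cont m).mono Set.Ioi_subset_Ici_self).aestronglyMeasurable measurableSet_Ioi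
  · refine (MeasureTheory.ae_restrict_iff' measurableSet_Ioi).mpr (Filter.Eventually.of_forall fun t ht => ?_)
    have ht0 : (0:ℝ) < t := ht
    refine (zdg2_bound m t ht0.le).trans (le_of_eq ?_)
    rw [Real.rpow_neg (by linarith), div_eq_mul_inv]
    norm_cast

lemma zd_cos_int (m k : ℕ) (hk : 1 ≤ k) (q0 : ℝ) (hq0 : 1/2 ≤ q0) (hn : ((m:ℝ)+2) = π * q0^2) :
    |∫ t in Set.Ioi (0:ℝ), zdg2 m t * cos (2*π*k*t)| ≤
      2000 * exp 6 * exp (-2*π*q0) * ((3 * exp 2 + 6) * √q0) := by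
  obtain ⟨hi, hb⟩ := zd_int_bound q0 hq0
  set M := 2000 * exp 6 * exp (-2*π*q0) with hM
  have hMp : 0 ≤ M := by positivity
  have hcint : MeasureTheory.IntegrableOn (fun t => zdg2 m t * cos (2*π*k*t)) (Set.Ioi 0) := by
    refine MeasureTheory.Integrable.mono (zdg2_integrable m) ?_ ?_
    · exact (zdg2_integrable m).aestronglyMeasurable.mul (by fun_prop)
    · refine Filter.Eventually.of_forall fun t => ?_
      rw [norm_mul]
      exact mul_le_of_le_one_right (norm_nonneg _) (abs_cos_le_one _)
  have hlim := (MeasureTheory.intervalIntegral_tendsto_integral_Ioi 0 hcint Filter.tendsto_id).abs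
  have hlim2 : Filter.Tendsto (fun R : ℝ => M * ((3 * exp 2 + 6) * √q0) + 4*((m:ℝ)+2)*(m+3)/R) Filter.atTop
      (nhds (M * ((3 * exp 2 + 6) * √q0) + 0)) :=
    tendsto_const_nhds.add (tendsto_const_nhds.div_atTop Filter.tendsto_id)
  rw [add_zero] at hlim2
  refine le_of_tendsto_of_tendsto hlim hlim2 ?_
  filter_upwards [Filter.eventually_gt_atTop 0] with R hR
  simp only [id]
  have hcH : ContinuousOn (fun t : ℝ => zdH m k t) (Set.uIcc 0 R) := by
    intro t ht
    rw [Set.uIcc_of_le hR.le] at ht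
    have : (1:ℂ) + t ≠ 0 := by
      intro h
      have := congrArg Complex.re h
      simp at this; linarith [ht.1]
    exact ((zdH_diff m k t this).continuousAt.comp (f := fun t : ℝ => (t:ℂ)) Complex.continuous_ofReal.continuousAt).continuousWithinAt
  have e1 : ∫ t in (0:ℝ)..R, zdg2 m t * cos (2*π*k*t) = (∫ t in (0:ℝ)..R, zdH m k t).re := by
    have := Complex.reCLM.intervalIntegral_comp_comm (hcH.intervalIntegrable (μ := MeasureTheory.volume))
    simp only [Complex.reCLM_apply] at this
    rw [← this]
    congr 1; ext t; rw [zdH_real]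
  rw [e1]
  refine (Complex.abs_re_le_norm _).trans ?_
  have hr := zd_rot_aux m k R hR
  have h2 : ‖∫ t in (0:ℝ)..R, zdH m k (t*zde) * zde‖ ≤ M * ((3 * exp 2 + 6) * √q0) := by
    have hi' := hi.const_mul M
    calc _ ≤ ∫ t in (0:ℝ)..R, M * (exp 2 * exp (-(π/8/q0) * (t-q0)^2) + exp (-(π/8) * t)) := by
          apply intervalIntegral.norm_integral_le_of_norm_le hR.le
          · refine Filter.Eventually.of_forall fun t ht => ?_
            exact zdH_ray m k hk t q0 ht.1 hq0 hn
          · exact Continuous.intervalIntegrable (by fun_prop) _ _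
      _ ≤ ∫ t in Set.Ioi (0:ℝ), M * (exp 2 * exp (-(π/8/q0) * (t-q0)^2) + exp (-(π/8) * t)) := by
          rw [intervalIntegral.integral_of_le hR.le]
          apply MeasureTheory.setIntegral_mono_set hi'
          · exact Filter.Eventually.of_forall fun t => by simp only [Pi.zero_apply]; positivity
          · exact Filter.Eventually.of_forall fun t ht => ht.1
      _ ≤ _ := by
          rw [MeasureTheory.integral_const_mul]
          gcongr
  have := norm_le_norm_add_norm_sub' (∫ t in (0:ℝ)..R, zdH m k t) (∫ t in (0:ℝ)..R, zdH m k (t*zde) * zde)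
  linarith

lemma zd_J_bound (m : ℕ) (q0 : ℝ) (hq0 : 1/2 ≤ q0) (hn : ((m:ℝ)+2) = π * q0^2) :
    |∫ t in Set.Ioi (0:ℝ), zdB t * zdg2 m t| ≤
      2000 * exp 6 * exp (-2*π*q0) * ((3 * exp 2 + 6) * √q0) * (1/6) := by
  set M := 2000 * exp 6 * exp (-2*π*q0) * ((3 * exp 2 + 6) * √q0) with hM
  have hs := MeasureTheory.hasSum_integral_of_dominated_convergence
    (μ := MeasureTheory.volume.restrict (Set.Ioi (0:ℝ)))
    (F := fun (k:ℕ) t => 1 / (π^2 * (k:ℝ)^2) * cos (2 * π * k * t) * zdg2 m t)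
    (f := fun t => zdB t * zdg2 m t) (fun k t => 1 / (π^2 * (k:ℝ)^2) * ‖zdg2 m t‖) ?_ ?_ ?_ ?_ ?_
  · have hb : ∀ k : ℕ, ‖∫ t in Set.Ioi (0:ℝ), 1 / (π^2 * (k:ℝ)^2) * cos (2 * π * k * t) * zdg2 m t‖ ≤
        M * (1 / (π^2 * (k:ℝ)^2)) := by
      intro k
      rcases Nat.eq_zero_or_pos k with rfl | hk
      · simp
      · have := zd_cos_int m k hk q0 hq0 hn
        have e : ∀ t, 1 / (π^2 * (k:ℝ)^2) * cos (2 * π * k * t) * zdg2 m t =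
            1 / (π^2 * (k:ℝ)^2) * (zdg2 m t * cos (2 * π * k * t)) := fun t => by ring
        simp_rw [e]
        rw [MeasureTheory.integral_const_mul, norm_mul, Real.norm_of_nonneg (by positivity), mul_comm]
        gcongr
        exact this
    have := hs.norm_le_of_bounded (zdB_summable_bound.mul_left M) hb
    exact this
  · intro k
    exact (by fun_prop : MeasureTheory.AEStronglyMeasurable (fun t : ℝ => 1 / (π^2 * (k:ℝ)^2) * cos (2 * π * k * t)) _).mul (zdg2_integrable m).aestronglyMeasurable
  · intro k
    refine Filter.Eventually.of_forall fun t => ?_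
    rw [norm_mul]
    gcongr
    exact zdB_bound k t
  · exact Filter.Eventually.of_forall fun t => zdB_summable_bound.summable.mul_right _
  · simp_rw [tsum_mul_right]
    exact (zdg2_integrable m).norm.const_mul _
  · exact Filter.Eventually.of_forall fun t => (zdB_hasSum t).mul_right _
lemma zd_binom (m : ℕ) (x : ℝ) :
    ∑ l ∈ Finset.Icc 2 (m+2), (-1 : ℝ)^l * ((m+2).choose l : ℝ) * x^l = (1-x)^(m+2) - 1 + (m+2)*x := by
  have h : (1-x)^(m+2) = ∑ l ∈ range (m+3), (-1 : ℝ)^l * ((m+2).choose l : ℝ) * x^l := by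
    have := add_pow (-x) 1 (m+2)
    rw [show -x + 1 = 1 - x by ring] at this
    rw [this]
    apply Finset.sum_congr rfl
    intro l _
    rw [one_pow, neg_pow]; ring
  have h2 : Finset.Icc 2 (m+2) = Finset.Ico 2 (m+3) := by
    ext a
    simp only [Finset.mem_Icc, Finset.mem_Ico]
    omega
  rw [h, h2, Finset.sum_Ico_eq_sub _ (show 2 ≤ m+3 by omega), Finset.sum_range_succ _ 1,
    Finset.sum_range_succ _ 0, Finset.sum_range_zero]
  simp only [Nat.choose_zero_right, Nat.choose_one_right]
  push_cast
  ring

lemma zd_hasSum (m : ℕ) : HasSum (fun j : ℕ => zdg m j - 1 + (m+2)*(1/((j:ℝ)+1)))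
    (∑ l ∈ Finset.Icc 2 (m+2), (-1 : ℝ) ^ l * ((m+2).choose l : ℝ) * (∑' j : ℕ, 1 / ((j : ℝ) + 1) ^ l)) := by
  have h : ∀ l ∈ Finset.Icc 2 (m+2), HasSum (fun j : ℕ => (-1 : ℝ) ^ l * ((m+2).choose l : ℝ) * (1 / ((j : ℝ) + 1) ^ l))
      ((-1 : ℝ) ^ l * ((m+2).choose l : ℝ) * (∑' j : ℕ, 1 / ((j : ℝ) + 1) ^ l)) := by
    intro l hl
    apply HasSum.mul_left
    apply Summable.hasSum
    have := (summable_nat_add_iff 1).mpr (Real.summable_one_div_nat_pow.mpr (show 1 < l by simp at hl; omega))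
    simpa using this
  have h2 := hasSum_sum h
  convert h2 using 1
  ext j
  have hj : (1:ℝ) + j ≠ 0 := by positivity
  have hb := zd_binom m (1/((j:ℝ)+1))
  simp only [one_div_pow] at hb
  rw [hb]
  have : 1 - 1/((j:ℝ)+1) = j/(1+j) := by rw [add_comm (j:ℝ) 1]; field_simp; ring
  rw [this, zdg, div_pow]

lemma zd_y : Filter.Tendsto (fun N : ℕ => (N:ℝ)/(1+N)) Filter.atTop (nhds 1) := by
  have := tendsto_natCast_div_add_atTop (1:ℝ)
  simpa [add_comm] using this

lemma zd_harm (N : ℕ) : ∑ j ∈ range N, 1/((j:ℝ)+1) = harm N := by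
  induction N with
  | zero => simp [harm]
  | succ N ih =>
    rw [Finset.sum_range_succ, ih, harm, harm, Finset.sum_Icc_succ_top (by omega)]
    push_cast; rfl

lemma zd_main (m : ℕ) :
    (∑ l ∈ Finset.Icc 2 (m+2), (-1 : ℝ) ^ l * ((m+2).choose l : ℝ) * (∑' j : ℕ, 1 / ((j : ℝ) + 1) ^ l)) =
    1/2 - ((m:ℝ)+2) * (1 - Real.eulerMascheroniConstant - harm (m+1)) - 1/2 * ∫ t in Set.Ioi (0:ℝ), zdB t * zdg2 m t := by
  have h1 := (zd_hasSum m).tendsto_sum_nat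
  refine tendsto_nhds_unique h1 ?_
  have hBi : MeasureTheory.IntegrableOn (fun t => zdB t * zdg2 m t) (Set.Ioi 0) := by
    refine MeasureTheory.Integrable.bdd_mul (zdg2_integrable m) zdB_continuous.aestronglyMeasurable (c := 1/6) ?_
    refine Filter.Eventually.of_forall fun t => ?_
    exact (zdB_hasSum t).norm_le_of_bounded zdB_summable_bound (fun k => zdB_bound k t)
  have hJ := MeasureTheory.intervalIntegral_tendsto_integral_Ioi 0 hBi tendsto_natCast_atTop_atTop
  have hg : Filter.Tendsto (fun N : ℕ => zdg m N) Filter.atTop (nhds 1) := by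
    have := zd_y.pow (m+2)
    simpa [zdg, div_pow] using this
  have hinv : Filter.Tendsto (fun N : ℕ => 1/((1:ℝ)+N)) Filter.atTop (nhds 0) := by
    have := tendsto_one_div_add_atTop_nhds_zero_nat (𝕜 := ℝ)
    simpa [add_comm] using this
  have hg1 : Filter.Tendsto (fun N : ℕ => zdg1 m N) Filter.atTop (nhds 0) := by
    have := ((zd_y.pow (m+1)).const_mul ((m:ℝ)+2)).mul (hinv.pow 2)
    simp only [ne_eq, OfNat.ofNat_ne_zero, not_false_eq_true, zero_pow, mul_zero] at this
    refine this.congr fun N => ?_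
    simp only [zdg1, div_pow]
    have : (1:ℝ)+N ≠ 0 := by positivity
    field_simp
    try ring
  have hsum1 : Filter.Tendsto (fun N : ℕ => ∑ i ∈ range (m+2), ((N:ℝ)/(1+N))^i) Filter.atTop (nhds (m+2)) := by
    have : Filter.Tendsto (fun N : ℕ => ∑ i ∈ range (m+2), ((N:ℝ)/(1+N))^i) Filter.atTop (nhds (∑ i ∈ range (m+2), (1:ℝ)^i)) :=
      tendsto_finsetSum _ fun i _ => zd_y.pow i
    simpa using this
  have hsum2 : Filter.Tendsto (fun N : ℕ => ∑ i ∈ range (m+1), ((N:ℝ)/(1+N))^(i+1)/((i:ℝ)+1)) Filter.atTop (nhds (harm (m+1))) := by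
    rw [← zd_harm]
    have : Filter.Tendsto (fun N : ℕ => ∑ i ∈ range (m+1), ((N:ℝ)/(1+N))^(i+1)/((i:ℝ)+1)) Filter.atTop (nhds (∑ i ∈ range (m+1), (1:ℝ)^(i+1)/((i:ℝ)+1))) :=
      tendsto_finsetSum _ fun i _ => (zd_y.pow (i+1)).div_const _
    simpa using this
  have hgam : Filter.Tendsto (fun N : ℕ => harm N - log (1+N)) Filter.atTop (nhds Real.eulerMascheroniConstant) := by
    refine Real.tendsto_harmonic_sub_log_add_one.congr fun N => ?_
    rw [← zd_harm, harmonic]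
    push_cast
    simp [add_comm]
  have hlim := ((((hsum1.const_sub 1).add (hgam.const_mul ((m:ℝ)+2))).add (hsum2.const_mul ((m:ℝ)+2))).add
    ((hg1.div_const 12).sub (hg.div_const 2))).sub (hJ.const_mul (1/2))
  have e : (1 - ((m:ℝ)+2) + (m+2)*Real.eulerMascheroniConstant + (m+2)*harm (m+1) + (0/12 - 1/2) - 1/2 * ∫ t in Set.Ioi (0:ℝ), zdB t * zdg2 m t)
     = 1/2 - ((m:ℝ)+2) * (1 - Real.eulerMascheroniConstant - harm (m+1)) - 1/2 * ∫ t in Set.Ioi (0:ℝ), zdB t * zdg2 m t := by ring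
  rw [e] at hlim
  refine hlim.congr fun N => ?_
  rw [Finset.sum_add_distrib, Finset.sum_sub_distrib, ← Finset.mul_sum, zd_harm,
    zd_em (zdg m) (zdg1 m) (zdg2 m) (zdg_deriv m) (zdg1_deriv m) (zdg2_cont m) N, zdg_integral m N (Nat.cast_nonneg N)]
  have z0 : zdg m 0 = 0 := by simp [zdg]
  have z1 : zdg1 m 0 = 0 := by simp [zdg1]
  have hy : (1+(N:ℝ)) * zdg m N - N = 1 - ∑ i ∈ range (m+2), ((N:ℝ)/(1+N))^i := by
    have := geom_sum_mul ((N:ℝ)/(1+N)) (m+2)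
    have hN : (1:ℝ)+N ≠ 0 := by positivity
    have h1 : (N:ℝ)/(1+N) - 1 = -(1/(1+N)) := by field_simp; ring
    rw [h1] at this
    have e3 : zdg m N = ((N:ℝ)/(1+N))^(m+2) := by simp [zdg, div_pow]
    rw [e3, show ((N:ℝ)/(1+N))^(m+2) = 1 - (∑ i ∈ range (m+2), ((N:ℝ)/(1+N))^i) * (1/(1+N)) by linarith]
    field_simp
    ring
  rw [z0, z1]
  simp only [Finset.sum_const, Finset.card_range, nsmul_eq_mul, mul_one]
  linarith

/-- The main theorem. -/
theorem zeta_differences_asymptotics :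
    ∃ C : ℝ, 0 < C ∧ ∀ n : ℕ, 2 ≤ n →
      |(∑ l ∈ Finset.Icc 2 n, (-1 : ℝ) ^ l * (n.choose l : ℝ) *
            (∑' j : ℕ, 1 / ((j : ℝ) + 1) ^ l)) -
          (1 / 2 - (n : ℝ) * (1 - Real.eulerMascheroniConstant - harm (n - 1)))| ≤
        C * (n : ℝ) ^ ((1 : ℝ) / 4) * Real.exp (-2 * Real.sqrt (Real.pi * n)) := by
  refine ⟨2000 * exp 6 * (3 * exp 2 + 6), by positivity, ?_⟩
  intro n hn
  obtain ⟨m, rfl⟩ : ∃ m, n = m+2 := ⟨n-2, by omega⟩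
  rw [zd_main, show m+2-1 = m+1 by omega]
  have hpi := pi_pos
  have hn0 : (0:ℝ) < ((m+2:ℕ):ℝ) := by positivity
  have hn2 : (2:ℝ) ≤ ((m+2:ℕ):ℝ) := by exact_mod_cast hn
  set q0 := √(((m+2:ℕ):ℝ)/π) with hq0d
  have hsq : q0^2 = ((m+2:ℕ):ℝ)/π := Real.sq_sqrt (by positivity)
  have hnq : ((m:ℝ)+2) = π * q0^2 := by rw [hsq]; push_cast; field_simp
  have hq0 : 1/2 ≤ q0 := by
    apply Real.le_sqrt_of_sq_le
    rw [le_div_iff₀ hpi]; nlinarith [pi_le_four]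
  have hJ := zd_J_bound m q0 hq0 hnq
  have e1 : √(π * ((m+2:ℕ):ℝ)) = π * q0 := by
    rw [show π * ((m+2:ℕ):ℝ) = (π*q0)^2 by rw [mul_pow, hsq]; field_simp]
    exact Real.sqrt_sq (by positivity)
  have e2 : √q0 ≤ ((m+2:ℕ):ℝ)^((1:ℝ)/4) := by
    have a1 : q0 ≤ √((m+2:ℕ):ℝ) := Real.sqrt_le_sqrt (div_le_self hn0.le (by linarith [pi_gt_three]))
    have a2 : √(√((m+2:ℕ):ℝ)) = ((m+2:ℕ):ℝ)^((1:ℝ)/4) := by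
      rw [Real.sqrt_eq_rpow, Real.sqrt_eq_rpow, ← Real.rpow_mul hn0.le]; norm_num
    rw [← a2]
    exact Real.sqrt_le_sqrt a1
  rw [e1]
  set J := ∫ t in Set.Ioi (0:ℝ), zdB t * zdg2 m t
  have e3 : 1/2 - ((m:ℝ)+2) * (1 - Real.eulerMascheroniConstant - harm (m+1)) - 1/2 * J -
     (1/2 - ((m+2:ℕ):ℝ) * (1 - Real.eulerMascheroniConstant - harm (m+1))) = -(1/2 * J) := by push_cast; ring
  rw [e3, abs_neg, abs_mul, abs_of_pos (by norm_num : (0:ℝ) < 1/2)]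
  have e4 : -2*π*q0 = -2*(π*q0) := by ring
  rw [e4] at hJ
  calc 1/2*|J| ≤ |J| := by linarith [abs_nonneg J]
    _ ≤ _ := hJ
    _ ≤ 2000 * exp 6 * exp (-2*(π*q0)) * ((3 * exp 2 + 6) * √q0) * 1 := by gcongr; norm_num
    _ ≤ 2000 * exp 6 * exp (-2*(π*q0)) * ((3 * exp 2 + 6) * ((m+2:ℕ):ℝ)^((1:ℝ)/4)) * 1 := by gcongr
    _ = _ := by ring
end

section
/- There exists a constant C > 0 such that for all integers n ≥ 2, | Σ_{l=2}^{n} (−1)^l C(n,l) (1 − 2^{−l}) ζ(l) − (n/2)(h_{n−1} + γ + log 2 − 1) | ≤ C · n^{1/4} · exp(−√(2πn)). (The case m = 1, k = 2 of the asymptotic for H_n(m,k), using 2^{−l} ζ(l, 1/2) = (1 − 2^{−l}) ζ(l).) -/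
open Finset Real

open MeasureTheory Set Filter Topology in
lemma ray_rotate (P : ℂ → ℂ) (K : ℝ)
    (hP : DifferentiableOn ℂ P {z | 0 < z.re})
    (hB : ∀ z : ℂ, 0 < z.re → 0 ≤ z.im → ‖P z‖ ≤ K * (1 + ‖z‖ ^ 2)⁻¹) :
    ∫ r in Ioi (0:ℝ), P (r : ℂ) =
      ∫ r in Ioi (0:ℝ), Complex.exp ((π / 4 : ℝ) * Complex.I) *
        P (Complex.exp ((π / 4 : ℝ) * Complex.I) * (r : ℂ)) := by
  have hpi := Real.pi_pos
  have hre : ∀ x θ : ℝ, 0 ≤ θ → θ ≤ π / 4 → 0 < (Complex.exp (x + θ * Complex.I)).re ∧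
      0 ≤ (Complex.exp (x + θ * Complex.I)).im := by
    intro x θ h0 h1
    rw [Complex.exp_re, Complex.exp_im]
    simp only [Complex.add_re, Complex.ofReal_re, Complex.mul_re, Complex.I_re, mul_zero,
      Complex.ofReal_im, Complex.I_im, Complex.add_im, Complex.mul_im, mul_one, zero_add,
      add_zero, sub_self]
    exact ⟨mul_pos (exp_pos _) (cos_pos_of_mem_Ioo ⟨by linarith, by linarith⟩),
      mul_nonneg (exp_pos _).le (sin_nonneg_of_nonneg_of_le_pi h0 (by linarith))⟩
  have hK : 0 ≤ K := by
    have := (norm_nonneg _).trans (hB 1 (by simp) (by simp))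
    norm_num at this
    linarith
  set H : ℂ → ℂ := fun w => Complex.exp w * P (Complex.exp w) with hH
  have hnorm : ∀ x θ : ℝ, ‖Complex.exp (x + θ * Complex.I)‖ = Real.exp x := by
    intro x θ; rw [Complex.norm_exp]; simp
  have hHb : ∀ x θ : ℝ, 0 ≤ θ → θ ≤ π / 4 → ‖H (x + θ * Complex.I)‖ ≤ K * Real.exp (-|x|) := by
    intro x θ h0 h1
    have h2 := hB _ (hre x θ h0 h1).1 (hre x θ h0 h1).2
    rw [hnorm] at h2
    simp only [hH, norm_mul, hnorm]
    have h3 : Real.exp x * (1 + Real.exp x ^ 2)⁻¹ ≤ Real.exp (-|x|) := by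
      rw [← div_eq_mul_inv, div_le_iff₀ (by positivity)]
      rcases le_total 0 x with h | h
      · rw [abs_of_nonneg h, Real.exp_neg]
        have := Real.exp_pos x
        rw [inv_mul_eq_div, le_div_iff₀ this]; nlinarith
      · rw [abs_of_nonpos h, neg_neg]
        have := Real.exp_pos x
        nlinarith [pow_pos this 3]
    calc _ ≤ Real.exp x * (K * (1 + Real.exp x ^ 2)⁻¹) := by gcongr
      _ = K * (Real.exp x * (1 + Real.exp x ^ 2)⁻¹) := by ring
      _ ≤ _ := by gcongr
  have hHd : ∀ x θ : ℝ, 0 ≤ θ → θ ≤ π / 4 → DifferentiableAt ℂ H (x + θ * Complex.I) := by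
    intro x θ h0 h1
    have hop : IsOpen {z : ℂ | 0 < z.re} := isOpen_lt continuous_const Complex.continuous_re
    have h := (hP.differentiableAt (hop.mem_nhds (hre x θ h0 h1).1))
    exact Complex.differentiableAt_exp.mul (h.comp _ Complex.differentiableAt_exp)
  have hIntg : ∀ θ : ℝ, 0 ≤ θ → θ ≤ π / 4 → Integrable (fun x : ℝ => H (x + θ * Complex.I)) := by
    intro θ h0 h1
    have hg : Integrable (fun x : ℝ => K * Real.exp (-|x|)) :=
      (by
      have i1 : IntegrableOn (fun x : ℝ => Real.exp (-|x|)) (Iic 0) :=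
        (integrableOn_exp_Iic 0).congr_fun (fun x hx => by
          rw [abs_of_nonpos hx, neg_neg]) measurableSet_Iic
      have i2 : IntegrableOn (fun x : ℝ => Real.exp (-|x|)) (Ioi 0) :=
        (integrableOn_exp_neg_Ioi 0).congr_fun (fun x hx => by
          rw [abs_of_pos hx]) measurableSet_Ioi
      have := i1.union i2
      rw [Iic_union_Ioi] at this
      exact (integrableOn_univ.mp this).const_mul K)
    refine hg.mono' ?_ (ae_of_all _ fun x => hHb x θ h0 h1)
    refine Continuous.aestronglyMeasurable ?_
    rw [continuous_iff_continuousAt]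
    intro x
    exact (hHd x θ h0 h1).continuousAt.comp (f := fun x : ℝ => (x + θ * Complex.I : ℂ))
      (by fun_prop)
  have key : ∫ x : ℝ, H x = ∫ x : ℝ, H (x + (π / 4 : ℝ) * Complex.I) := by
    have t1 := intervalIntegral_tendsto_integral (hIntg 0 le_rfl (by positivity))
      (tendsto_neg_atTop_atBot) tendsto_id
    have t2 := intervalIntegral_tendsto_integral (hIntg (π/4) (by positivity) le_rfl)
      (tendsto_neg_atTop_atBot) tendsto_id
    simp only [Complex.ofReal_zero, zero_mul, add_zero] at t1
    have t3 := t1.sub t2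
    have t4 : Tendsto (fun T : ℝ => (∫ x in (-T)..(id T), H x) -
        ∫ x in (-T)..(id T), H (x + (π / 4 : ℝ) * Complex.I)) atTop (𝓝 0) := by
      have hb : Tendsto (fun T : ℝ => 2 * (K * Real.exp (-|T|) * |π/4 - 0|)) atTop (𝓝 0) := by
        have : Tendsto (fun T : ℝ => Real.exp (-|T|)) atTop (𝓝 0) :=
          Real.tendsto_exp_neg_atTop_nhds_zero.comp tendsto_abs_atTop_atTop
        simpa using (((this.const_mul K).mul_const (|π/4 - 0|)).const_mul 2)
      refine squeeze_zero_norm (fun T => ?_) hb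
      have hr := Complex.integral_boundary_rect_eq_zero_of_differentiableOn H (-T : ℝ)
        (T + (π/4 : ℝ) * Complex.I) ?_
      · simp only [Complex.ofReal_im, Complex.ofReal_re, Complex.add_re, Complex.add_im,
          Complex.mul_re, Complex.mul_im, Complex.I_re, Complex.I_im, mul_zero, mul_one,
          sub_self, add_zero, zero_add, Complex.ofReal_zero, zero_mul] at hr
        have e1 : (∫ x in (-T)..(id T), H x) -
          ∫ x in (-T)..(id T), H (x + (π / 4 : ℝ) * Complex.I) =
          Complex.I • (∫ (y : ℝ) in (0)..(π/4), H ((-T:ℝ) + y * Complex.I)) -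
          Complex.I • (∫ (y : ℝ) in (0)..(π/4), H (T + y * Complex.I)) := by
          rw [id]; linear_combination hr
        rw [e1]
        have bb : ∀ S : ℝ, |S| = |T| → ‖Complex.I • (∫ (y : ℝ) in (0)..(π/4), H (S + y * Complex.I))‖ ≤
            K * Real.exp (-|T|) * |π/4 - 0| := by
          intro S hS
          rw [norm_smul, Complex.norm_I, one_mul]
          apply intervalIntegral.norm_integral_le_of_norm_le_const
          intro y hy
          rw [uIoc_of_le (by positivity)] at hy
          rw [← hS]
          exact hHb S y hy.1.le hy.2
        calc _ ≤ _ := norm_sub_le _ _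
          _ ≤ _ := by rw [two_mul]; exact add_le_add (bb _ (abs_neg T)) (bb _ rfl)
      · intro z hz
        rw [Complex.mem_reProdIm] at hz
        obtain ⟨_, hz2⟩ := hz
        simp only [Complex.ofReal_im, Complex.add_im,
          Complex.mul_im, Complex.I_re, Complex.I_im, mul_zero, mul_one,
          add_zero, zero_add, Complex.ofReal_re] at hz2
        rw [Set.uIcc_of_le (by positivity)] at hz2
        have := hHd z.re z.im hz2.1 hz2.2
        rw [Complex.re_add_im] at this
        exact this.differentiableWithinAt
    exact sub_eq_zero.mp (tendsto_nhds_unique t3 t4)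
  have ch : ∀ F : ℝ → ℂ, ∫ r in Ioi (0:ℝ), F r = ∫ x : ℝ, (Real.exp x : ℂ) * F (Real.exp x) := by
    intro F
    have := integral_image_eq_integral_abs_deriv_smul (s := univ) (f := Real.exp) (f' := Real.exp)
      MeasurableSet.univ (fun x _ => (Real.hasDerivAt_exp x).hasDerivWithinAt)
      (Real.exp_injective.injOn) F
    rw [image_univ, Real.range_exp] at this
    rw [this, setIntegral_univ]
    simp
  rw [ch, ch]
  have e1 : ∀ x : ℝ, (Real.exp x : ℂ) * P (Real.exp x) = H x := by
    intro x; simp [hH]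
  have e2 : ∀ x : ℝ, (Real.exp x : ℂ) * (Complex.exp ((π / 4 : ℝ) * Complex.I) *
        P (Complex.exp ((π / 4 : ℝ) * Complex.I) * (Real.exp x : ℂ))) =
      H (x + (π / 4 : ℝ) * Complex.I) := by
    intro x; simp only [hH, Complex.exp_add, Complex.ofReal_exp]
    rw [mul_comm (Complex.exp (x:ℂ)) (Complex.exp _)]
    ring
  simp_rw [e1, e2, key]

lemma log_quad_bound (u : ℝ) (hu : 0 ≤ u) :
    √2 * u - 2 * u ^ 3 ≤ Real.log (1 + √2 * u + u ^ 2) := by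
  have hs : 0 < √2 := by positivity
  have hs2 : √2 ^ 2 = 2 := Real.sq_sqrt (by norm_num)
  have hs3 : √2 ≤ 2 := by nlinarith
  have hQ : ∀ x : ℝ, 0 ≤ x → 0 < 1 + √2 * x + x ^ 2 := by intro x hx; positivity
  have hd : ∀ x : ℝ, 0 ≤ x → HasDerivAt (fun x => Real.log (1 + √2 * x + x ^ 2) - (√2 * x - 2 * x ^ 3))
      ((√2 + 2 * x) / (1 + √2 * x + x ^ 2) - (√2 - 6 * x ^ 2)) x := by
    intro x hx
    have h1 : HasDerivAt (fun x : ℝ => 1 + √2 * x + x ^ 2) (√2 + 2 * x) x := by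
      have := (((hasDerivAt_id x).const_mul √2).const_add 1).add (hasDerivAt_pow 2 x)
      convert! this using 1
      simp
    have h2 : HasDerivAt (fun x : ℝ => √2 * x - 2 * x ^ 3) (√2 - 6 * x ^ 2) x := by
      have := ((hasDerivAt_id x).const_mul √2).sub ((hasDerivAt_pow 3 x).const_mul 2)
      convert! this using 1
      simp; ring
    exact (h1.log (hQ x hx).ne').sub h2
  have hm : MonotoneOn (fun x => Real.log (1 + √2 * x + x ^ 2) - (√2 * x - 2 * x ^ 3)) (Set.Ici 0) := by
    apply monotoneOn_of_deriv_nonneg (convex_Ici 0)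
    · intro x hx; exact (hd x hx).continuousAt.continuousWithinAt
    · intro x hx; rw [interior_Ici] at hx
      exact (hd x (le_of_lt hx)).differentiableAt.differentiableWithinAt
    · intro x hx
      rw [interior_Ici] at hx
      have hx : 0 < x := hx
      rw [(hd x hx.le).deriv, sub_nonneg, le_div_iff₀ (hQ x hx.le)]
      have : 0 ≤ x ^ 2 * (6 - √2) := by apply mul_nonneg; positivity; linarith
      have h6 : 0 ≤ 6 * x ^ 2 * (√2 * x + x ^ 2) := by positivity
      have h7 : 0 ≤ x^3 := by positivity
      nlinarith
  have := hm (Set.mem_Ici.2 le_rfl) (Set.mem_Ici.2 hu) hu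
  simp at this
  linarith

lemma ratio_bound (r D : ℝ) (hr : 0 < r) (hD : 0 < D) (hD2 : D ^ 2 = 1 + √2 * r + r ^ 2) :
    r / D ≤ Real.exp (-(1 / (√2 * r)) + 1 / r ^ 3) := by
  have h := log_quad_bound (1 / r) (by positivity)
  have hs2 : √2 ^ 2 = 2 := Real.sq_sqrt (by norm_num)
  have e : 1 + √2 * (1 / r) + (1 / r) ^ 2 = (D / r) ^ 2 := by
    rw [div_pow D, hD2]; field_simp; ring
  rw [e, Real.log_pow] at h
  rw [← Real.log_le_iff_le_exp (by positivity)]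
  have : Real.log (r / D) = - Real.log (D / r) := by rw [← Real.log_inv, inv_div]
  rw [this]
  have e2 : √2 * (1 / r) = 2 * (1 / (√2 * r)) := by
    field_simp; linarith
  have e3 : (1 / r) ^ 3 = 1 / r ^ 3 := by rw [div_pow, one_pow]
  rw [e2, e3] at h
  push_cast at h
  linarith

set_option maxHeartbeats 2000000 in
/-- pointwise bound, `x = √n`, `A = |n - 1 - 2 y|`. -/
lemma pointwise_bound (n : ℕ) (hn : 2 ≤ n) (r D A : ℝ) (hr : 0 < r) (hD : 0 < D)
    (hD2 : D ^ 2 = 1 + √2 * r + r ^ 2) (hA : A ≤ n + 2 * r) :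
    n * r ^ (n - 2) * A / D ^ (n + 2) * Real.exp (-(π * r / √2)) ≤
      5120 * Real.exp 600 * Real.exp (-√(2 * π * n)) *
        (Real.exp (-((π * r - √(π * n)) ^ 2 / (4 * √(π * n)))) + Real.exp (-(r / 4))) := by
  have hpi := Real.pi_gt_three
  have hpi4 := Real.pi_lt_four
  have hs2 : √2 ^ 2 = 2 := Real.sq_sqrt (by norm_num)
  have hs : 0 < √2 := by positivity
  have hs15 : √2 ≤ 3 / 2 := by nlinarith
  have hs1 : 1 ≤ √2 := by nlinarith
  have hn0 : (2:ℝ) ≤ n := by exact_mod_cast hn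
  set x := √(n:ℝ) with hx
  have hx2 : x ^ 2 = n := Real.sq_sqrt (by positivity)
  have hx0 : 0 < x := by positivity
  have hx1 : 1 ≤ x := by nlinarith
  have hDr : r ≤ D := by nlinarith [mul_pos hs hr]
  have hD1 : 1 ≤ D := by nlinarith [mul_pos hs hr, sq_nonneg r]
  rcases le_total r (x / 8) with hrx | hrx
  · -- near region
    have hr0 : 0 < x / 8 := by positivity
    set r0 := x / 8 with hr0d
    set D0 := √(1 + √2 * r0 + r0 ^ 2) with hD0d
    have hD0 : D0 ^ 2 = 1 + √2 * r0 + r0 ^ 2 := Real.sq_sqrt (by positivity)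
    have hD0p : 0 < D0 := by positivity
    have hq : r / D ≤ r0 / D0 := by
      rw [div_le_div_iff₀ hD hD0p]
      apply le_of_sq_le_sq _ (by positivity)
      rw [mul_pow, mul_pow, hD0, hD2]
      nlinarith [mul_nonneg (mul_pos hr hr0).le (sub_nonneg.2 hrx), mul_pos hs (mul_pos hr hr0), mul_nonneg (mul_pos hs (mul_pos hr hr0)).le (sub_nonneg.2 hrx)]
    have hq0 := ratio_bound r0 D0 hr0 hD0p hD0
    have hpw : (r / D) ^ (n - 2) ≤ Real.exp 528 * Real.exp (-5 * x) := by
      calc (r / D) ^ (n - 2) ≤ (Real.exp (-(1 / (√2 * r0)) + 1 / r0 ^ 3)) ^ (n - 2) := by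
            gcongr; exact hq.trans hq0
        _ = Real.exp ((n - 2 : ℝ) * (-(1 / (√2 * r0)) + 1 / r0 ^ 3)) := by
            rw [← Real.exp_nat_mul, Nat.cast_sub hn, Nat.cast_ofNat]
        _ ≤ Real.exp (528 + -5 * x) := by
            apply Real.exp_le_exp.2
            have e1 : 1 / r0 ^ 3 = 512 / x ^ 3 := by rw [hr0d]; field_simp; norm_num
            have e2 : 1 / (√2 * r0) = 4 * √2 / x := by
              rw [hr0d]; field_simp; nlinarith
            rw [e1, e2, ← hx2]
            have h1 : (x ^ 2 - 2) * (512 / x ^ 3) ≤ 512 := by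
              rw [← mul_div_assoc, div_le_iff₀ (by positivity)]
              nlinarith [mul_nonneg (sq_nonneg x) (sub_nonneg.2 hx1)]
            have h2 : (x ^ 2 - 2) * (4 * √2 / x) ≥ 5 * x - 16 := by
              rw [ge_iff_le, ← mul_div_assoc, le_div_iff₀ hx0]
              have : 5/4 ≤ √2 := by nlinarith
              nlinarith [mul_nonneg (sq_nonneg x) (sub_nonneg.2 this)]
            nlinarith
        _ = _ := Real.exp_add _ _
    have hx4 : x ^ 4 ≤ 24 * Real.exp x := by
      have := Real.pow_div_factorial_le_exp x hx0.le 4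
      norm_num [Nat.factorial] at this
      linarith
    have hpre : n * r ^ (n - 2) * A / D ^ (n + 2) ≤ 48 * Real.exp x * (r / D) ^ (n - 2) := by
      have e : (D:ℝ) ^ (n + 2) = D ^ (n - 2) * D ^ 4 := by
        rw [← pow_add]; congr 1; omega
      have hAA : A ≤ 2 * x ^ 2 := by nlinarith
      calc n * r ^ (n - 2) * A / D ^ (n + 2) = (n * A / D ^ 4) * (r / D) ^ (n - 2) := by
            rw [e, div_pow]; field_simp
        _ ≤ (48 * Real.exp x) * (r / D) ^ (n - 2) := by
            gcongr
            rw [div_le_iff₀ (by positivity), ← hx2]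
            have hD4 : 1 ≤ D ^ 4 := one_le_pow₀ hD1
            have : x ^ 2 * A ≤ 48 * Real.exp x := by nlinarith [mul_le_mul_of_nonneg_left hAA (sq_nonneg x)]
            have h0 : 0 ≤ 48 * Real.exp x := by positivity
            nlinarith
    have hE : Real.exp (-(π * r / √2)) ≤ 1 := by
      apply Real.exp_le_one_iff.2; have : 0 ≤ π * r / √2 := by positivity
      linarith
    have hsq : √(2 * π * n) ≤ 3 * x := by
      apply Real.sqrt_le_iff.2 ⟨by positivity, _⟩
      have := Real.pi_lt_d2
      nlinarith
    calc _ ≤ (48 * Real.exp x * (Real.exp 528 * Real.exp (-5 * x))) * 1 := by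
          gcongr
          exact hpre.trans (by gcongr)
      _ = 48 * Real.exp (x + 528 + -5 * x) := by rw [Real.exp_add, Real.exp_add]; ring
      _ ≤ 5120 * Real.exp (600 + -√(2 * π * n) + -(r/4)) := by
          exact mul_le_mul (by norm_num) (Real.exp_le_exp.2 (by linarith)) (Real.exp_pos _).le
            (by norm_num)
      _ ≤ _ := by
          rw [Real.exp_add, Real.exp_add, ← mul_assoc, ← mul_assoc]
          gcongr
          linarith [Real.exp_pos (-((π * r - √(π * n)) ^ 2 / (4 * √(π * n))))]
  · -- far region
    have hq := ratio_bound r D hr hD hD2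
    have hnr : (n:ℝ) ≤ 64 * r ^ 2 := by rw [← hx2]; nlinarith
    have hr18 : 1 / 8 ≤ r := by linarith
    have hpre : n * r ^ (n - 2) * A / D ^ (n + 2) ≤ 5120 * (r / D) ^ n := by
      have e1 : (D:ℝ) ^ (n + 2) = D ^ n * D ^ 2 := pow_add _ _ _
      have e2 : r ^ n = r ^ (n - 2) * r ^ 2 := by rw [← pow_add]; congr 1; omega
      calc n * r ^ (n - 2) * A / D ^ (n + 2) = (n * A / (r ^ 2 * D ^ 2)) * (r / D) ^ n := by
            rw [e1, div_pow, e2]; field_simp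
        _ ≤ 5120 * (r / D) ^ n := by
            gcongr
            rw [div_le_iff₀ (by positivity)]
            have h1 : r ^ 2 * r ^ 2 ≤ r ^ 2 * D ^ 2 := by gcongr
            have h2 : n * A ≤ n * (n + 2 * r) := by gcongr
            have h3 : (n:ℝ) * (n + 2 * r) ≤ 64 * r ^ 2 * (64 * r ^ 2 + 2 * r) := by gcongr
            have h4 : r ^ 3 ≤ 8 * r ^ 4 := by nlinarith [pow_pos hr 3]
            nlinarith
    have hpw : (r / D) ^ n ≤ Real.exp 512 * Real.exp (-(n / (√2 * r))) := by
      calc (r / D) ^ n ≤ (Real.exp (-(1 / (√2 * r)) + 1 / r ^ 3)) ^ n := by gcongr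
        _ = Real.exp (n * (-(1 / (√2 * r)) + 1 / r ^ 3)) := by rw [← Real.exp_nat_mul]
        _ ≤ Real.exp (512 + -(n / (√2 * r))) := by
            apply Real.exp_le_exp.2
            have : n * (1 / r ^ 3) ≤ 512 := by
              rw [mul_one_div, div_le_iff₀ (by positivity)]
              nlinarith [pow_pos hr 2]
            rw [mul_add, mul_neg, mul_one_div]; linarith
        _ = _ := Real.exp_add _ _
    set p := √(π * n) with hp
    have hp2 : p ^ 2 = π * n := Real.sq_sqrt (by positivity)
    have hp0 : 0 < p := by positivity
    have hsq : √(2 * π * n) = √2 * p := by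
      rw [hp, mul_assoc, Real.sqrt_mul (by norm_num)]
    have hpr : 0 < π * r := by positivity
    have key : n / (√2 * r) + π * r / √2 = √(2 * π * n) + (π * r - p) ^ 2 / (√2 * (π * r)) := by
      rw [hsq]
      have : (n : ℝ) = p ^ 2 / π := by rw [hp2]; field_simp
      rw [this]
      field_simp
      rw [hs2]; ring
    have hfin : Real.exp (-((π * r - p) ^ 2 / (√2 * (π * r)))) ≤
        Real.exp (-((π * r - p) ^ 2 / (4 * p))) + Real.exp (-(r / 4)) := by
      rcases le_total (π * r) (2 * p) with h | h
      · have : Real.exp (-((π * r - p) ^ 2 / (√2 * (π * r)))) ≤ Real.exp (-((π * r - p) ^ 2 / (4 * p))) := by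
          apply Real.exp_le_exp.2
          apply neg_le_neg
          apply div_le_div_of_nonneg_left (sq_nonneg _) (by positivity)
          nlinarith
        linarith [Real.exp_pos (-(r / 4))]
      · have : Real.exp (-((π * r - p) ^ 2 / (√2 * (π * r)))) ≤ Real.exp (-(r / 4)) := by
          apply Real.exp_le_exp.2
          apply neg_le_neg
          rw [le_div_iff₀ (by positivity)]
          have h1 : (π * r / 2) ^ 2 ≤ (π * r - p) ^ 2 := by
            apply pow_le_pow_left₀ (by positivity); linarith
          have h2 : r / 4 * (√2 * (π * r)) ≤ r / 4 * ((3/2) * (π * r)) := by gcongr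
          nlinarith [mul_pos (mul_pos hr hr) Real.pi_pos]
        linarith [Real.exp_pos (-((π * r - p) ^ 2 / (4 * p)))]
    calc _ ≤ (5120 * (Real.exp 512 * Real.exp (-(n / (√2 * r))))) * Real.exp (-(π * r / √2)) := by
          gcongr
          exact hpre.trans (by gcongr)
      _ = 5120 * Real.exp 512 * Real.exp (-(n / (√2 * r) + π * r / √2)) := by
          rw [neg_add, Real.exp_add]; ring
      _ = 5120 * Real.exp 512 * Real.exp (-√(2 * π * n)) * Real.exp (-((π * r - p) ^ 2 / (√2 * (π * r)))) := by
          rw [key, neg_add, Real.exp_add]; ring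
      _ ≤ _ := by
          gcongr
          norm_num

/-- second derivative of `(y/(1+y))^n`, complex version -/
noncomputable def GC (n : ℕ) (y : ℂ) : ℂ := n * y ^ (n - 2) * (n - 1 - 2 * y) / (1 + y) ^ (n + 2)

lemma norm_sq_one_add (y : ℂ) (hy : 0 < y.re) : 1 + ‖y‖ ^ 2 ≤ ‖1 + y‖ ^ 2 := by
  rw [← Complex.normSq_eq_norm_sq, ← Complex.normSq_eq_norm_sq, Complex.normSq_apply,
    Complex.normSq_apply]
  simp only [Complex.add_re, Complex.one_re, Complex.add_im, Complex.one_im]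
  nlinarith

lemma norm_lin (n : ℕ) (hn : 2 ≤ n) (y : ℂ) : ‖(n - 1 - 2 * y : ℂ)‖ ≤ n + 2 * ‖y‖ := by
  have h : ((n:ℂ) - 1) = ((n - 1 : ℕ) : ℂ) := by push_cast [show 1 ≤ n by omega]; ring
  rw [h]
  refine (norm_sub_le _ _).trans ?_
  rw [Complex.norm_natCast, norm_mul]
  have : ((n - 1 : ℕ) : ℝ) ≤ n := by exact_mod_cast Nat.sub_le _ _
  simp

lemma GC_bound (n : ℕ) (hn : 2 ≤ n) (y : ℂ) (hy : 0 < y.re) :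
    ‖GC n y‖ ≤ (n * (n + 2)) * (1 + ‖y‖ ^ 2)⁻¹ := by
  have h1 := norm_sq_one_add y hy
  have h2 := norm_lin n hn y
  have h0 := norm_nonneg y
  set r := ‖y‖
  set D := ‖1 + y‖
  have hD : 0 < D := by
    by_contra h
    have : D = 0 := le_antisymm (not_lt.mp h) (norm_nonneg _)
    rw [this] at h1; nlinarith
  have hrD : r ≤ D := by nlinarith
  have e : (D:ℝ) ^ (n + 2) = D ^ (n - 2) * (D ^ 2) ^ 2 := by
    rw [← pow_mul, ← pow_add]; congr 1; omega
  have hn' : ‖GC n y‖ = n * r ^ (n - 2) * ‖(n - 1 - 2 * y : ℂ)‖ / D ^ (n + 2) := by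
    simp [GC, r, D]
  rw [hn', e]
  calc _ ≤ n * D ^ (n - 2) * ((n + 2) * (1 + r ^ 2)) / (D ^ (n - 2) * (1 + r ^ 2) ^ 2) := by
        gcongr
        nlinarith [sq_nonneg (r - 1), mul_nonneg (Nat.cast_nonneg (α := ℝ) n) (sq_nonneg r)]
    _ = _ := by field_simp

lemma GC_diff (n : ℕ) : DifferentiableOn ℂ (GC n) {z | 0 < z.re} := by
  intro z hz
  have hz : 0 < z.re := hz
  have h : (1 + z) ^ (n + 2) ≠ 0 := by
    apply pow_ne_zero
    intro h
    have := congrArg Complex.re h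
    simp at this; linarith
  unfold GC
  apply DifferentiableAt.differentiableWithinAt
  exact DifferentiableAt.div (c := fun y : ℂ => (n:ℂ) * y ^ (n - 2) * (n - 1 - 2 * y))
    (d := fun y : ℂ => (1 + y) ^ (n + 2)) (by fun_prop) (by fun_prop) h

open MeasureTheory in
lemma gauss_int (n : ℕ) (hn : 2 ≤ n) :
    IntegrableOn (fun r : ℝ => Real.exp (-((π * r - √(π * n)) ^ 2 / (4 * √(π * n)))) + Real.exp (-(r / 4)))
      (Set.Ioi 0) ∧
    ∫ r in Set.Ioi (0:ℝ), (Real.exp (-((π * r - √(π * n)) ^ 2 / (4 * √(π * n)))) + Real.exp (-(r / 4))) ≤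
      6 * (n:ℝ) ^ ((1:ℝ)/4) := by
  have hn0 : (2:ℝ) ≤ n := by exact_mod_cast hn
  have hpi := Real.pi_gt_three
  set p := √(π * n) with hp
  have hp0 : 0 < p := by positivity
  have hb : 0 < π ^ 2 / (4 * p) := by positivity
  have e1 : ∀ r : ℝ, Real.exp (-((π * r - p) ^ 2 / (4 * p))) =
      (fun x => Real.exp (-(π ^ 2 / (4 * p)) * x ^ 2)) (r - p / π) := by
    intro r; simp only; congr 1; field_simp
  have e2 : ∀ r : ℝ, Real.exp (-(r / 4)) = Real.exp (-(1/4) * r) := by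
    intro r; congr 1; ring
  have i1 : Integrable (fun r : ℝ => Real.exp (-((π * r - p) ^ 2 / (4 * p)))) := by
    simp_rw [e1]
    exact (integrable_exp_neg_mul_sq hb).comp_sub_right _
  have i2 : IntegrableOn (fun r : ℝ => Real.exp (-(r / 4))) (Set.Ioi 0) := by
    simp_rw [e2]
    exact exp_neg_integrableOn_Ioi 0 (by norm_num)
  refine ⟨i1.integrableOn.add i2, ?_⟩
  rw [integral_add i1.integrableOn i2]
  have b1 : ∫ r in Set.Ioi (0:ℝ), Real.exp (-((π * r - p) ^ 2 / (4 * p))) ≤ 2 * (n:ℝ) ^ ((1:ℝ)/4) := by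
    refine (setIntegral_le_integral i1 (ae_of_all _ fun x => (Real.exp_pos _).le)).trans ?_
    simp_rw [e1]
    rw [integral_sub_right_eq_self (fun x => Real.exp (-(π ^ 2 / (4 * p)) * x ^ 2)), integral_gaussian]
    rw [Real.sqrt_le_iff]
    refine ⟨by positivity, ?_⟩
    have e4 : ((n:ℝ) ^ ((1:ℝ)/4)) ^ 2 = √n := by
      rw [← Real.rpow_natCast, ← Real.rpow_mul (by positivity), Real.sqrt_eq_rpow]; norm_num
    rw [mul_pow, e4]
    have : p ≤ π * √n := by
      rw [hp, Real.sqrt_mul (by positivity)]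
      gcongr
      rw [Real.sqrt_le_iff]; constructor; positivity; nlinarith
    rw [div_div_eq_mul_div, div_le_iff₀ (by positivity)]
    nlinarith
  have b2 : ∫ r in Set.Ioi (0:ℝ), Real.exp (-(r / 4)) = 4 := by
    simp_rw [e2]
    rw [integral_exp_mul_Ioi (by norm_num)]
    norm_num
  have b3 : 1 ≤ (n:ℝ) ^ ((1:ℝ)/4) := Real.one_le_rpow (by linarith) (by norm_num)
  linarith

open MeasureTheory in
lemma fourier_bound (n k : ℕ) (hn : 2 ≤ n) (hk : 1 ≤ k) :
    ‖∫ r in Set.Ioi (0:ℝ), GC n r * Complex.exp (π * k * r * Complex.I)‖ ≤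
      5120 * Real.exp 600 * Real.exp (-√(2 * π * n)) * (6 * (n:ℝ) ^ ((1:ℝ)/4)) := by
  have hk1 : (1:ℝ) ≤ k := by exact_mod_cast hk
  have hpi := Real.pi_pos
  have hrot := ray_rotate (fun y => GC n y * Complex.exp (π * k * y * Complex.I)) (n * (n + 2))
    ((GC_diff n).mul (by fun_prop)) (by
      intro z h1 h2
      rw [norm_mul, Complex.norm_exp]
      have e : (π * k * z * Complex.I : ℂ).re = -(π * k * z.im) := by
        have : (π * k * z * Complex.I : ℂ) = ((π * k : ℝ) : ℂ) * (z * Complex.I) := by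
          push_cast; ring
        rw [this, Complex.re_ofReal_mul]; simp
      rw [e]
      have : Real.exp (-(π * k * z.im)) ≤ 1 := by
        rw [Real.exp_le_one_iff]
        have : 0 ≤ π * k * z.im := by positivity
        linarith
      calc _ ≤ ‖GC n z‖ * 1 := by gcongr
        _ ≤ _ := by rw [mul_one]; exact GC_bound n hn z h1)
  rw [hrot]
  clear hrot
  obtain ⟨g1, g2⟩ := gauss_int n hn
  refine (norm_integral_le_of_norm_le (g1.const_mul
    (5120 * Real.exp 600 * Real.exp (-√(2 * π * n)))) ?_).trans ?_
  swap
  · rw [integral_const_mul]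
    gcongr
  rw [ae_restrict_iff' measurableSet_Ioi]
  refine ae_of_all _ fun r hr' => ?_
  have hr : 0 < r := hr'
  set ω := Complex.exp ((π / 4 : ℝ) * Complex.I) with hω
  have hs2 : √2 ^ 2 = 2 := Real.sq_sqrt (by norm_num)
  have hωr : ω.re = √2 / 2 := by rw [hω, Complex.exp_ofReal_mul_I_re, Real.cos_pi_div_four]
  have hωi : ω.im = √2 / 2 := by rw [hω, Complex.exp_ofReal_mul_I_im, Real.sin_pi_div_four]
  have hωn : ‖ω‖ = 1 := by rw [hω, Complex.norm_exp_ofReal_mul_I]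
  have hyr : (ω * r).re = √2 / 2 * r := by rw [Complex.re_mul_ofReal, hωr]
  have hyi : (ω * r).im = √2 / 2 * r := by rw [Complex.im_mul_ofReal, hωi]
  have hyn : ‖ω * r‖ = r := by rw [norm_mul, hωn, one_mul, Complex.norm_real, Real.norm_of_nonneg hr.le]
  have hyp : 0 < (ω * r).re := by rw [hyr]; positivity
  set y := ω * r with hy
  have hD2 : ‖1 + y‖ ^ 2 = 1 + √2 * r + r ^ 2 := by
    rw [← Complex.normSq_eq_norm_sq, Complex.normSq_apply]
    simp only [Complex.add_re, Complex.one_re, Complex.add_im, Complex.one_im, hyr, hyi]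
    linear_combination r ^ 2 / 2 * hs2
  have hD : 0 < ‖1 + y‖ := by
    rw [norm_pos_iff]; intro h
    have := congrArg Complex.re h
    simp at this; linarith
  have hA := norm_lin n hn y
  rw [hyn] at hA
  have hpt := pointwise_bound n hn r _ _ hr hD hD2 hA
  refine le_trans ?_ hpt
  rw [norm_mul, norm_mul, hωn, one_mul]
  have hn' : ‖GC n y‖ = n * r ^ (n - 2) * ‖(n - 1 - 2 * y : ℂ)‖ / ‖1 + y‖ ^ (n + 2) := by
    simp [GC, hyn]
  rw [hn', Complex.norm_exp]
  gcongr
  have e : (π * k * y * Complex.I : ℂ).re = -(π * k * y.im) := by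
    have : (π * k * y * Complex.I : ℂ) = ((π * k : ℝ) : ℂ) * (y * Complex.I) := by
      push_cast; ring
    rw [this, Complex.re_ofReal_mul]; simp
  rw [e, hyi]
  apply neg_le_neg
  have e3 : π * r / √2 = π * 1 * (√2 / 2 * r) := by
    field_simp; rw [hs2]
  rw [e3]
  gcongr

/-- second derivative of `(y/(1+y))^n`, real version -/
noncomputable def GR (n : ℕ) (y : ℝ) : ℝ := n * y ^ (n - 2) * (n - 1 - 2 * y) / (1 + y) ^ (n + 2)

lemma GC_ofReal (n : ℕ) (y : ℝ) : GC n (y : ℂ) = ((GR n y : ℝ) : ℂ) := by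
  simp [GC, GR]

lemma GR_bound (n : ℕ) (hn : 2 ≤ n) (y : ℝ) (hy : 0 < y) :
    ‖GR n y‖ ≤ (n * (n + 2)) * (1 + y ^ 2)⁻¹ := by
  have := GC_bound n hn y (by simpa using hy)
  rw [GC_ofReal, Complex.norm_real, Complex.norm_real] at this
  simpa using this

lemma GR_contAt (n : ℕ) (y : ℝ) (hy : 0 ≤ y) : ContinuousAt (GR n) y := by
  have h : (1 + y) ^ (n + 2) ≠ 0 := by positivity
  exact ContinuousAt.div (f := fun y : ℝ => (n:ℝ) * y ^ (n - 2) * (n - 1 - 2 * y))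
    (g := fun y : ℝ => (1 + y) ^ (n + 2)) (by fun_prop) (by fun_prop) h

open MeasureTheory in
lemma GR_int (n : ℕ) (hn : 2 ≤ n) : IntegrableOn (GR n) (Set.Ioi 0) := by
  refine Integrable.mono' (g := fun y : ℝ => (n * (n + 2)) * (1 + y ^ 2)⁻¹)
    (integrable_inv_one_add_sq.integrableOn.const_mul _) ?_ ?_
  · refine ContinuousOn.aestronglyMeasurable ?_ measurableSet_Ioi
    intro y hy
    exact (GR_contAt n y (le_of_lt hy)).continuousWithinAt
  · rw [ae_restrict_iff' measurableSet_Ioi]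
    exact ae_of_all _ fun y hy => GR_bound n hn y hy

/-- periodised Bernoulli polynomial (times `π^2`) -/
noncomputable def P2 (y : ℝ) : ℝ := ∑' k : ℕ, 1 / (k:ℝ) ^ 2 * Real.cos (π * k * y)

lemma P2_cell (m : ℕ) (x : ℝ) (hx : x ∈ Set.Icc (0:ℝ) 2) :
    P2 (2 * m + x) = π ^ 2 * (x ^ 2 / 4 - x / 2 + 1 / 6) := by
  have h := hasSum_one_div_nat_pow_mul_cos (k := 1) one_ne_zero (x := x / 2)
    ⟨by linarith [hx.1], by linarith [hx.2]⟩
  have e : ∀ k : ℕ, 1 / (k:ℝ) ^ (2 * 1) * Real.cos (2 * π * k * (x / 2)) =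
      1 / (k:ℝ) ^ 2 * Real.cos (π * k * (2 * m + x)) := by
    intro k
    have : π * k * (2 * m + x) = 2 * π * k * (x / 2) + ((k * m : ℕ) : ℝ) * (2 * π) := by
      push_cast; ring
    rw [this, Real.cos_add_nat_mul_two_pi, mul_one]
  simp_rw [e] at h
  rw [P2, h.tsum_eq]
  simp [Polynomial.bernoulli, Finset.sum_range_succ, bernoulli_one, bernoulli_two,
    Nat.factorial]
  ring

open MeasureTheory in
lemma fourier_total (n : ℕ) (hn : 2 ≤ n) :
    |∫ y in Set.Ioi (0:ℝ), GR n y * P2 y| ≤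
      (π ^ 2 / 6) * (5120 * Real.exp 600 * Real.exp (-√(2 * π * n)) * (6 * (n:ℝ) ^ ((1:ℝ)/4))) := by
  set B := 5120 * Real.exp 600 * Real.exp (-√(2 * π * n)) * (6 * (n:ℝ) ^ ((1:ℝ)/4)) with hB
  have hB0 : 0 ≤ B := by positivity
  have hg := GR_int n hn
  have hFi : ∀ k : ℕ, IntegrableOn (fun y => GR n y * (1 / (k:ℝ) ^ 2 * Real.cos (π * k * y)))
      (Set.Ioi 0) := by
    intro k
    refine Integrable.mono' (hg.norm.mul_const (1 / (k:ℝ)^2)) ?_ (ae_of_all _ fun y => ?_)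
    · exact hg.aestronglyMeasurable.mul (Continuous.aestronglyMeasurable (by fun_prop))
    · rw [norm_mul, norm_mul, Real.norm_eq_abs (1 / (k:ℝ)^2), abs_of_nonneg (by positivity)]
      have : ‖Real.cos (π * k * y)‖ ≤ 1 := Real.abs_cos_le_one _
      gcongr
      exact mul_le_of_le_one_right (by positivity) this
  have hs := hasSum_integral_of_summable_integral_norm (μ := volume.restrict (Set.Ioi (0:ℝ)))
    (F := fun (k : ℕ) y => GR n y * (1 / (k:ℝ) ^ 2 * Real.cos (π * k * y))) hFi (by
      refine Summable.of_nonneg_of_le (fun k => integral_nonneg fun y => norm_nonneg _) (fun k => ?_)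
        (hasSum_zeta_two.summable.mul_left (∫ y in Set.Ioi (0:ℝ), ‖GR n y‖))
      rw [← integral_mul_const]
      refine integral_mono (hFi k).norm (hg.norm.mul_const _) fun y => ?_
      simp only [norm_mul]
      rw [Real.norm_eq_abs (1 / (k:ℝ)^2), abs_of_nonneg (by positivity)]
      have : ‖Real.cos (π * k * y)‖ ≤ 1 := Real.abs_cos_le_one _
      gcongr
      exact mul_le_of_le_one_right (by positivity) this)
  have e : ∀ y : ℝ, ∑' k : ℕ, GR n y * (1 / (k:ℝ) ^ 2 * Real.cos (π * k * y)) = GR n y * P2 y := by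
    intro y; rw [tsum_mul_left, P2]
  simp_rw [e] at hs
  rw [← hs.tsum_eq, ← Real.norm_eq_abs]
  refine tsum_of_norm_bounded (hasSum_zeta_two.mul_right B) fun k => ?_
  rcases Nat.eq_zero_or_pos k with rfl | hk
  · simp
  have hb := fourier_bound n k hn hk
  have hre : ∫ y in Set.Ioi (0:ℝ), GR n y * (1 / (k:ℝ) ^ 2 * Real.cos (π * k * y)) =
      (1 / (k:ℝ) ^ 2) * (∫ r in Set.Ioi (0:ℝ), GC n r * Complex.exp (π * k * r * Complex.I)).re := by
    have hci : IntegrableOn (fun r : ℝ => GC n r * Complex.exp (π * k * r * Complex.I)) (Set.Ioi 0) := by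
      refine Integrable.mono' hg.norm ?_ (ae_of_all _ fun r => ?_)
      · simp_rw [GC_ofReal]
        exact (Complex.continuous_ofReal.comp_aestronglyMeasurable hg.aestronglyMeasurable).mul
          (Continuous.aestronglyMeasurable (by fun_prop))
      · rw [norm_mul, GC_ofReal, Complex.norm_real]
        have : (π * k * r * Complex.I : ℂ) = ((π * k * r : ℝ) : ℂ) * Complex.I := by push_cast; ring
        rw [this, Complex.norm_exp_ofReal_mul_I, mul_one]
    have := integral_re hci
    simp only [RCLike.re_to_complex] at this
    rw [← this, ← integral_const_mul]
    congr 1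
    ext r
    have e : (π * k * r * Complex.I : ℂ) = ((π * k * r : ℝ) : ℂ) * Complex.I := by push_cast; ring
    rw [e, GC_ofReal, Complex.re_ofReal_mul, Complex.exp_ofReal_mul_I_re]
    ring
  rw [hre, norm_mul, Real.norm_eq_abs (1 / (k:ℝ)^2), abs_of_nonneg (by positivity)]
  gcongr
  exact (Complex.abs_re_le_norm _).trans hb

/-- antiderivative of `(y/(1+y))^n - 1` vanishing at zero -/
noncomputable def Phi (n : ℕ) (y : ℝ) : ℝ :=
  -∑ j ∈ Finset.range n, (Real.log (1 + y) - ∑ i ∈ Finset.range j, (y / (1 + y)) ^ (i + 1) / (i + 1))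

lemma hasDerivAt_ratio (y : ℝ) (hy : 0 ≤ y) :
    HasDerivAt (fun y : ℝ => y / (1 + y)) (1 / (1 + y) ^ 2) y := by
  have h := (hasDerivAt_id y).div ((hasDerivAt_id y).const_add 1) (by simp; positivity)
  convert! h using 1
  simp

lemma hasDerivAt_Phi (n : ℕ) (y : ℝ) (hy : 0 ≤ y) :
    HasDerivAt (Phi n) ((y / (1 + y)) ^ n - 1) y := by
  have hy1 : (1 + y) ≠ 0 := by positivity
  have hlog : HasDerivAt (fun y : ℝ => Real.log (1 + y)) (1 / (1 + y)) y := by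
    simpa using ((hasDerivAt_id y).const_add 1).log (by simpa using hy1)
  have hj : ∀ j : ℕ, HasDerivAt (fun y : ℝ => Real.log (1 + y) -
      ∑ i ∈ Finset.range j, (y / (1 + y)) ^ (i + 1) / (i + 1)) ((y / (1 + y)) ^ j / (1 + y)) y := by
    intro j
    induction j with
    | zero => simpa using hlog
    | succ j ih =>
      have h1 := ((hasDerivAt_ratio y hy).pow (j + 1)).div_const ((j:ℝ) + 1)
      have h2 := ih.sub h1
      have e : (fun y : ℝ => Real.log (1 + y) -
          ∑ i ∈ Finset.range (j + 1), (y / (1 + y)) ^ (i + 1) / (i + 1)) =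
          (fun y : ℝ => Real.log (1 + y) -
          ∑ i ∈ Finset.range j, (y / (1 + y)) ^ (i + 1) / (i + 1)) -
          (fun y : ℝ => ((fun y : ℝ => y / (1 + y)) ^ (j + 1)) y / ((j:ℝ) + 1)) := by
        ext z; simp [Finset.sum_range_succ]; ring
      rw [e]
      convert! h2 using 1
      have : (j:ℝ) + 1 ≠ 0 := by positivity
      simp only [Nat.add_sub_cancel]
      push_cast
      rw [pow_succ]
      generalize (y / (1 + y)) ^ j = Q
      field_simp
      ring
  have hs := (HasDerivAt.fun_sum (u := Finset.range n) (fun j _ => hj j)).neg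
  convert! hs using 1
  have := mul_neg_geom_sum (y / (1 + y)) n
  rw [← Finset.sum_div]
  have e : 1 - y / (1 + y) = 1 / (1 + y) := by field_simp; ring
  rw [e] at this
  linear_combination this

lemma Phi_zero (n : ℕ) : Phi n 0 = 0 := by simp [Phi]

/-- first derivative -/
noncomputable def G1 (n : ℕ) (y : ℝ) : ℝ := n * y ^ (n - 1) / (1 + y) ^ (n + 1)

lemma hasDerivAt_g (n : ℕ) (hn : 2 ≤ n) (y : ℝ) (hy : 0 ≤ y) :
    HasDerivAt (fun y : ℝ => (y / (1 + y)) ^ n) (G1 n y) y := by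
  have h := (hasDerivAt_ratio y hy).pow n
  convert! h using 1
  have hy1 : (1 + y) ≠ 0 := by positivity
  obtain ⟨k, rfl⟩ : ∃ k, n = k + 2 := ⟨n - 2, by omega⟩
  simp only [G1, show k + 2 - 1 = k + 1 by omega]
  rw [div_pow]
  field_simp
  ring

lemma hasDerivAt_G1 (n : ℕ) (hn : 2 ≤ n) (y : ℝ) (hy : 0 ≤ y) :
    HasDerivAt (G1 n) (GR n y) y := by
  have hy1 : (1 + y) ≠ 0 := by positivity
  obtain ⟨k, rfl⟩ : ∃ k, n = k + 2 := ⟨n - 2, by omega⟩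
  have h := ((hasDerivAt_pow (k + 1) y).const_mul (((k + 2 : ℕ) : ℝ))).div
    (((hasDerivAt_id y).const_add 1).pow (k + 3)) (pow_ne_zero _ (by simpa using hy1))
  convert! h using 1
  simp only [GR, show k + 2 - 2 = k by omega, show k + 1 - 1 = k by omega,
    show k + 3 - 1 = k + 2 by omega, Pi.pow_apply, id]
  push_cast
  field_simp
  ring

open MeasureTheory in
lemma cell_int (n m : ℕ) (hn : 2 ≤ n) :
    IntervalIntegrable (fun y => GR n y * P2 y) volume (2 * m : ℝ) (2 * m + 2) ∧
    ∫ y in (2 * m : ℝ)..(2 * m + 2), GR n y * P2 y =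
      π ^ 2 * ((G1 n (2 * m + 2) - G1 n (2 * m)) / 6 -
        (((2 * m : ℝ) / (1 + 2 * m)) ^ n + ((2 * m + 2 : ℝ) / (1 + (2 * m + 2))) ^ n) / 2
        + (2 + Phi n (2 * m + 2) - Phi n (2 * m)) / 2) := by
  have hm : (0:ℝ) ≤ 2 * m := by positivity
  set a : ℝ := 2 * m with ha
  have hab : a ≤ a + 2 := by linarith
  set f : ℝ → ℝ := fun y => GR n y * (π ^ 2 * ((y - a) ^ 2 / 4 - (y - a) / 2 + 1 / 6)) with hf
  have hfi : IntervalIntegrable f volume a (a + 2) := by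
    apply ContinuousOn.intervalIntegrable
    intro y hy
    rw [Set.uIcc_of_le hab] at hy
    exact ((GR_contAt n y (hm.trans hy.1)).mul (by fun_prop)).continuousWithinAt
  have heq : Set.EqOn f (fun y => GR n y * P2 y) (Set.uIcc a (a + 2)) := by
    intro y hy
    rw [Set.uIcc_of_le hab] at hy
    have := P2_cell m (y - a) ⟨by linarith [hy.1], by linarith [hy.2]⟩
    rw [← ha, add_sub_cancel] at this
    simp only [hf, this]
  refine ⟨hfi.congr (heq.mono Set.uIoc_subset_uIcc), ?_⟩
  rw [← intervalIntegral.integral_congr heq]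
  have hd : ∀ y ∈ Set.uIcc a (a + 2), HasDerivAt (fun y : ℝ => π ^ 2 *
      (G1 n y * ((y - a) ^ 2 / 4 - (y - a) / 2 + 1 / 6) - (y / (1 + y)) ^ n * ((y - a) / 2 - 1 / 2)
        + (y + Phi n y) / 2)) (f y) y := by
    intro y hy
    rw [Set.uIcc_of_le hab] at hy
    have hy0 := hm.trans hy.1
    have hya : HasDerivAt (fun y : ℝ => y - a) 1 y := (hasDerivAt_id y).sub_const a
    have hp : HasDerivAt (fun y : ℝ => (y - a) ^ 2 / 4 - (y - a) / 2 + 1 / 6) ((y - a) / 2 - 1 / 2) y := by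
      have := (((hya.pow 2).div_const 4).sub (hya.div_const 2)).add_const (1/6)
      convert! this using 1
      simp; ring
    have hq : HasDerivAt (fun y : ℝ => (y - a) / 2 - 1 / 2) (1 / 2) y :=
      (hya.div_const 2).sub_const (1 / 2)
    have := ((((hasDerivAt_G1 n hn y hy0).mul hp).sub ((hasDerivAt_g n hn y hy0).mul hq)).add
      (((hasDerivAt_id y).add (hasDerivAt_Phi n y hy0)).div_const 2)).const_mul (π ^ 2)
    convert! this using 1
    simp only [hf]
    ring
  rw [intervalIntegral.integral_eq_sub_of_hasDerivAt hd hfi]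
  ring

open MeasureTheory in
lemma cells_int (n M : ℕ) (hn : 2 ≤ n) :
    ∫ y in (0:ℝ)..(2 * M), GR n y * P2 y =
      π ^ 2 * (G1 n (2 * M) / 6 - ∑ m ∈ Finset.range M, ((2 * m : ℝ) / (1 + 2 * m)) ^ n
        - ((2 * M : ℝ) / (1 + 2 * M)) ^ n / 2 + M + Phi n (2 * M) / 2) := by
  have h := intervalIntegral.sum_integral_adjacent_intervals (n := M) (μ := volume)
    (f := fun y => GR n y * P2 y) (a := fun m : ℕ => (2 * m : ℝ))
    (fun m _ => by
      have := (cell_int n m hn).1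
      push_cast; rw [mul_add, mul_one]; exact this)
  simp only [Nat.cast_zero, mul_zero] at h
  rw [← h]
  clear h
  induction M with
  | zero =>
    simp [Phi_zero, G1, show n ≠ 0 by omega, show n - 1 ≠ 0 by omega]
  | succ M ih =>
    rw [Finset.sum_range_succ, ih, Finset.sum_range_succ]
    have := (cell_int n M hn).2
    have e : (2 * ((M + 1 : ℕ) : ℝ)) = 2 * M + 2 := by push_cast; ring
    rw [e, this]
    push_cast
    ring

lemma P2_cont : Continuous P2 := by
  unfold P2
  refine continuous_tsum (u := fun k : ℕ => 1 / (k:ℝ) ^ 2) (fun k => by fun_prop)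
    hasSum_zeta_two.summable (fun k y => ?_)
  rw [norm_mul, Real.norm_eq_abs (1 / (k:ℝ)^2), abs_of_nonneg (by positivity)]
  exact mul_le_of_le_one_right (by positivity) (Real.abs_cos_le_one _)

lemma P2_bound (y : ℝ) : ‖P2 y‖ ≤ π ^ 2 / 6 := by
  unfold P2
  refine tsum_of_norm_bounded hasSum_zeta_two (fun k => ?_)
  rw [norm_mul, Real.norm_eq_abs (1 / (k:ℝ)^2), abs_of_nonneg (by positivity)]
  exact mul_le_of_le_one_right (by positivity) (Real.abs_cos_le_one _)

open MeasureTheory in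
lemma GRP2_int (n : ℕ) (hn : 2 ≤ n) : IntegrableOn (fun y => GR n y * P2 y) (Set.Ioi 0) := by
  refine Integrable.mono' ((GR_int n hn).norm.mul_const (π ^ 2 / 6))
    ((GR_int n hn).aestronglyMeasurable.mul P2_cont.aestronglyMeasurable) (ae_of_all _ fun y => ?_)
  rw [norm_mul]
  gcongr
  exact P2_bound y

lemma odd_zeta (l : ℕ) (hl : 2 ≤ l) :
    HasSum (fun m : ℕ => 1 / (1 + 2 * (m:ℝ)) ^ l)
      ((1 - (2 : ℝ) ^ (-(l : ℤ))) * (∑' j : ℕ, 1 / ((j : ℝ) + 1) ^ l)) := by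
  have hs : Summable (fun j : ℕ => 1 / ((j : ℝ) + 1) ^ l) := by
    have := (summable_nat_add_iff 1).2 (Real.summable_one_div_nat_pow (p := l).2 (by omega))
    simpa using this
  have h1 : Summable (fun m : ℕ => 1 / (((2 * m : ℕ) : ℝ) + 1) ^ l) :=
    hs.comp_injective (i := fun m : ℕ => 2 * m) (fun a b h => by simpa using h)
  have h2 : Summable (fun m : ℕ => 1 / (((2 * m + 1 : ℕ) : ℝ) + 1) ^ l) :=
    hs.comp_injective (i := fun m : ℕ => 2 * m + 1) (fun a b h => by simpa using h)
  have h3 := tsum_even_add_odd (f := fun j : ℕ => 1 / ((j : ℝ) + 1) ^ l) h1 h2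
  have h4 : ∀ m : ℕ, 1 / (((2 * m + 1 : ℕ) : ℝ) + 1) ^ l = (2 : ℝ) ^ (-(l : ℤ)) * (1 / ((m : ℝ) + 1) ^ l) := by
    intro m
    rw [zpow_neg, zpow_natCast]
    push_cast
    rw [show (2 * (m:ℝ) + 1 + 1) = 2 * (m + 1) by ring, mul_pow]
    field_simp
  simp_rw [h4] at h3
  rw [tsum_mul_left] at h3
  have h5 : (1 - (2 : ℝ) ^ (-(l : ℤ))) * (∑' j : ℕ, 1 / ((j : ℝ) + 1) ^ l) =
      ∑' m : ℕ, 1 / (((2 * m : ℕ) : ℝ) + 1) ^ l := by linear_combination -h3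
  rw [h5]
  convert! h1.hasSum using 4
  push_cast; ring

lemma hasSum_S (n : ℕ) (hn : 2 ≤ n) :
    HasSum (fun m : ℕ => ((2 * m : ℝ) / (1 + 2 * m)) ^ n - 1 + n * (1 / (1 + 2 * m)))
      (∑ l ∈ Finset.Icc 2 n, (-1 : ℝ) ^ l * (n.choose l : ℝ) * (1 - (2 : ℝ) ^ (-(l : ℤ))) *
            (∑' j : ℕ, 1 / ((j : ℝ) + 1) ^ l)) := by
  have h := hasSum_sum (s := Finset.Icc 2 n)
    (f := fun (l m : ℕ) => (-1 : ℝ) ^ l * (n.choose l : ℝ) * (1 / (1 + 2 * (m:ℝ)) ^ l))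
    (a := fun l => (-1 : ℝ) ^ l * (n.choose l : ℝ) * ((1 - (2 : ℝ) ^ (-(l : ℤ))) *
            (∑' j : ℕ, 1 / ((j : ℝ) + 1) ^ l)))
    (fun l hl => (odd_zeta l (Finset.mem_Icc.1 hl).1).mul_left _)
  convert! h using 1
  · ext m
    have hm : (1 + 2 * (m:ℝ)) ≠ 0 := by positivity
    have hb := add_pow (-(1 / (1 + 2 * (m:ℝ)))) 1 n
    have e : -(1 / (1 + 2 * (m:ℝ))) + 1 = 2 * m / (1 + 2 * m) := by field_simp; ring
    rw [e] at hb
    rw [hb, Finset.range_eq_Ico, Finset.sum_eq_sum_Ico_succ_bot (by omega),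
      Finset.sum_eq_sum_Ico_succ_bot (by omega)]
    have e2 : ∑ k ∈ Finset.Ico (0 + 1 + 1) (n + 1), (-(1 / (1 + 2 * (m:ℝ)))) ^ k * 1 ^ (n - k) * (n.choose k : ℝ)
        = ∑ l ∈ Finset.Icc 2 n, (-1 : ℝ) ^ l * (n.choose l : ℝ) * (1 / (1 + 2 * (m:ℝ)) ^ l) := by
      apply Finset.sum_congr
      · ext k; simp
      · intro k _
        rw [neg_pow, one_pow, div_pow, one_pow]; ring
    rw [e2]
    simp
    ring
  · apply Finset.sum_congr rfl
    intro l _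
    ring

lemma odd_harm (M : ℕ) : ∑ m ∈ Finset.range M, 1 / (1 + 2 * (m:ℝ)) =
    (harmonic (2 * M) : ℝ) - (harmonic M : ℝ) / 2 := by
  induction M with
  | zero => simp
  | succ M ih =>
    rw [Finset.sum_range_succ, ih, show 2 * (M + 1) = 2 * M + 1 + 1 by ring, harmonic_succ,
      harmonic_succ, harmonic_succ]
    push_cast
    have h1 : (M:ℝ) + 1 ≠ 0 := by positivity
    have h2 : 2 * (M:ℝ) + 1 ≠ 0 := by positivity
    have h3 : 2 * (M:ℝ) + 1 + 1 ≠ 0 := by positivity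
    have h4 : 1 + 2 * (M:ℝ) ≠ 0 := by positivity
    field_simp
    ring

lemma harm_eq (N : ℕ) : harm N = ∑ i ∈ Finset.range N, 1 / ((i:ℝ) + 1) := by
  induction N with
  | zero => simp [harm]
  | succ N ih =>
    rw [Finset.sum_range_succ, ← ih, harm, Finset.sum_Icc_succ_top (by omega), ← harm]
    push_cast; rfl

lemma sum_harm (k : ℕ) : ∑ j ∈ Finset.range (k + 1), harm j = (k + 1) * harm k - k := by
  induction k with
  | zero => simp [harm]
  | succ k ih =>
    rw [Finset.sum_range_succ, ih]
    have : harm (k + 1) = harm k + 1 / ((k:ℝ) + 1) := by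
      rw [harm_eq, harm_eq, Finset.sum_range_succ]
    rw [this]
    have h1 : (k:ℝ) + 1 ≠ 0 := by positivity
    push_cast
    field_simp
    ring

open Filter Topology in
lemma tendsto_two_mul : Tendsto (fun M : ℕ => (2 * M : ℝ)) atTop atTop :=
  tendsto_natCast_atTop_atTop.const_mul_atTop (by norm_num)

open Filter Topology in
lemma tendsto_inv_one : Tendsto (fun M : ℕ => 1 / (1 + 2 * (M : ℝ))) atTop (𝓝 0) := by
  have := tendsto_inv_atTop_zero.comp (tendsto_atTop_add_const_left atTop (1:ℝ) tendsto_two_mul)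
  simpa [Function.comp_def] using this

open Filter Topology in
lemma tendsto_ratio : Tendsto (fun M : ℕ => (2 * M : ℝ) / (1 + 2 * (M : ℝ))) atTop (𝓝 1) := by
  have := tendsto_inv_one.const_sub 1
  rw [sub_zero] at this
  refine this.congr fun M => ?_
  have : 1 + 2 * (M:ℝ) ≠ 0 := by positivity
  field_simp; ring

open Filter Topology in
lemma tendsto_odd : Tendsto (fun M : ℕ => ∑ m ∈ Finset.range M, 1 / (1 + 2 * (m:ℝ)) -
    Real.log (1 + 2 * M) / 2) atTop (𝓝 ((Real.eulerMascheroniConstant + Real.log 2) / 2)) := by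
  have h1 := Real.tendsto_harmonic_sub_log
  have h2 : Tendsto (fun M : ℕ => (harmonic (2 * M) : ℝ) - Real.log ((2 * M : ℕ) : ℝ)) atTop
      (𝓝 Real.eulerMascheroniConstant) :=
    h1.comp (tendsto_id.const_mul_atTop' (by norm_num : 0 < 2))
  have h3 : Tendsto (fun M : ℕ => Real.log ((2 * M : ℝ) / (1 + 2 * (M : ℝ)))) atTop (𝓝 0) := by
    have := tendsto_ratio.log one_ne_zero
    simpa using this
  have h4 := ((h2.sub (h1.div_const 2)).add (h3.div_const 2)).add_const (Real.log 2 / 2)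
  have e : Real.eulerMascheroniConstant - Real.eulerMascheroniConstant / 2 + 0 / 2 + Real.log 2 / 2 =
    (Real.eulerMascheroniConstant + Real.log 2) / 2 := by ring
  rw [e] at h4
  refine h4.congr' ?_
  filter_upwards [eventually_ge_atTop 1] with M hM
  have hM' : (0:ℝ) < M := by exact_mod_cast hM
  rw [odd_harm, Real.log_div (by positivity) (by positivity)]
  push_cast
  rw [Real.log_mul (by norm_num) hM'.ne']
  ring

open Filter Topology in
lemma tendsto_Phi (k : ℕ) : Tendsto (fun M : ℕ => Phi (k + 1) (2 * M) + (k + 1) * Real.log (1 + 2 * M))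
    atTop (𝓝 ((k + 1) * harm k - k)) := by
  have h : Tendsto (fun M : ℕ => ∑ j ∈ Finset.range (k + 1), ∑ i ∈ Finset.range j,
      ((2 * M : ℝ) / (1 + 2 * (M : ℝ))) ^ (i + 1) / ((i:ℝ) + 1)) atTop
      (𝓝 (∑ j ∈ Finset.range (k + 1), ∑ i ∈ Finset.range j, 1 ^ (i + 1) / ((i:ℝ) + 1))) :=
    tendsto_finsetSum _ fun j _ => tendsto_finsetSum _ fun i _ => (tendsto_ratio.pow _).div_const _
  simp_rw [one_pow, ← harm_eq, sum_harm] at h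
  refine h.congr fun M => ?_
  rw [Phi, Finset.sum_sub_distrib]
  simp

open Filter Topology in
lemma tendsto_G1 (n : ℕ) (hn : 2 ≤ n) : Tendsto (fun M : ℕ => G1 n (2 * M)) atTop (𝓝 0) := by
  have h := ((tendsto_ratio.pow (n - 1)).mul (tendsto_inv_one.pow 2)).const_mul (n:ℝ)
  simp only [one_pow, ne_eq, OfNat.ofNat_ne_zero, not_false_eq_true, zero_pow, mul_zero] at h
  refine h.congr fun M => ?_
  have : 1 + 2 * (M:ℝ) ≠ 0 := by positivity
  rw [G1, show n + 1 = (n - 1) + 2 by omega, pow_add, div_pow, div_pow, one_pow]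
  field_simp

open Filter Topology MeasureTheory in
lemma main_identity (n : ℕ) (hn : 2 ≤ n) :
    (∑ l ∈ Finset.Icc 2 n, (-1 : ℝ) ^ l * (n.choose l : ℝ) * (1 - (2 : ℝ) ^ (-(l : ℤ))) *
            (∑' j : ℕ, 1 / ((j : ℝ) + 1) ^ l)) -
          ((n : ℝ) / 2) * (harm (n - 1) + Real.eulerMascheroniConstant + Real.log 2 - 1) =
      -(1 / π ^ 2 * ∫ y in Set.Ioi (0:ℝ), GR n y * P2 y) := by
  have hS := (hasSum_S n hn).tendsto_sum_nat
  set S := (∑ l ∈ Finset.Icc 2 n, (-1 : ℝ) ^ l * (n.choose l : ℝ) * (1 - (2 : ℝ) ^ (-(l : ℤ))) *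
            (∑' j : ℕ, 1 / ((j : ℝ) + 1) ^ l)) with hSd
  have hI := intervalIntegral_tendsto_integral_Ioi 0 (GRP2_int n hn) tendsto_two_mul
  obtain ⟨k, rfl⟩ : ∃ k, n = k + 1 := ⟨n - 1, by omega⟩
  have hL := (((((tendsto_G1 (k + 1) hn).div_const 6).sub hS).sub
    ((tendsto_ratio.pow (k + 1)).div_const 2)).add
    (tendsto_odd.const_mul ((k:ℝ) + 1))).add ((tendsto_Phi k).div_const 2)
  have hL2 := hL.const_mul (π ^ 2)
  have hI2 := hI.congr (f₂ := _) (fun M => by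
    rw [cells_int (k + 1) M hn])
  have := tendsto_nhds_unique hI2 (hL2.congr fun M => by
    rw [Finset.sum_add_distrib, Finset.sum_sub_distrib, ← Finset.mul_sum]
    simp only [Finset.sum_const, Finset.card_range, nsmul_eq_mul, mul_one]
    push_cast
    ring)
  rw [this]
  have hpi := Real.pi_ne_zero
  simp only [Nat.add_sub_cancel]
  push_cast
  field_simp
  ring


/-- The case `m = 1, k = 2` of the asymptotics for `H_n(m,k)`, using
`2^{-l} ζ(l, 1/2) = (1 - 2^{-l}) ζ(l)`:
`∑_{l=2}^n (-1)^l C(n,l)(1 - 2^{-l}) ζ(l) = (n/2)(h_{n-1} + γ + log 2 - 1)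
  + O(n^{1/4} e^{-√(2πn)})`. -/
theorem zeta_differences_asymptotics_half :
    ∃ C : ℝ, 0 < C ∧ ∀ n : ℕ, 2 ≤ n →
      |(∑ l ∈ Finset.Icc 2 n, (-1 : ℝ) ^ l * (n.choose l : ℝ) * (1 - (2 : ℝ) ^ (-(l : ℤ))) *
            (∑' j : ℕ, 1 / ((j : ℝ) + 1) ^ l)) -
          ((n : ℝ) / 2) * (harm (n - 1) + Real.eulerMascheroniConstant + Real.log 2 - 1)| ≤
        C * (n : ℝ) ^ ((1 : ℝ) / 4) * Real.exp (-Real.sqrt (2 * Real.pi * n)) := by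
  refine ⟨5120 * Real.exp 600, by positivity, fun n hn => ?_⟩
  rw [main_identity n hn, abs_neg, abs_mul, abs_of_pos (by positivity)]
  have h := fourier_total n hn
  have hpi := Real.pi_pos
  calc _ ≤ 1 / π ^ 2 * ((π ^ 2 / 6) * (5120 * Real.exp 600 * Real.exp (-√(2 * π * n)) *
        (6 * (n:ℝ) ^ ((1:ℝ)/4)))) := by gcongr
    _ = _ := by
      generalize Real.exp (-√(2 * π * n)) = E
      field_simp
end

section
/- For every natural number l, the limit L_l = lim_{N→∞} [ Σ_{k=2}^{N} Λ(k)(log k)^l / k − (log N)^{l+1}/(l+1) ] exists (as a limit of a real sequence indexed by N), where Λ is the von Mangoldt function. (Existence of the generalized Stieltjes-type constants η_l = ((−1)^l / l!) L_l appearing in the arithmetic formula for the Li coefficients of the Riemann zeta function.) -/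
open Finset Filter Topology

/-- The `n`-th term of the series for `(s - 1) ζ(s) - 1`. -/
noncomputable def zTerm (n : ℕ) (s : ℂ) : ℂ :=
  (s - 1) * (((n + 1 : ℝ) : ℂ)) ^ (-s) + (((n + 2 : ℝ) : ℂ)) ^ (1 - s) - (((n + 1 : ℝ) : ℂ)) ^ (1 - s)

/-- An analytic continuation of `(s - 1) ζ(s)` to `Re s > 0`. -/
noncomputable def zP (s : ℂ) : ℂ := 1 + ∑' n, zTerm n s

lemma cpow_diff_bound {a x : ℝ} (ha : 1 ≤ a) (hx : a ≤ x) (hx' : x ≤ a + 1) {s : ℂ} (hs : 0 < s.re) :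
    ‖(a : ℂ) ^ (-s) - (x : ℂ) ^ (-s)‖ ≤ ‖s‖ * a ^ (-s.re - 1) := by
  have h0 : 0 < a := by linarith
  have hs0 : -s ≠ 0 := by
    intro h; rw [neg_eq_zero] at h; simp [h] at hs
  have key := (convex_Icc a x).norm_image_sub_le_of_norm_hasDerivWithin_le
    (f := fun y : ℝ => (y : ℂ) ^ (-s)) (f' := fun y : ℝ => (-s) * (y : ℂ) ^ (-s - 1))
    (C := ‖s‖ * a ^ (-s.re - 1)) (x := x) (y := a)
    (fun y hy => by
      have hy0 : 0 < y := lt_of_lt_of_le h0 hy.1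
      have h1 := (hasDerivAt_id (y : ℂ)).cpow_const (c := -s) (Or.inl (by simpa using hy0))
      have := h1.comp_ofReal
      simpa using this.hasDerivWithinAt)
    (fun y hy => by
      have hy0 : 0 < y := lt_of_lt_of_le h0 hy.1
      rw [norm_mul, norm_neg, Complex.norm_cpow_eq_rpow_re_of_pos hy0]
      refine mul_le_mul_of_nonneg_left ?_ (norm_nonneg _)
      simp only [Complex.sub_re, Complex.neg_re, Complex.one_re]
      exact Real.rpow_le_rpow_of_nonpos h0 hy.1 (by linarith))
    (Set.right_mem_Icc.2 hx) (Set.left_mem_Icc.2 hx)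
  refine key.trans ?_
  have : ‖a - x‖ ≤ 1 := by rw [Real.norm_eq_abs, abs_le]; constructor <;> linarith
  have h2 : 0 ≤ ‖s‖ * a ^ (-s.re - 1) := by positivity
  nlinarith

lemma zTerm_bound (n : ℕ) {s : ℂ} (hs : 0 < s.re) {θ : ℝ} (h0 : 0 ≤ θ) (h1 : θ ≤ 1) :
    ‖zTerm n s‖ ≤ ‖s - 1‖ * (2 * (1 + ‖s‖) ^ θ * (n + 1 : ℝ) ^ (-s.re - θ)) := by
  set a : ℝ := n + 1 with ha
  have ha1 : 1 ≤ a := by rw [ha]; have : (0:ℝ) ≤ n := n.cast_nonneg; linarith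
  have ha0 : 0 < a := by linarith
  have hA1 : 1 ≤ 1 + ‖s‖ := by linarith [norm_nonneg s]
  have pt : ∀ x ∈ Set.Icc a (a + 1), ‖(a : ℂ) ^ (-s) - (x : ℂ) ^ (-s)‖ ≤
      2 * (1 + ‖s‖) ^ θ * a ^ (-s.re - θ) := by
    intro x hx
    have hx0 : 0 < x := lt_of_lt_of_le ha0 hx.1
    have e : 2 * (1 + ‖s‖) ^ θ * a ^ (-s.re - θ) = 2 * ((1 + ‖s‖) / a) ^ θ * a ^ (-s.re) := by
      rw [Real.rpow_sub ha0, Real.div_rpow (by linarith) ha0.le]; ring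
    rw [e]
    have hp : 0 < a ^ (-s.re) := Real.rpow_pos_of_pos ha0 _
    rcases le_total a (1 + ‖s‖) with h | h
    · have b1 : ‖(a : ℂ) ^ (-s)‖ = a ^ (-s.re) := by
        rw [Complex.norm_cpow_eq_rpow_re_of_pos ha0]; simp
      have b2 : ‖(x : ℂ) ^ (-s)‖ ≤ a ^ (-s.re) := by
        rw [Complex.norm_cpow_eq_rpow_re_of_pos hx0]
        exact Real.rpow_le_rpow_of_nonpos ha0 hx.1 (by simpa using hs.le)
      have b3 : 1 ≤ ((1 + ‖s‖) / a) ^ θ :=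
        Real.one_le_rpow ((one_le_div ha0).2 h) h0
      have := norm_sub_le ((a : ℂ) ^ (-s)) ((x : ℂ) ^ (-s))
      nlinarith
    · have b := cpow_diff_bound ha1 hx.1 hx.2 hs
      have b3 : (1 + ‖s‖) / a ≤ ((1 + ‖s‖) / a) ^ θ := by
        conv_lhs => rw [← Real.rpow_one ((1 + ‖s‖) / a)]
        exact Real.rpow_le_rpow_of_exponent_ge (by positivity) ((div_le_one ha0).2 h) h1
      have b4 : ‖s‖ * a ^ (-s.re - 1) ≤ (1 + ‖s‖) / a * a ^ (-s.re) := by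
        rw [Real.rpow_sub ha0, Real.rpow_one, div_mul_eq_mul_div, ← mul_div_assoc]
        gcongr; linarith
      have : 0 ≤ ((1 + ‖s‖) / a) ^ θ := by positivity
      nlinarith
  by_cases hs1 : s = 1
  · simp [zTerm, hs1]
  have key := (convex_Icc a (a+1)).norm_image_sub_le_of_norm_hasDerivWithin_le
    (f := fun y : ℝ => (s - 1) * (a : ℂ) ^ (-s) * (y : ℂ) + (y : ℂ) ^ (1 - s))
    (f' := fun y : ℝ => (s - 1) * ((a : ℂ) ^ (-s) - (y : ℂ) ^ (-s)))
    (C := ‖s - 1‖ * (2 * (1 + ‖s‖) ^ θ * a ^ (-s.re - θ))) (x := a) (y := a + 1)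
    (fun y hy => by
      have hy0 : 0 < y := lt_of_lt_of_le ha0 hy.1
      have h1 := (hasDerivAt_id (y : ℂ)).cpow_const (c := 1 - s) (Or.inl (by simpa using hy0))
      have h2 := ((hasDerivAt_id (y : ℂ)).const_mul ((s - 1) * (a : ℂ) ^ (-s))).add h1
      have := h2.comp_ofReal.hasDerivWithinAt (s := Set.Icc a (a+1))
      refine this.congr_deriv ?_
      simp only [id]
      rw [show (1 - s - 1 : ℂ) = -s by ring]; ring)
    (fun y hy => by
      rw [norm_mul]
      exact mul_le_mul_of_nonneg_left (pt y hy) (norm_nonneg _))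
    (Set.left_mem_Icc.2 (by linarith)) (Set.right_mem_Icc.2 (by linarith))
  have e : zTerm n s = ((s - 1) * (a : ℂ) ^ (-s) * ((a + 1 : ℝ) : ℂ) + ((a + 1 : ℝ) : ℂ) ^ (1 - s)) -
     ((s - 1) * (a : ℂ) ^ (-s) * (a : ℂ) + (a : ℂ) ^ (1 - s)) := by
    rw [zTerm, ha, show (n : ℝ) + 1 + 1 = n + 2 by ring]; push_cast; ring
  rw [e]
  refine key.trans (le_of_eq ?_)
  simp

lemma summable_shift_rpow {p : ℝ} (hp : 1 < p) : Summable (fun n : ℕ => ((n : ℝ) + 1) ^ (-p)) := by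
  have := (summable_nat_add_iff 1).2 (Real.summable_nat_rpow (p := -p).2 (by linarith))
  simpa using this

lemma zTerm_bound' (n : ℕ) {ε : ℝ} (h0 : 0 < ε) (h1 : ε < 1/2) {s : ℂ} (hs : 1 - ε ≤ s.re) :
    ‖zTerm n s‖ ≤ 2 * (1 + ‖s‖) ^ (1 + 2 * ε) * ((n : ℝ) + 1) ^ (-(1 + ε)) := by
  have hs0 : 0 < s.re := by linarith
  have hA1 : 0 < 1 + ‖s‖ := by linarith [norm_nonneg s]
  refine (zTerm_bound n hs0 (θ := 2 * ε) (by linarith) (by linarith)).trans ?_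
  rw [Real.rpow_add hA1, Real.rpow_one]
  have b1 : ‖s - 1‖ ≤ 1 + ‖s‖ := by
    have := norm_sub_le s 1; simp at this; linarith
  have b2 : ((n : ℝ) + 1) ^ (-s.re - 2 * ε) ≤ ((n : ℝ) + 1) ^ (-(1 + ε)) := by
    apply Real.rpow_le_rpow_of_exponent_le
    · have : (0:ℝ) ≤ n := n.cast_nonneg
      linarith
    · linarith
  calc _ ≤ (1 + ‖s‖) * (2 * (1 + ‖s‖) ^ (2 * ε) * ((n : ℝ) + 1) ^ (-(1 + ε))) := by gcongr
    _ = _ := by ring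

lemma zTerm_summable {s : ℂ} (hs : 1 / 2 < s.re) : Summable (fun n => zTerm n s) := by
  by_cases h : 1 ≤ s.re
  · exact Summable.of_norm_bounded ((summable_shift_rpow (p := 1 + 1/4) (by norm_num)).mul_left _)
      (fun n => zTerm_bound' n (ε := 1/4) (by norm_num) (by norm_num) (by linarith))
  · push Not at h
    exact Summable.of_norm_bounded ((summable_shift_rpow (p := 1 + (1 - s.re)) (by linarith)).mul_left _)
      (fun n => zTerm_bound' n (ε := 1 - s.re) (by linarith) (by linarith) (by linarith))

lemma zTerm_differentiable (n : ℕ) : Differentiable ℂ (zTerm n) := by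
  have h1 : (((n + 1 : ℝ) : ℂ)) ≠ 0 := by
    exact_mod_cast Nat.succ_ne_zero n
  have h2 : (((n + 2 : ℝ) : ℂ)) ≠ 0 := by
    exact_mod_cast Nat.succ_ne_zero (n+1)
  intro s
  unfold zTerm
  have e1 : DifferentiableAt ℂ (fun s : ℂ => (((n + 1 : ℝ) : ℂ)) ^ (-s)) s :=
    (differentiableAt_id.neg).const_cpow (Or.inl h1)
  have e2 : DifferentiableAt ℂ (fun s : ℂ => (((n + 1 : ℝ) : ℂ)) ^ (1-s)) s :=
    (differentiableAt_id.const_sub 1).const_cpow (Or.inl h1)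
  have e3 : DifferentiableAt ℂ (fun s : ℂ => (((n + 2 : ℝ) : ℂ)) ^ (1-s)) s :=
    (differentiableAt_id.const_sub 1).const_cpow (Or.inl h2)
  exact (((differentiableAt_id.sub_const 1).mul e1).add e3).sub e2

lemma zP_bound {ε : ℝ} (h0 : 0 < ε) (h1 : ε < 1/2) :
    ∃ C : ℝ, 0 < C ∧ ∀ s : ℂ, 1 - ε ≤ s.re → ‖zP s‖ ≤ C * (1 + ‖s‖) ^ (1 + 2 * ε) := by
  have hS := summable_shift_rpow (p := 1 + ε) (by linarith)
  set S := ∑' n : ℕ, ((n : ℝ) + 1) ^ (-(1 + ε)) with hSdef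
  have hSn : 0 ≤ S := tsum_nonneg (fun n => by positivity)
  refine ⟨1 + 2 * S, by linarith, fun s hs => ?_⟩
  have hA : 1 ≤ (1 + ‖s‖) ^ (1 + 2 * ε) :=
    Real.one_le_rpow (by linarith [norm_nonneg s]) (by linarith)
  have : ‖∑' n, zTerm n s‖ ≤ 2 * (1 + ‖s‖) ^ (1 + 2 * ε) * S := by
    refine tsum_of_norm_bounded ((hS.hasSum).mul_left _) (fun n => zTerm_bound' n h0 h1 hs)
  have h2 := norm_add_le 1 (∑' n, zTerm n s)
  rw [zP]
  simp at h2
  nlinarith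

lemma zP_differentiableOn : DifferentiableOn ℂ zP {s : ℂ | 1 / 2 < s.re} := by
  intro s hs
  apply DifferentiableAt.differentiableWithinAt
  simp only [Set.mem_setOf_eq] at hs
  -- choose a nearby open set
  obtain ⟨ε, hε0, hε1, hε2⟩ : ∃ ε : ℝ, 0 < ε ∧ ε < 1/2 ∧ 1 - ε < s.re := by
    by_cases h : 1 ≤ s.re
    · exact ⟨1/4, by norm_num, by norm_num, by linarith⟩
    · push Not at h
      exact ⟨(1/2 + (1 - s.re))/2, by linarith, by linarith, by linarith⟩
  have hopen : IsOpen ({z : ℂ | 1 - ε < z.re} ∩ Metric.ball 0 (‖s‖ + 1)) :=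
    (isOpen_lt continuous_const Complex.continuous_re).inter Metric.isOpen_ball
  have hd : DifferentiableOn ℂ (fun z => ∑' n, zTerm n z)
      ({z : ℂ | 1 - ε < z.re} ∩ Metric.ball 0 (‖s‖ + 1)) := by
    refine Complex.differentiableOn_tsum_of_summable_norm
      (u := fun n : ℕ => 2 * (2 + ‖s‖) ^ (1 + 2 * ε) * ((n : ℝ) + 1) ^ (-(1 + ε)))
      ((summable_shift_rpow (by linarith)).mul_left _)
      (fun n => (zTerm_differentiable n).differentiableOn) hopen ?_
    rintro n z ⟨hz1, hz2⟩
    refine (zTerm_bound' n hε0 hε1 (le_of_lt hz1)).trans ?_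
    simp at hz2
    have : 1 + ‖z‖ ≤ 2 + ‖s‖ := by linarith
    gcongr
  have := (hd.differentiableAt (hopen.mem_nhds ⟨hε2, by simp⟩))
  exact this.const_add 1

lemma zP_eq {s : ℂ} (hs : 1 < s.re) : zP s = (s - 1) * riemannZeta s := by
  have h1 := zTerm_summable (s := s) (by linarith)
  have hz : Summable (fun n : ℕ => (((n + 1 : ℝ) : ℂ)) ^ (-s)) := by
    have := (summable_nat_add_iff 1).2 (Complex.summable_one_div_nat_cpow (p := s).2 hs)
    refine this.congr (fun n => ?_)
    rw [Complex.cpow_neg]; push_cast; simp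
  have hze : riemannZeta s = ∑' n : ℕ, (((n + 1 : ℝ) : ℂ)) ^ (-s) := by
    rw [zeta_eq_tsum_one_div_nat_add_one_cpow hs]
    refine tsum_congr (fun n => ?_)
    rw [Complex.cpow_neg]; push_cast; simp
  set g : ℕ → ℂ := fun n => (((n + 1 : ℝ) : ℂ)) ^ (1 - s) with hg
  have hd : Summable (fun n => g (n + 1) - g n) := by
    refine (h1.sub (hz.mul_left (s - 1))).congr (fun n => ?_)
    simp only [zTerm, hg]
    push_cast
    rw [show (n : ℂ) + 1 + 1 = n + 2 by ring]; ring
  have hg0 : Tendsto g atTop (𝓝 0) := by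
    rw [tendsto_zero_iff_norm_tendsto_zero]
    have : ∀ n : ℕ, ‖g n‖ = ((n : ℝ) + 1) ^ (-(s.re - 1)) := by
      intro n
      simp only [hg]
      rw [Complex.norm_cpow_eq_rpow_re_of_pos (by positivity)]; simp
    simp_rw [this]
    exact (tendsto_rpow_neg_atTop (by linarith)).comp
      (tendsto_atTop_add_const_right _ _ tendsto_natCast_atTop_atTop)
  have htel : ∑' n, (g (n + 1) - g n) = -1 := by
    refine tendsto_nhds_unique hd.hasSum.tendsto_sum_nat ?_
    simp_rw [Finset.sum_range_sub]
    have := hg0.sub_const (g 0)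
    simpa [hg] using this
  have : ∑' n, zTerm n s = (s - 1) * riemannZeta s + (-1) := by
    rw [hze, ← htel, ← tsum_mul_left, ← (hz.mul_left (s-1)).tsum_add hd]
    refine tsum_congr (fun n => ?_)
    simp only [zTerm, hg]
    push_cast
    rw [show (n : ℂ) + 1 + 1 = n + 2 by ring]; ring
  rw [zP, this]; ring

/-- The weight `(1 + ‖s‖) ^ ε`. -/
noncomputable def zq (ε : ℝ) (s : ℂ) : ℝ := (1 + ‖s‖) ^ ε

lemma one_le_zA (s : ℂ) : 1 ≤ 1 + ‖s‖ := by linarith [norm_nonneg s]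

lemma one_le_zq {ε : ℝ} (h : 0 < ε) (s : ℂ) : 1 ≤ zq ε s :=
  Real.one_le_rpow (one_le_zA s) h.le

lemma zq_le {ε : ℝ} (h : 0 < ε) (h1 : ε ≤ 1) {s z : ℂ} (hz : 1 + ‖z‖ ≤ 2 * (1 + ‖s‖)) :
    zq ε z ≤ 2 * zq ε s := by
  have hA := one_le_zA s
  calc zq ε z ≤ (2 * (1 + ‖s‖)) ^ ε :=
        Real.rpow_le_rpow (by linarith [one_le_zA z]) hz h.le
    _ = 2 ^ ε * zq ε s := by rw [Real.mul_rpow (by norm_num) (by linarith), zq]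
    _ ≤ 2 * zq ε s := by
        have : (2:ℝ) ^ ε ≤ 2 ^ (1:ℝ) := Real.rpow_le_rpow_of_exponent_le (by norm_num) h1
        rw [Real.rpow_one] at this
        have := one_le_zq h s
        nlinarith

lemma zq_mono {ε : ℝ} (h : 0 < ε) {s z : ℂ} (hz : ‖s‖ ≤ ‖z‖) : zq ε s ≤ zq ε z :=
  Real.rpow_le_rpow (by linarith [one_le_zA s]) (by linarith) h.le

lemma zP_bound_q {ε : ℝ} (h0 : 0 < ε) (h1 : ε < 1/2) :
    ∃ C : ℝ, 0 < C ∧ ∀ s : ℂ, 1 - ε ≤ s.re → ‖zP s‖ ≤ C * (1 + ‖s‖) * zq ε s ^ 2 := by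
  obtain ⟨C, hC, h⟩ := zP_bound h0 h1
  refine ⟨C, hC, fun s hs => (h s hs).trans (le_of_eq ?_)⟩
  have : 0 < 1 + ‖s‖ := by linarith [one_le_zA s]
  rw [Real.rpow_add this, Real.rpow_one, mul_comm 2 ε, Real.rpow_mul this.le, zq]
  norm_num; ring

lemma zP_differentiableAt {s : ℂ} (hs : 1 / 2 < s.re) : DifferentiableAt ℂ zP s :=
  zP_differentiableOn.differentiableAt
    ((isOpen_lt continuous_const Complex.continuous_re).mem_nhds hs)

lemma re_ge_of_closedBall {s z : ℂ} {r : ℝ} (h : ‖z - s‖ ≤ r) : s.re - r ≤ z.re := by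
  have := (Complex.abs_re_le_norm (z - s)).trans h
  rw [Complex.sub_re, abs_le] at this
  linarith

lemma zA_le {s z : ℂ} {r : ℝ} (h : ‖z - s‖ ≤ r) (hr : r ≤ 1) : 1 + ‖z‖ ≤ 2 * (1 + ‖s‖) := by
  have := norm_add_le (z - s) s
  rw [sub_add_cancel] at this
  linarith [norm_nonneg s]

lemma zP_deriv_bound {ε : ℝ} (h0 : 0 < ε) (h1 : ε < 1/8) :
    ∃ C : ℝ, 0 < C ∧ ∀ s : ℂ, 1 - ε ≤ s.re → ‖deriv zP s‖ ≤ C * (1 + ‖s‖) * zq ε s ^ 4 := by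
  obtain ⟨C, hC, h⟩ := zP_bound_q (ε := 2 * ε) (by linarith) (by linarith)
  refine ⟨C * 8 / ε, by positivity, fun s hs => ?_⟩
  have hd : DiffContOnCl ℂ zP (Metric.ball s ε) := by
    apply DifferentiableOn.diffContOnCl
    rw [closure_ball _ h0.ne']
    intro z hz
    rw [mem_closedBall_iff_norm] at hz
    exact (zP_differentiableAt (by linarith [re_ge_of_closedBall hz])).differentiableWithinAt
  have := Complex.norm_deriv_le_of_forall_mem_sphere_norm_le h0 hd
    (C := C * 8 * (1 + ‖s‖) * zq (2 * ε) s ^ 2) (fun z hz => by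
      rw [mem_sphere_iff_norm] at hz
      have hA := zA_le hz.le (by linarith)
      have hq := zq_le (ε := 2 * ε) (by linarith) (by linarith) hA
      have hq1 := one_le_zq (ε := 2 * ε) (by linarith) z
      have := one_le_zA z
      refine (h z (by linarith [re_ge_of_closedBall hz.le])).trans ?_
      calc C * (1 + ‖z‖) * zq (2 * ε) z ^ 2 ≤ C * (2 * (1 + ‖s‖)) * (2 * zq (2 * ε) s) ^ 2 := by
            gcongr
        _ = _ := by ring)
  refine this.trans (le_of_eq ?_)
  have e : zq (2 * ε) s = zq ε s ^ 2 := by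
    rw [zq, zq, mul_comm, Real.rpow_mul (by linarith [one_le_zA s])]; norm_num
  rw [e]; field_simp

lemma zP_one : zP 1 = 1 := by simp [zP, zTerm]

lemma zP_ne_zero {s : ℂ} (hs : 1 ≤ s.re) : zP s ≠ 0 := by
  by_cases h1 : s = 1
  · rw [h1, zP_one]; exact one_ne_zero
  have e : zP s = (s - 1) * riemannZeta s := by
    have hcl : s ∈ closure {z : ℂ | 1 < z.re} := by
      rw [Complex.closure_setOfPred_lt_re]; exact hs
    have c1 : ContinuousWithinAt zP {z : ℂ | 1 < z.re} s :=
      (zP_differentiableAt (by linarith)).continuousAt.continuousWithinAt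
    have c2 : ContinuousWithinAt (fun s => (s - 1) * riemannZeta s) {z : ℂ | 1 < z.re} s :=
      ((continuous_id.sub continuous_const).continuousAt.mul
        (differentiableAt_riemannZeta h1).continuousAt).continuousWithinAt
    have := mem_closure_iff_nhdsWithin_neBot.1 hcl
    refine tendsto_nhds_unique c1 (c2.congr' ?_)
    filter_upwards [self_mem_nhdsWithin] with z hz
    exact (zP_eq hz).symm
  rw [e]
  exact mul_ne_zero (sub_ne_zero.2 h1) (riemannZeta_ne_zero_of_one_le_re hs)

lemma zP_lower_compact : ∃ c : ℝ, 0 < c ∧ ∀ s : ℂ, 1 ≤ s.re → s.re ≤ 2 → |s.im| ≤ 1 → c ≤ ‖zP s‖ := by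
  have hK : IsCompact (Set.Icc (1:ℝ) 2 ×ℂ Set.Icc (-1:ℝ) 1) := isCompact_Icc.reProdIm isCompact_Icc
  have hc : ContinuousOn (fun s => ‖zP s‖) (Set.Icc (1:ℝ) 2 ×ℂ Set.Icc (-1:ℝ) 1) := by
    intro s hs
    have h1 := hs.1.1
    exact (zP_differentiableAt (by
      have h2 : (1:ℝ) ≤ s.re := h1
      linarith)).continuousAt.norm.continuousWithinAt
  obtain ⟨z, hz, hm⟩ := hK.exists_isMinOn ⟨1, by simp [Complex.mem_reProdIm]⟩ hc
  refine ⟨‖zP z‖, norm_pos_iff.2 (zP_ne_zero hz.1.1), fun s h1 h2 h3 => hm ?_⟩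
  exact ⟨⟨h1, h2⟩, abs_le.1 h3⟩

lemma zeta_341 {x : ℝ} (hx : 0 < x) (y : ℝ) :
    1 ≤ ‖riemannZeta (1 + x)‖ ^ 3 * ‖riemannZeta (1 + x + Complex.I * y)‖ ^ 4 *
      ‖riemannZeta (1 + x + 2 * Complex.I * y)‖ := by
  have := DirichletCharacter.norm_LFunction_product_ge_one (N := 1) 1 hx y
  simpa [DirichletCharacter.LFunctionTrivChar] using this

lemma zP_341 {ε : ℝ} (h0 : 0 < ε) (h1 : ε < 1/2) : ∃ c : ℝ, 0 < c ∧ ∀ (x y : ℝ), 0 < x → x ≤ 1 →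
    1 ≤ |y| → c * x ^ 3 * (1 + ‖(1 + x + Complex.I * y : ℂ)‖) ^ 4 ≤
      ‖zP (1 + x + Complex.I * y)‖ ^ 4 * zq ε (1 + x + Complex.I * y) ^ 2 := by
  obtain ⟨C, hC, h⟩ := zP_bound_q h0 h1
  have hC0 : 0 < (C * 3 * zq ε 2 ^ 2) ^ 3 := by
    have := one_le_zq h0 2
    positivity
  refine ⟨1 / ((C * 3 * zq ε 2 ^ 2) ^ 3 * 256 * (C * 8 * 4)), by positivity, fun x y hx hx1 hy => ?_⟩
  set s : ℂ := 1 + x + Complex.I * y with hs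
  set s2 : ℂ := 1 + x + 2 * Complex.I * y with hs2
  have re1 : s.re = 1 + x := by simp [hs]
  have im1 : s.im = y := by simp [hs]
  have re2 : s2.re = 1 + x := by simp [hs2]
  have im2 : s2.im = 2 * y := by simp [hs2]
  have hx' : (1 + x : ℂ).re = 1 + x := by simp
  have p := zeta_341 hx y
  rw [← hs, ← hs2] at p
  have e0 := zP_eq (s := 1 + x) (by simpa using hx)
  have e1 := zP_eq (s := s) (by linarith)
  have e2 := zP_eq (s := s2) (by linarith)
  have n0 : ‖zP (1 + x)‖ = x * ‖riemannZeta (1 + x)‖ := by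
    rw [e0, norm_mul]; simp [abs_of_pos hx]
  have n1 : ‖zP s‖ = ‖s - 1‖ * ‖riemannZeta s‖ := by rw [e1, norm_mul]
  have n2 : ‖zP s2‖ = ‖s2 - 1‖ * ‖riemannZeta s2‖ := by rw [e2, norm_mul]
  have hA : 1 + ‖s‖ ≤ 4 * |y| := by
    have := Complex.norm_le_abs_re_add_abs_im s
    rw [re1, im1, abs_of_pos (by linarith)] at this
    linarith
  have g1 : |y| ≤ ‖s - 1‖ := by
    have := Complex.abs_im_le_norm (s - 1)
    simpa [im1] using this
  have g2 : |y| ≤ ‖s2 - 1‖ := by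
    have := Complex.abs_im_le_norm (s2 - 1)
    rw [Complex.sub_im, im2] at this
    simp [abs_mul] at this
    linarith [abs_nonneg y]
  have hA2 : 1 + ‖s2‖ ≤ 2 * (1 + ‖s‖) := by
    have e : s2 = s + Complex.I * y := by rw [hs, hs2]; ring
    have h3 : ‖Complex.I * (y:ℂ)‖ ≤ ‖s‖ := by
      have := Complex.abs_im_le_norm s
      rw [im1] at this; simpa using this
    have := norm_add_le s (Complex.I * y)
    rw [← e] at this; linarith
  have hq2 := zq_le h0 (by linarith) hA2
  have hq2' := one_le_zq h0 s2
  have hq1 := one_le_zq h0 s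
  have A1 := one_le_zA s
  have A2 := one_le_zA s2
  have b2 : ‖zP s2‖ ≤ C * 8 * (1 + ‖s‖) * zq ε s ^ 2 := by
    refine (h s2 (by linarith)).trans ?_
    calc _ ≤ C * (2 * (1 + ‖s‖)) * (2 * zq ε s) ^ 2 := by gcongr
      _ = _ := by ring
  have b0 : ‖zP (1 + x)‖ ≤ C * 3 * zq ε 2 ^ 2 := by
    have hn : ‖(1 + x : ℂ)‖ = 1 + x := by
      have : (1 + x : ℂ) = ((1 + x : ℝ) : ℂ) := by push_cast; ring
      rw [this, Complex.norm_real, Real.norm_eq_abs, abs_of_pos (by linarith)]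
    refine (h _ (by rw [hx']; linarith)).trans ?_
    have : zq ε (1 + x) ≤ zq ε 2 := zq_mono h0 (by rw [hn]; simp; linarith)
    have q0 := one_le_zq h0 (1 + x)
    rw [hn]
    gcongr; linarith
  -- combine
  have hy0 : 0 < |y| := by linarith
  have key : x ^ 3 * ‖s - 1‖ ^ 4 * ‖s2 - 1‖ ≤ ‖zP (1 + x)‖ ^ 3 * ‖zP s‖ ^ 4 * ‖zP s2‖ := by
    rw [n0, n1, n2]
    have hpos : 0 ≤ x ^ 3 * ‖s - 1‖ ^ 4 * ‖s2 - 1‖ := by positivity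
    have := mul_le_mul_of_nonneg_left p hpos
    nlinarith
  have lo : x ^ 3 * ((1 + ‖s‖) / 4) ^ 4 * ((1 + ‖s‖) / 4) ≤ x ^ 3 * ‖s - 1‖ ^ 4 * ‖s2 - 1‖ := by
    have u1 : (1 + ‖s‖) / 4 ≤ ‖s - 1‖ := by linarith
    have u2 : (1 + ‖s‖) / 4 ≤ ‖s2 - 1‖ := by linarith
    gcongr
  have hi : ‖zP (1 + x)‖ ^ 3 * ‖zP s‖ ^ 4 * ‖zP s2‖ ≤
      (C * 3 * zq ε 2 ^ 2) ^ 3 * ‖zP s‖ ^ 4 * (C * 8 * (1 + ‖s‖) * zq ε s ^ 2) := by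
    gcongr
  have fin := (lo.trans key).trans hi
  set D := (C * 3 * zq ε 2 ^ 2) ^ 3
  have fin2 : (1 + ‖s‖) * (x ^ 3 * (1 + ‖s‖) ^ 4) ≤
      (1 + ‖s‖) * ((D * 256 * (C * 8 * 4)) * (‖zP s‖ ^ 4 * zq ε s ^ 2)) := by
    nlinarith
  have fin3 := le_of_mul_le_mul_left fin2 (by linarith)
  rw [mul_assoc, one_div, inv_mul_le_iff₀ (by positivity)]
  exact fin3

lemma zP_lower {ε : ℝ} (h0 : 0 < ε) (h1 : ε < 1/8) : ∃ c : ℝ, 0 < c ∧ ∀ s : ℂ, 1 < s.re → s.re ≤ 2 →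
    c * (1 + ‖s‖) ≤ ‖zP s‖ * zq ε s ^ 16 := by
  obtain ⟨c0, hc0, hcomp⟩ := zP_lower_compact
  obtain ⟨c1, hc1, h341⟩ := zP_341 h0 (by linarith)
  obtain ⟨C2, hC2, hder⟩ := zP_deriv_bound h0 h1
  -- fourth root of c1, at most 1
  obtain ⟨c2, hc2, hc2'⟩ : ∃ c2 : ℝ, 0 < c2 ∧ c2 ^ 4 ≤ c1 := by
    refine ⟨min c1 1, by positivity, ?_⟩
    have l1 : min c1 1 ≤ 1 := min_le_right _ _
    have l2 : min c1 1 ≤ c1 := min_le_left _ _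
    have l3 : 0 < min c1 1 := by positivity
    calc (min c1 1) ^ 4 ≤ (min c1 1) ^ 1 := pow_le_pow_of_le_one l3.le l1 (by norm_num)
      _ ≤ c1 := by simpa using l2
  -- base bound
  have base : ∀ (X y : ℝ), 0 < X → X ≤ 1 → 1 ≤ |y| →
      c2 * X ^ 3 * (1 + ‖(1 + (X ^ 4 : ℝ) + Complex.I * y : ℂ)‖) ≤
      ‖zP (1 + (X ^ 4 : ℝ) + Complex.I * y)‖ * zq ε (1 + (X ^ 4 : ℝ) + Complex.I * y) := by
    intro X y hX hX1 hy
    have := h341 (X ^ 4) y (by positivity) (pow_le_one₀ hX.le hX1) hy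
    set s : ℂ := 1 + (X ^ 4 : ℝ) + Complex.I * y
    have A1 := one_le_zA s
    have q1 := one_le_zq h0 s
    refine le_of_pow_le_pow_left₀ (n := 4) (by norm_num) (by positivity) ?_
    calc (c2 * X ^ 3 * (1 + ‖s‖)) ^ 4 = c2 ^ 4 * (X ^ 4) ^ 3 * (1 + ‖s‖) ^ 4 := by ring
      _ ≤ c1 * (X ^ 4) ^ 3 * (1 + ‖s‖) ^ 4 := by gcongr
      _ ≤ _ := this
      _ ≤ ‖zP s‖ ^ 4 * zq ε s ^ 4 := by gcongr; norm_num
      _ = _ := by ring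
  set a : ℝ := min 1 (c2 / (128 * C2)) with ha
  have ha0 : 0 < a := by positivity
  have ha1 : a ≤ 1 := min_le_left _ _
  have ha2 : a * (128 * C2) ≤ c2 := by
    rw [← le_div_iff₀ (by positivity)]; exact min_le_right _ _
  refine ⟨min (c0 / 4) (c2 / 4 * a ^ 3), by positivity, fun s hs1 hs2 => ?_⟩
  have A1 := one_le_zA s
  have q1 := one_le_zq h0 s
  by_cases him : |s.im| ≤ 1
  · have b := hcomp s hs1.le hs2 him
    have hA : 1 + ‖s‖ ≤ 4 := by
      have := Complex.norm_le_abs_re_add_abs_im s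
      rw [abs_of_pos (by linarith)] at this
      linarith
    have q16 : 1 ≤ zq ε s ^ 16 := one_le_pow₀ q1
    calc _ ≤ c0 / 4 * 4 := by gcongr; exact min_le_left _ _
      _ = c0 * 1 := by ring
      _ ≤ _ := by gcongr
  push Not at him
  suffices hh : c2 / 4 * a ^ 3 * (1 + ‖s‖) ≤ ‖zP s‖ * zq ε s ^ 16 by
    refine le_trans ?_ hh
    gcongr; exact min_le_right _ _
  set q := zq ε s with hq
  have hq0 : 0 < q := by linarith
  set X : ℝ := a / q ^ 5 with hX
  have hX0 : 0 < X := by positivity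
  have hX1 : X ≤ 1 := by
    rw [hX, div_le_one (by positivity)]
    exact ha1.trans (one_le_pow₀ q1)
  have hX4 : X ^ 4 ≤ 1 := pow_le_one₀ hX0.le hX1
  have hXq : X * q ^ 5 = a := by rw [hX]; field_simp
  have hX3 : X ^ 3 * q ^ 15 = a ^ 3 := by rw [← hXq]; ring
  rcases le_total (1 + X ^ 4) s.re with hr | hr
  · -- write s.re = 1 + Y^4
    set Y := (s.re - 1) ^ (1/4 : ℝ) with hY
    have hY4 : Y ^ 4 = s.re - 1 := by
      rw [hY, ← Real.rpow_natCast, ← Real.rpow_mul (by linarith)]; norm_num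
    have hY0 : 0 < Y := Real.rpow_pos_of_pos (by linarith) _
    have hY1 : Y ≤ 1 := Real.rpow_le_one (by linarith) (by linarith) (by norm_num)
    have hXY : X ≤ Y := le_of_pow_le_pow_left₀ (n := 4) (by norm_num) hY0.le (by linarith)
    have es : (1 + (Y ^ 4 : ℝ) + Complex.I * s.im : ℂ) = s := by
      rw [hY4]; apply Complex.ext <;> simp
    have b := base Y s.im hY0 hY1 him.le
    rw [es] at b
    calc c2 / 4 * a ^ 3 * (1 + ‖s‖) ≤ c2 * a ^ 3 * (1 + ‖s‖) := by
          gcongr; linarith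
      _ = c2 * X ^ 3 * (1 + ‖s‖) * q ^ 15 := by rw [← hX3]; ring
      _ ≤ c2 * Y ^ 3 * (1 + ‖s‖) * q ^ 15 := by gcongr
      _ ≤ (‖zP s‖ * q) * q ^ 15 := by gcongr
      _ = _ := by ring
  · set s' : ℂ := 1 + (X ^ 4 : ℝ) + Complex.I * s.im with hs'
    have re' : s'.re = 1 + X ^ 4 := by simp [hs', ← Complex.ofReal_pow]
    have im' : s'.im = s.im := by simp [hs', ← Complex.ofReal_pow]
    have b := base X s.im hX0 hX1 him.le
    rw [← hs'] at b
    have hn : ‖s‖ ≤ ‖s'‖ := by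
      rw [Complex.norm_def, Complex.norm_def]
      apply Real.sqrt_le_sqrt
      rw [Complex.normSq_apply, Complex.normSq_apply, re', im']
      nlinarith
    have hdist : ‖s' - s‖ ≤ X ^ 4 := by
      have := Complex.norm_le_abs_re_add_abs_im (s' - s)
      rw [Complex.sub_re, Complex.sub_im, re', im', sub_self, abs_zero, add_zero,
        abs_of_nonneg (by linarith)] at this
      linarith
    have hA' := zA_le hdist hX4
    have hq' := zq_le h0 (by linarith) hA'
    have mv : ‖zP s' - zP s‖ ≤ (C2 * (2 * (1 + ‖s‖)) * (2 * q) ^ 4) * ‖s' - s‖ := by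
      refine (convex_segment s s').norm_image_sub_le_of_norm_deriv_le (f := zP) ?_ ?_
        (left_mem_segment ℝ s s') (right_mem_segment ℝ s s')
      · intro z hz
        have hzn := norm_sub_le_of_mem_segment hz
        apply zP_differentiableAt
        have hre : (1:ℝ) ≤ z.re := by
          have : segment ℝ s s' ⊆ {z : ℂ | 1 ≤ z.re} :=
            (convex_halfSpace_re_ge 1).segment_subset hs1.le (by
              show 1 ≤ s'.re
              rw [re']; linarith [pow_pos hX0 4])
          exact this hz
        linarith
      · intro z hz
        have hzn : ‖z - s‖ ≤ X ^ 4 := (norm_sub_le_of_mem_segment hz).trans hdist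
        have hre : (1:ℝ) ≤ z.re := by
          have : segment ℝ s s' ⊆ {z : ℂ | 1 ≤ z.re} :=
            (convex_halfSpace_re_ge 1).segment_subset hs1.le (by
              show 1 ≤ s'.re
              rw [re']; linarith [pow_pos hX0 4])
          exact this hz
        have hAz := zA_le hzn hX4
        have hqz := zq_le h0 (by linarith) hAz
        have := one_le_zq h0 z
        have := one_le_zA z
        refine (hder z (by linarith)).trans ?_
        gcongr
    have mv2 : ‖zP s' - zP s‖ ≤ 32 * C2 * (1 + ‖s‖) * q ^ 4 * X ^ 4 := by
      refine mv.trans ?_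
      calc _ ≤ (C2 * (2 * (1 + ‖s‖)) * (2 * q) ^ 4) * X ^ 4 := by gcongr
        _ = _ := by ring
    have tri : ‖zP s'‖ ≤ ‖zP s‖ + ‖zP s' - zP s‖ := by
      have := norm_add_le (zP s) (zP s' - zP s)
      simpa using this
    have lo : c2 * X ^ 3 * (1 + ‖s‖) ≤ ‖zP s'‖ * (2 * q) := by
      calc _ ≤ c2 * X ^ 3 * (1 + ‖s'‖) := by gcongr
        _ ≤ _ := b
        _ ≤ _ := by gcongr
    have hsmall : 32 * C2 * (1 + ‖s‖) * q ^ 4 * X ^ 4 * (2 * q) ≤ c2 / 2 * X ^ 3 * (1 + ‖s‖) := by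
      calc _ = (X * q ^ 5) * (128 * C2) / 2 * (X ^ 3 * (1 + ‖s‖)) := by ring
        _ = a * (128 * C2) / 2 * (X ^ 3 * (1 + ‖s‖)) := by rw [hXq]
        _ ≤ c2 / 2 * (X ^ 3 * (1 + ‖s‖)) := by gcongr
        _ = _ := by ring
    have up : ‖zP s'‖ * (2 * q) ≤ ‖zP s‖ * (2 * q) + 32 * C2 * (1 + ‖s‖) * q ^ 4 * X ^ 4 * (2 * q) := by
      rw [← add_mul]
      exact mul_le_mul_of_nonneg_right (tri.trans (by linarith)) (by positivity)
    have fin : c2 / 4 * X ^ 3 * (1 + ‖s‖) ≤ ‖zP s‖ * q := by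
      linarith
    calc c2 / 4 * a ^ 3 * (1 + ‖s‖) = c2 / 4 * X ^ 3 * (1 + ‖s‖) * q ^ 15 := by rw [← hX3]; ring
      _ ≤ (‖zP s‖ * q) * q ^ 15 := by gcongr
      _ = _ := by ring

/-- The Laplace transform of the error term in the prime number theorem. -/
noncomputable def zG (s : ℂ) : ℂ := -(deriv zP s / zP s + 1) / s

lemma zG_differentiableAt {s : ℂ} (hs : 1 / 2 < s.re) (h : zP s ≠ 0) : DifferentiableAt ℂ zG s := by
  have hs0 : s ≠ 0 := by
    intro h; rw [h] at hs; norm_num at hs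
  have hd : DifferentiableAt ℂ (deriv zP) s :=
    (zP_differentiableOn.deriv (isOpen_lt continuous_const Complex.continuous_re)).differentiableAt
      ((isOpen_lt continuous_const Complex.continuous_re).mem_nhds hs)
  have := (((hd.div (zP_differentiableAt hs) h).add_const 1).neg).div differentiableAt_id hs0
  exact this

lemma zG_bound (k : ℕ) : ∃ C : ℝ, ∀ s : ℂ, 1 < s.re → s.re ≤ 2 → ‖iteratedDeriv k zG s‖ ≤ C := by
  set ε : ℝ := 1 / (20 * (k + 1)) with hε
  have hk : (0:ℝ) ≤ k := k.cast_nonneg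
  have h0 : 0 < ε := by positivity
  have h1 : ε < 1 / 8 := by
    rw [hε]
    apply one_div_lt_one_div_of_lt <;> linarith
  obtain ⟨c, hc, hlow⟩ := zP_lower h0 h1
  obtain ⟨C2, hC2, hder⟩ := zP_deriv_bound h0 h1
  set c3 : ℝ := min ε (c / (64 * C2)) with hc3
  have hc30 : 0 < c3 := by positivity
  have hc31 : c3 ≤ ε := min_le_left _ _
  have hc32 : c3 * (64 * C2) ≤ c := by
    rw [← le_div_iff₀ (by positivity)]; exact min_le_right _ _
  refine ⟨k.factorial * ((C2 * 64 / c + 1) * 4) / c3 ^ k, fun s hs1 hs2 => ?_⟩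
  have A1 := one_le_zA s
  have q1 := one_le_zq h0 s
  have hL := hlow s hs1 hs2
  set A := 1 + ‖s‖ with hA
  set q := zq ε s with hq
  have hq0 : 0 < q := by linarith
  have hA0 : 0 < A := by linarith
  set r := c3 / q ^ 20 with hr
  have hr0 : 0 < r := by positivity
  have hrq : r * q ^ 20 = c3 := by rw [hr]; field_simp
  have hr1 : r ≤ ε := by
    rw [hr, div_le_iff₀ (by positivity)]
    have : 1 ≤ q ^ 20 := one_le_pow₀ q1
    nlinarith
  have hsn : 1 ≤ ‖s‖ := by
    have := Complex.re_le_norm s; linarith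
  -- on the closed ball
  have hball : ∀ z : ℂ, ‖z - s‖ ≤ r → 1 - ε ≤ z.re ∧ ‖deriv zP z‖ ≤ C2 * 32 * A * q ^ 4 ∧ A / 4 ≤ ‖z‖ := by
    intro z hz
    have hre := re_ge_of_closedBall hz
    have hAz := zA_le hz (by linarith)
    have hqz := zq_le h0 (by linarith) hAz
    have := one_le_zq h0 z
    have := one_le_zA z
    refine ⟨by linarith, ?_, ?_⟩
    · refine (hder z (by linarith)).trans ?_
      calc _ ≤ C2 * (2 * A) * (2 * q) ^ 4 := by gcongr
        _ = _ := by ring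
    · have := norm_sub_norm_le s z
      rw [norm_sub_rev] at this
      linarith
  have hlz : ∀ z : ℂ, ‖z - s‖ ≤ r → c / 2 * A ≤ ‖zP z‖ * q ^ 16 := by
    intro z hz
    have mv : ‖zP z - zP s‖ ≤ (C2 * 32 * A * q ^ 4) * ‖z - s‖ := by
      refine (convex_closedBall s r).norm_image_sub_le_of_norm_deriv_le (f := zP) ?_ ?_
        (Metric.mem_closedBall_self hr0.le) (mem_closedBall_iff_norm.2 hz)
      · intro w hw
        rw [mem_closedBall_iff_norm] at hw
        exact zP_differentiableAt (by linarith [(hball w hw).1])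
      · intro w hw
        rw [mem_closedBall_iff_norm] at hw
        exact (hball w hw).2.1
    have mv2 : ‖zP z - zP s‖ ≤ (C2 * 32 * A * q ^ 4) * r := mv.trans (by gcongr)
    have tri : ‖zP s‖ ≤ ‖zP z‖ + ‖zP z - zP s‖ := by
      have := norm_sub_le (zP z) (zP z - zP s)
      simpa using this
    have t2 : ‖zP s‖ * q ^ 16 ≤ ‖zP z‖ * q ^ 16 + (C2 * 32 * A * q ^ 4) * r * q ^ 16 := by
      rw [← add_mul]
      exact mul_le_mul_of_nonneg_right (by linarith) (by positivity)
    have t3 : (C2 * 32 * A * q ^ 4) * r * q ^ 16 ≤ c / 2 * A := by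
      calc _ = (r * q ^ 20) * (64 * C2) / 2 * A := by ring
        _ = c3 * (64 * C2) / 2 * A := by rw [hrq]
        _ ≤ _ := by gcongr
    linarith
  have hne : ∀ z : ℂ, ‖z - s‖ ≤ r → zP z ≠ 0 := by
    intro z hz h
    have := hlz z hz
    rw [h, norm_zero, zero_mul] at this
    have : 0 < c / 2 * A := by positivity
    linarith
  have hd : DiffContOnCl ℂ zG (Metric.ball s r) := by
    apply DifferentiableOn.diffContOnCl
    rw [closure_ball _ hr0.ne']
    intro z hz
    rw [mem_closedBall_iff_norm] at hz
    exact (zG_differentiableAt (by linarith [(hball z hz).1]) (hne z hz)).differentiableWithinAt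
  have hG : ∀ z ∈ Metric.sphere s r, ‖zG z‖ ≤ (C2 * 64 / c + 1) * 4 * (q ^ 20 / A) := by
    intro z hz
    rw [mem_sphere_iff_norm] at hz
    have hz := hz.le
    obtain ⟨b1, b2, b3⟩ := hball z hz
    have b4 := hlz z hz
    have hP : 0 < ‖zP z‖ := norm_pos_iff.2 (hne z hz)
    have hq20 : 1 ≤ q ^ 20 := one_le_pow₀ q1
    have d1 : ‖deriv zP z / zP z‖ ≤ C2 * 64 / c * q ^ 20 := by
      rw [norm_div, div_le_iff₀ hP]
      calc _ ≤ C2 * 32 * A * q ^ 4 := b2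
        _ = C2 * 64 / c * q ^ 4 * (c / 2 * A) := by field_simp; norm_num
        _ ≤ C2 * 64 / c * q ^ 4 * (‖zP z‖ * q ^ 16) := by gcongr
        _ = _ := by ring
    have d2 : ‖deriv zP z / zP z + 1‖ ≤ (C2 * 64 / c + 1) * q ^ 20 := by
      have := norm_add_le (deriv zP z / zP z) 1
      rw [norm_one] at this
      linarith
    rw [zG, norm_div, norm_neg]
    calc _ ≤ ((C2 * 64 / c + 1) * q ^ 20) / (A / 4) := by gcongr
      _ = _ := by field_simp
  have := Complex.norm_iteratedDeriv_le_of_forall_mem_sphere_norm_le k hr0 hd hG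
  refine this.trans (le_of_eq ?_)
  have hqA : q ^ (20 * (k + 1)) = A := by
    rw [hq, zq, ← Real.rpow_natCast, ← Real.rpow_mul hA0.le, hε]
    push_cast
    rw [one_div_mul_cancel (by positivity), Real.rpow_one]
  rw [hr, ← hqA, div_pow]
  field_simp
  ring

/-- The error term in the prime number theorem, truncated to `x > 1`. -/
noncomputable def pE (x : ℝ) : ℝ := (Set.Ioi (1:ℝ)).indicator (fun x => Chebyshev.psi x - x) x

/-- The error term multiplied by a power of the logarithm. -/
noncomputable def pF (k : ℕ) (x : ℝ) : ℂ := ((Real.log x ^ k * pE x : ℝ) : ℂ)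

lemma pE_measurable : Measurable pE :=
  (Chebyshev.psi_mono.measurable.sub measurable_id).indicator measurableSet_Ioi

lemma pF_measurable (k : ℕ) : Measurable (pF k) :=
  Complex.measurable_ofReal.comp ((Real.measurable_log.pow_const k).mul pE_measurable)

lemma pE_abs_le' (x : ℝ) : |pE x| ≤ (Real.log 4 + 5) * |x| := by
  have hl : 0 ≤ Real.log 4 := Real.log_nonneg (by norm_num)
  rw [pE, Set.indicator_apply]
  split_ifs with h
  · have hx : (0:ℝ) ≤ x := by have h : 1 < x := h; linarith
    have h1 := Chebyshev.psi_le_const_mul_self hx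
    have h2 := Chebyshev.psi_nonneg x
    rw [abs_of_nonneg hx, abs_le]; constructor <;> nlinarith
  · simp; positivity

lemma pE_abs_le {x : ℝ} (hx : 0 ≤ x) : |pE x| ≤ (Real.log 4 + 5) * x := by
  have := pE_abs_le' x
  rwa [abs_of_nonneg hx] at this

lemma pF_locallyIntegrable (k : ℕ) : MeasureTheory.LocallyIntegrableOn (pF k) (Set.Ioi 0) := by
  have h : MeasureTheory.LocallyIntegrableOn (fun x : ℝ => (Real.log x ^ k) * ((Real.log 4 + 5) * x))
      (Set.Ioi 0) := by
    apply ContinuousOn.locallyIntegrableOn _ measurableSet_Ioi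
    intro x hx
    exact (((Real.continuousAt_log (ne_of_gt hx)).pow k).mul
      (continuous_const.mul continuous_id).continuousAt).continuousWithinAt
  intro x hx
  obtain ⟨u, hu, hi⟩ := h x hx
  refine ⟨u, hu, ?_⟩
  refine MeasureTheory.Integrable.mono' hi.norm
    (pF_measurable k).aestronglyMeasurable ?_
  refine Filter.Eventually.of_forall (fun y => ?_)
  have hl : 0 ≤ Real.log 4 := Real.log_nonneg (by norm_num)
  have := pE_abs_le' y
  rw [pF, Complex.norm_real, norm_mul, norm_mul]
  gcongr
  rw [Real.norm_eq_abs, Real.norm_eq_abs, abs_mul, abs_of_nonneg (by linarith : 0 ≤ Real.log 4 + 5)]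
  exact this

lemma pF_top (k : ℕ) {a : ℝ} (ha : a < -1) : pF k =O[atTop] (fun x : ℝ => x ^ (-a)) := by
  have h1 : (fun x => Real.log x ^ k) =O[atTop] (fun x : ℝ => x ^ (-a - 1)) := by
    have := (isLittleO_log_rpow_rpow_atTop (k : ℝ) (s := -a - 1) (by linarith)).isBigO
    simpa using this
  have h2 : pE =O[atTop] (fun x : ℝ => x) := by
    refine Asymptotics.IsBigO.of_bound (Real.log 4 + 5) ?_
    filter_upwards [eventually_ge_atTop 0] with x hx
    rw [Real.norm_eq_abs, Real.norm_eq_abs, abs_of_nonneg hx]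
    exact pE_abs_le hx
  have h3 := h1.mul h2
  have h4 : (fun x : ℝ => x ^ (-a - 1) * x) =ᶠ[atTop] (fun x : ℝ => x ^ (-a)) := by
    filter_upwards [eventually_gt_atTop 0] with x hx
    rw [← Real.rpow_add_one hx.ne']; congr 1; ring
  refine Asymptotics.IsBigO.trans ?_ (h3.trans_eventuallyEq h4)
  refine Asymptotics.isBigO_of_le _ (fun x => ?_)
  rw [pF, Complex.norm_real]

lemma pF_bot (k : ℕ) (b : ℝ) : pF k =O[𝓝[>] 0] (fun x : ℝ => x ^ (-b)) := by
  have : pF k =ᶠ[𝓝[>] 0] (fun _ => 0) := by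
    filter_upwards [nhdsWithin_le_nhds (Iio_mem_nhds (zero_lt_one' ℝ))] with x hx
    have hx : x < 1 := hx
    simp [pF, pE, hx.le]
  exact this.trans_isBigO (Asymptotics.isBigO_zero _ _)

lemma pF_mellin (k : ℕ) {w : ℂ} (hw : w.re < -1) :
    MellinConvergent (pF k) w ∧ HasDerivAt (mellin (pF k)) (mellin (pF (k+1)) w) w := by
  have hm : w.re < (w.re - 1) / 2 := by linarith
  have ha : (w.re - 1) / 2 < -1 := by linarith
  refine ⟨mellinConvergent_of_isBigO_rpow (pF_locallyIntegrable k) (pF_top k ha) hm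
    (pF_bot k (w.re - 1)) (by linarith), ?_⟩
  have := (mellin_hasDerivAt_of_isBigO_rpow (pF_locallyIntegrable k) (pF_top k ha) hm
    (pF_bot k (w.re - 1)) (by linarith)).2
  have e : (fun t => Real.log t • pF k t) = pF (k+1) := by
    ext t; simp [pF, pow_succ]; ring
  rw [e] at this
  exact this

lemma isOpen_reN : IsOpen {w : ℂ | w.re < -1} := isOpen_lt Complex.continuous_re continuous_const

lemma pF_iterated (k : ℕ) : ∀ w : ℂ, w.re < -1 → iteratedDeriv k (mellin (pF 0)) w = mellin (pF k) w := by
  induction k with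
  | zero => intro w _; simp
  | succ k ih =>
    intro w hw
    rw [iteratedDeriv_succ]
    have : iteratedDeriv k (mellin (pF 0)) =ᶠ[𝓝 w] mellin (pF k) := by
      filter_upwards [isOpen_reN.mem_nhds hw] with z hz using ih z hz
    rw [this.deriv_eq]
    exact (pF_mellin k hw).2.deriv

lemma psi_integrable {s : ℂ} (hs : 1 < s.re) :
    MeasureTheory.IntegrableOn (fun t : ℝ => (Chebyshev.psi t : ℂ) * (t : ℂ) ^ (-(s + 1))) (Set.Ioi 1) := by
  have h := ((integrableOn_Ioi_rpow_of_lt (a := -s.re) (by linarith) (zero_lt_one' ℝ)).const_mul (Real.log 4 + 4))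
  refine MeasureTheory.Integrable.mono' h ?_ ?_
  · refine (Measurable.mul ?_ ?_).aestronglyMeasurable
    · exact Complex.measurable_ofReal.comp Chebyshev.psi_mono.measurable
    · exact Complex.measurable_ofReal.pow_const _
  · rw [MeasureTheory.ae_restrict_iff' measurableSet_Ioi]
    refine Filter.Eventually.of_forall (fun t ht => ?_)
    have ht : 1 < t := ht
    have ht0 : 0 < t := by linarith
    rw [norm_mul, Complex.norm_real, Complex.norm_cpow_eq_rpow_re_of_pos ht0, Real.norm_eq_abs,
      abs_of_nonneg (Chebyshev.psi_nonneg t)]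
    have e : (-(s + 1)).re = -s.re - 1 := by simp; ring
    rw [e, Real.rpow_sub_one ht0.ne']
    have := Chebyshev.psi_le_const_mul_self ht0.le
    rw [← mul_div_assoc, div_le_iff₀ ht0]
    have hp : 0 ≤ t ^ (-s.re) := by positivity
    nlinarith

lemma mellin_pF_zero {s : ℂ} (hs : 1 < s.re) : mellin (pF 0) (-s) = zG s := by
  have hs0 : s ≠ 0 := by intro h; rw [h] at hs; norm_num at hs
  have hs1 : s - 1 ≠ 0 := by
    intro h; rw [sub_eq_zero] at h; rw [h] at hs; norm_num at hs
  have hz : riemannZeta s ≠ 0 := riemannZeta_ne_zero_of_one_le_re hs.le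
  have h1 : LSeries (fun n => (ArithmeticFunction.vonMangoldt n : ℂ)) s = s * ∫ t in Set.Ioi (1 : ℝ),
      (Chebyshev.psi t : ℂ) * (t : ℂ) ^ (-(s + 1)) := by
    have := LSeries_eq_mul_integral_of_nonneg (fun n => ArithmeticFunction.vonMangoldt n)
      zero_le_one hs ?_ (fun n => ArithmeticFunction.vonMangoldt_nonneg)
    · rw [this]
      congr 2
      ext t
      congr 1
      rw [Chebyshev.psi]
      push_cast
      rfl
    · refine Asymptotics.IsBigO.of_bound (Real.log 4 + 4) (Filter.Eventually.of_forall fun n => ?_)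
      have e : ∑ k ∈ Finset.Icc 1 n, ArithmeticFunction.vonMangoldt k = Chebyshev.psi n := by
        rw [Chebyshev.psi, Nat.floor_natCast]; rfl
      rw [e, Real.rpow_one, Real.norm_eq_abs, abs_of_nonneg (Chebyshev.psi_nonneg _)]
      simpa using Chebyshev.psi_le_const_mul_self (x := n) n.cast_nonneg
  have h2 : ∫ t in Set.Ioi (1 : ℝ), (t : ℂ) ^ (-s) = 1 / (s - 1) := by
    rw [integral_Ioi_cpow_of_lt (by simpa using hs) zero_lt_one]
    simp
    rw [show -s + 1 = -(s-1) by ring, neg_div_neg_eq, one_div]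
  have h2i : MeasureTheory.IntegrableOn (fun t : ℝ => (t : ℂ) ^ (-s)) (Set.Ioi 1) :=
    integrableOn_Ioi_cpow_of_lt (by simpa using hs) zero_lt_one
  have h3 : mellin (pF 0) (-s) = ∫ t in Set.Ioi (1 : ℝ),
      ((Chebyshev.psi t : ℂ) * (t : ℂ) ^ (-(s + 1)) - (t : ℂ) ^ (-s)) := by
    rw [mellin]
    have : ∀ t ∈ Set.Ioi (0:ℝ), (t : ℂ) ^ (-s - 1) • pF 0 t = (Set.Ioi (1:ℝ)).indicator (fun t : ℝ =>
        ((Chebyshev.psi t : ℂ) * (t : ℂ) ^ (-(s + 1)) - (t : ℂ) ^ (-s))) t := by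
      intro t ht
      have ht0 : (t : ℂ) ≠ 0 := by exact_mod_cast (ne_of_gt ht)
      rw [Set.indicator_apply]
      split_ifs with h
      · have h' : 1 < t := h
        simp only [pF, pE, Set.indicator_of_mem h, pow_zero, one_mul, smul_eq_mul]
        rw [show -(s + 1) = -s - 1 by ring, Complex.cpow_sub _ _ ht0, Complex.cpow_one]
        push_cast
        field_simp
      · simp only [pF, pE, Set.indicator_of_notMem h]; simp
    rw [MeasureTheory.setIntegral_congr_fun measurableSet_Ioi this,
      MeasureTheory.setIntegral_indicator measurableSet_Ioi]
    congr 2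
    rw [Set.Ioi_inter_Ioi]; simp
  rw [h3, MeasureTheory.integral_sub (psi_integrable hs) h2i, h2]
  have h4 : ∫ t in Set.Ioi (1 : ℝ), (Chebyshev.psi t : ℂ) * (t : ℂ) ^ (-(s + 1)) =
      (-deriv riemannZeta s / riemannZeta s) / s := by
    rw [← ArithmeticFunction.LSeries_vonMangoldt_eq_deriv_riemannZeta_div hs, h1]
    field_simp
  rw [h4, zG]
  have hPe : zP =ᶠ[𝓝 s] fun s => (s - 1) * riemannZeta s := by
    filter_upwards [(isOpen_lt continuous_const Complex.continuous_re).mem_nhds hs] with z hz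
    exact zP_eq hz
  have hdz : HasDerivAt riemannZeta (deriv riemannZeta s) s :=
    (differentiableAt_riemannZeta (sub_ne_zero.1 hs1)).hasDerivAt
  have hdP : deriv zP s = riemannZeta s + (s - 1) * deriv riemannZeta s := by
    rw [hPe.deriv_eq]
    have := ((hasDerivAt_id s).sub_const 1).fun_mul hdz
    simpa using this.deriv
  rw [hdP, zP_eq hs]
  field_simp
  ring

lemma mellin_pF_bound (k : ℕ) : ∃ C : ℝ, ∀ s : ℂ, 1 < s.re → s.re ≤ 2 → ‖mellin (pF k) (-s)‖ ≤ C := by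
  obtain ⟨C, hC⟩ := zG_bound k
  refine ⟨C, fun s h1 h2 => ?_⟩
  have e : zG =ᶠ[𝓝 s] fun s => mellin (pF 0) (-s) := by
    filter_upwards [(isOpen_lt continuous_const Complex.continuous_re).mem_nhds h1] with z hz
    exact (mellin_pF_zero hz).symm
  have := hC s h1 h2
  rw [e.iteratedDeriv_eq, iteratedDeriv_comp_neg, pF_iterated k (-s) (by simpa using h1)] at this
  simpa [norm_smul] using this

open scoped FourierTransform SchwartzMap

/-- A smooth bump function, equal to one on `[-1,1]` and supported in `[-2,2]`. -/
noncomputable def bB : ContDiffBump (0:ℝ) := ⟨1, 2, zero_lt_one, one_lt_two⟩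

lemma bB_fourier : ∃ h : 𝓢(ℝ, ℂ), ∀ u : ℝ, 𝓕 (h : ℝ → ℂ) u = ((bB u : ℝ) : ℂ) := by
  have h1 : HasCompactSupport (fun u : ℝ => ((bB u : ℝ) : ℂ)) :=
    bB.hasCompactSupport.comp_left (g := fun x : ℝ => (x : ℂ)) (by simp)
  have h2 : ContDiff ℝ ((⊤ : ℕ∞) : WithTop ℕ∞) (fun u : ℝ => ((bB u : ℝ) : ℂ)) :=
    Complex.ofRealCLM.contDiff.comp bB.contDiff
  refine ⟨𝓕⁻ (h1.toSchwartzMap h2), fun u => ?_⟩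
  rw [← SchwartzMap.fourier_coe, FourierTransform.fourier_fourierInv_eq]
  rfl

lemma fourier_scaled (h : ℝ → ℂ) {d : ℝ} (hd : 0 < d) (c u : ℝ) :
    𝓕 (fun y : ℝ => (d : ℂ) * Complex.exp (2 * Real.pi * y * c * Complex.I) * h (d * y)) u =
      𝓕 h ((u - c) / d) := by
  have hdc : (d : ℂ) ≠ 0 := by exact_mod_cast hd.ne'
  rw [Real.fourier_real_eq_integral_exp_smul, Real.fourier_real_eq_integral_exp_smul]
  have := MeasureTheory.Measure.integral_comp_mul_left
    (fun v : ℝ => Complex.exp (↑(-2 * Real.pi * v * ((u - c) / d)) * Complex.I) • h v) d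
  rw [abs_of_pos (inv_pos.2 hd)] at this
  have e : ∫ v : ℝ, Complex.exp (↑(-2 * Real.pi * v * ((u - c) / d)) * Complex.I) • h v =
     d • ∫ x : ℝ, (fun v : ℝ => Complex.exp (↑(-2 * Real.pi * v * ((u - c) / d)) * Complex.I) • h v) (d * x) := by
    rw [this, smul_smul, mul_inv_cancel₀ hd.ne', one_smul]
  rw [e, ← MeasureTheory.integral_smul]
  congr 1
  ext y
  simp only [smul_eq_mul, Complex.real_smul]
  have e2 : Complex.exp (↑(-2 * Real.pi * (d * y) * ((u - c) / d)) * Complex.I) =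
    Complex.exp (↑(-2 * Real.pi * y * u) * Complex.I) * Complex.exp (2 * Real.pi * y * c * Complex.I) := by
    rw [← Complex.exp_add]
    congr 1
    push_cast
    field_simp
    ring
  rw [e2]; ring

lemma scaled_norm (h : ℝ → ℂ) {d : ℝ} (hd : 0 < d) (c : ℝ) :
    ∫ y : ℝ, ‖(d : ℂ) * Complex.exp (2 * Real.pi * y * c * Complex.I) * h (d * y)‖ = ∫ y, ‖h y‖ := by
  have := MeasureTheory.Measure.integral_comp_mul_left (fun v : ℝ => ‖h v‖) d
  rw [abs_of_pos (inv_pos.2 hd)] at this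
  have e : ∫ v : ℝ, ‖h v‖ = d • ∫ x : ℝ, ‖h (d * x)‖ := by
    rw [this, smul_smul, mul_inv_cancel₀ hd.ne', one_smul]
  rw [e, ← MeasureTheory.integral_smul]
  congr 1
  ext y
  rw [norm_mul, norm_mul, show (2 * Real.pi * y * c * Complex.I : ℂ) = ((2 * Real.pi * y * c : ℝ) : ℂ) * Complex.I by push_cast; ring,
    Complex.norm_exp_ofReal_mul_I, Complex.norm_real, Real.norm_eq_abs, abs_of_pos hd]
  simp

lemma scaled_integrable (h : 𝓢(ℝ, ℂ)) {d : ℝ} (hd : 0 < d) (c : ℝ) :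
    MeasureTheory.Integrable (fun y : ℝ => (d : ℂ) * Complex.exp (2 * Real.pi * y * c * Complex.I) * h (d * y)) := by
  have h1 : MeasureTheory.Integrable (fun y : ℝ => h (d * y)) := h.integrable.comp_mul_left' hd.ne'
  refine h1.bdd_mul (c := d) ?_ ?_
  · refine Continuous.aestronglyMeasurable ?_
    fun_prop
  · refine Filter.Eventually.of_forall (fun y => ?_)
    rw [norm_mul, show (2 * Real.pi * y * c * Complex.I : ℂ) = ((2 * Real.pi * y * c : ℝ) : ℂ) * Complex.I by push_cast; ring,
      Complex.norm_exp_ofReal_mul_I, Complex.norm_real, Real.norm_eq_abs, abs_of_pos hd]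
    simp

/-- The Mellin integrand in additive coordinates. -/
noncomputable def pPhi (k : ℕ) (σ : ℝ) (u : ℝ) : ℂ := Real.exp (σ * u) • pF k (Real.exp (-u))

lemma pPhi_integrable (k : ℕ) {σ : ℝ} (hσ : 1 < σ) : MeasureTheory.Integrable (pPhi k σ) := by
  have h := (pF_mellin k (w := ((-σ : ℝ) : ℂ)) (by simpa using hσ)).1
  rw [MellinConvergent] at h
  have himg : (fun x : ℝ => Real.exp (-x)) '' Set.univ = Set.Ioi 0 := by
    have : (fun x : ℝ => Real.exp (-x)) = Real.exp ∘ Neg.neg := rfl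
    rw [this, Set.image_comp, Set.image_univ_of_surjective neg_surjective, Set.image_univ, Real.range_exp]
  rw [← himg, MeasureTheory.integrableOn_image_iff_integrableOn_abs_deriv_smul (f' := fun x => -Real.exp (-x))
    MeasurableSet.univ] at h
  · rw [MeasureTheory.integrableOn_univ] at h
    refine h.congr (Filter.Eventually.of_forall fun u => ?_)
    simp only [pPhi, Complex.real_smul, smul_eq_mul, abs_neg, abs_of_pos (Real.exp_pos _)]
    rw [← mul_assoc]
    congr 1
    rw [show ((-σ : ℝ) : ℂ) - 1 = ((-σ - 1 : ℝ) : ℂ) by push_cast; ring, ← Complex.ofReal_cpow (Real.exp_pos _).le,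
      ← Complex.ofReal_mul]
    congr 1
    rw [← Real.exp_mul, ← Real.exp_add]
    congr 1; ring
  · intro x _
    have := ((Real.hasDerivAt_exp (-x)).comp x (hasDerivAt_neg x))
    rw [mul_neg_one] at this
    exact this.hasDerivWithinAt
  · intro a _ b _ hab
    simpa using hab

lemma pPhi_fourier (k : ℕ) (σ y : ℝ) :
    𝓕 (pPhi k σ) y = mellin (pF k) (-((σ : ℂ) + ((-(2 * Real.pi * y) : ℝ) : ℂ) * Complex.I)) := by
  rw [mellin_eq_fourier]
  have hpi := Real.pi_pos
  have e1 : (fun u : ℝ => Real.exp (-(-((σ : ℂ) + ((-(2 * Real.pi * y) : ℝ) : ℂ) * Complex.I)).re * u) •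
      pF k (Real.exp (-u))) = pPhi k σ := by
    ext u
    have : -(-((σ : ℂ) + ((-(2 * Real.pi * y) : ℝ) : ℂ) * Complex.I)).re = σ := by simp
    rw [this, pPhi]
  have e2 : (-((σ : ℂ) + ((-(2 * Real.pi * y) : ℝ) : ℂ) * Complex.I)).im / (2 * Real.pi) = y := by
    simp
  rw [e1, e2]

lemma test_bound (k : ℕ) : ∃ C : ℝ, ∀ σ d c : ℝ, 1 < σ → σ ≤ 2 → 0 < d →
    MeasureTheory.Integrable (fun u : ℝ => Real.exp (σ * u) * ((-u) ^ k * pE (Real.exp (-u))) * bB ((u - c) / d)) ∧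
    |∫ u : ℝ, Real.exp (σ * u) * ((-u) ^ k * pE (Real.exp (-u))) * bB ((u - c) / d)| ≤ C := by
  obtain ⟨h, hh⟩ := bB_fourier
  obtain ⟨C, hC⟩ := mellin_pF_bound k
  refine ⟨(∫ y, ‖h y‖) * C, fun σ d c h1 h2 hd => ?_⟩
  have hphi := pPhi_integrable k h1
  have hs := scaled_integrable h hd c
  have hre : ∀ u : ℝ, ((Real.exp (σ * u) * ((-u) ^ k * pE (Real.exp (-u))) * bB ((u - c) / d) : ℝ) : ℂ) =
      ((bB ((u - c) / d) : ℝ) : ℂ) * pPhi k σ u := by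
    intro u
    simp only [pPhi, pF, Real.log_exp, Complex.real_smul]
    push_cast; ring
  constructor
  · have : MeasureTheory.Integrable (fun u : ℝ => ((bB ((u - c) / d) : ℝ) : ℂ) * pPhi k σ u) := by
      refine hphi.bdd_mul (c := 1) ?_ ?_
      · refine Continuous.aestronglyMeasurable ?_
        exact Complex.continuous_ofReal.comp (bB.continuous.comp (by fun_prop))
      · refine Filter.Eventually.of_forall (fun y => ?_)
        rw [Complex.norm_real, Real.norm_eq_abs, abs_of_nonneg bB.nonneg]
        exact bB.le_one
    have := this.re
    refine this.congr (Filter.Eventually.of_forall fun u => ?_)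
    simp only [← hre]
    exact Complex.ofReal_re _
  · have hd1 : ∫ u : ℝ, (𝓕 (fun y : ℝ => (d : ℂ) * Complex.exp (2 * Real.pi * y * c * Complex.I) * h (d * y)) u) • pPhi k σ u
      = ∫ y : ℝ, ((d : ℂ) * Complex.exp (2 * Real.pi * y * c * Complex.I) * h (d * y)) • 𝓕 (pPhi k σ) y := by
      simpa using! (VectorFourier.integral_fourierIntegral_smul_eq_flip (L := innerₗ ℝ)
        Real.continuous_fourierChar continuous_inner hs hphi)
    have e : ((∫ u : ℝ, Real.exp (σ * u) * ((-u) ^ k * pE (Real.exp (-u))) * bB ((u - c) / d) : ℝ) : ℂ) =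
        ∫ u : ℝ, (𝓕 (fun y : ℝ => (d : ℂ) * Complex.exp (2 * Real.pi * y * c * Complex.I) * h (d * y)) u) • pPhi k σ u := by
      rw [← integral_complex_ofReal]
      congr 1
      ext u
      rw [fourier_scaled (h : ℝ → ℂ) hd, hh, smul_eq_mul]
      exact hre u
    rw [← Real.norm_eq_abs, ← Complex.norm_real, e, hd1]
    rw [← scaled_norm (h : ℝ → ℂ) hd c, ← MeasureTheory.integral_mul_const]
    refine MeasureTheory.norm_integral_le_of_norm_le (hs.norm.mul_const C) (Filter.Eventually.of_forall fun y => ?_)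
    rw [norm_smul]
    gcongr
    rw [pPhi_fourier]
    exact hC _ (by simpa using h1) (by simpa using h2)

lemma test_lower (k : ℕ) : ∃ C : ℝ, ∀ σ d U s m a B : ℝ, 1 < σ → σ ≤ 2 → 0 < d → |s| = 1 → 0 ≤ m → 0 ≤ a →
    (∀ v, |v - U| ≤ 2 * d → a ≤ v ∧ v ≤ B ∧ m ≤ s * pE (Real.exp v)) →
    2 * d * (Real.exp (-(σ * B)) * (a ^ k * m)) ≤ C := by
  obtain ⟨C, hC⟩ := test_bound k
  refine ⟨C, fun σ d U s m a B h1 h2 hd hs hm ha hv => ?_⟩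
  obtain ⟨hi, hb⟩ := hC σ d (-U) h1 h2 hd
  have h3 : s * (∫ u : ℝ, Real.exp (σ * u) * ((-u) ^ k * pE (Real.exp (-u))) * bB ((u - -U) / d)) ≤ C := by
    refine (le_abs_self _).trans ?_
    rw [abs_mul, hs, one_mul]; exact hb
  refine le_trans ?_ h3
  rw [← MeasureTheory.integral_const_mul]
  have h4 : 2 * d * (Real.exp (-(σ * B)) * (a ^ k * m)) =
      ∫ u : ℝ, (Set.Icc (-U - d) (-U + d)).indicator (fun _ => Real.exp (-(σ * B)) * (a ^ k * m)) u := by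
    rw [MeasureTheory.integral_indicator measurableSet_Icc, MeasureTheory.setIntegral_const, smul_eq_mul,
      Real.volume_real_Icc_of_le (by linarith)]
    ring
  rw [h4]
  refine MeasureTheory.integral_mono ?_ (hi.const_mul s) ?_
  · rw [MeasureTheory.integrable_indicator_iff measurableSet_Icc]
    exact MeasureTheory.integrableOn_const (by simp)
  · intro u
    have hmain : |u + U| ≤ 2 * d → Real.exp (-(σ * B)) * (a ^ k * m) ≤
        s * (Real.exp (σ * u) * ((-u) ^ k * pE (Real.exp (-u)))) := by
      intro hu
      obtain ⟨g1, g2, g3⟩ := hv (-u) (by rw [← abs_neg]; simpa [add_comm] using hu)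
      have : s * (Real.exp (σ * u) * ((-u) ^ k * pE (Real.exp (-u)))) =
        Real.exp (σ * u) * ((-u) ^ k * (s * pE (Real.exp (-u)))) := by ring
      rw [this]
      have : -(σ * B) ≤ σ * u := by nlinarith
      have hk : 0 ≤ (-u) ^ k := pow_nonneg (ha.trans g1) k
      gcongr
    have hpos : 0 ≤ Real.exp (-(σ * B)) * (a ^ k * m) := by positivity
    simp only
    rw [Set.indicator_apply, show u - -U = u + U by ring]
    split_ifs with hu
    · have hu1 : |u + U| ≤ d := by
        rw [abs_le]; constructor <;> linarith [hu.1, hu.2]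
      have : bB ((u + U) / d) = 1 := by
        apply bB.one_of_mem_closedBall
        rw [mem_closedBall_zero_iff, Real.norm_eq_abs, abs_div, abs_of_pos hd, div_le_iff₀ hd]
        simpa [bB] using hu1
      rw [this, mul_one]
      exact hmain (by linarith)
    · by_cases hu2 : |u + U| ≤ 2 * d
      · have := hmain hu2
        rw [← mul_assoc]
        exact mul_nonneg (hpos.trans this) bB.nonneg
      · have : bB ((u + U) / d) = 0 := by
          apply bB.zero_of_le_dist
          rw [dist_zero_right, Real.norm_eq_abs, abs_div, abs_of_pos hd, le_div_iff₀ hd]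
          simp only [bB]; linarith
        rw [this]; simp

lemma pE_eq {x : ℝ} (hx : 1 < x) : pE x = Chebyshev.psi x - x := by
  rw [pE, Set.indicator_of_mem (by exact hx)]

lemma eta_bound (k : ℕ) : ∃ C : ℝ, 0 ≤ C ∧ ∀ u₀ η : ℝ, 2 ≤ u₀ → 0 ≤ η → η ≤ 1 →
    η * Real.exp u₀ ≤ |pE (Real.exp u₀)| → η ^ 2 * u₀ ^ k ≤ C := by
  obtain ⟨C, hC⟩ := test_lower k
  refine ⟨max 0 (C * (16 * Real.exp 3 * 2 ^ k)), le_max_left _ _, fun u₀ η hu hη0 hη1 hE => ?_⟩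
  rcases hη0.eq_or_lt with h0 | hη
  · rw [← h0]; simp
  refine le_trans ?_ (le_max_right _ _)
  have hx1 : 1 < Real.exp u₀ := by rw [Real.one_lt_exp_iff]; linarith
  have hx0 : 0 < Real.exp u₀ := Real.exp_pos _
  rw [pE_eq hx1] at hE
  have hui : 1 / u₀ ≤ 1 := by rw [div_le_one (by linarith)]; linarith
  have hui0 : 0 < 1 / u₀ := by positivity
  have key : 2 * (η / 16) * (Real.exp (-((1 + 1 / u₀) * (u₀ + 1))) * ((u₀ / 2) ^ k * (η / 2 * Real.exp u₀))) ≤ C := by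
    rcases le_total 0 (Chebyshev.psi (Real.exp u₀) - Real.exp u₀) with hs | hs
    · rw [abs_of_nonneg hs] at hE
      refine hC (1 + 1 / u₀) (η / 16) (u₀ + η / 8) 1 _ _ _ (by linarith) (by linarith) (by linarith) (by simp)
        (by positivity) (by linarith) ?_
      intro v hv
      rw [abs_le] at hv
      have hv1 : u₀ ≤ v := by linarith
      have hv2 : v ≤ u₀ + η / 4 := by linarith
      refine ⟨by linarith, by linarith, ?_⟩
      have hvx : Real.exp u₀ ≤ Real.exp v := Real.exp_le_exp.2 hv1
      rw [pE_eq (by linarith), one_mul]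
      have h1 := Chebyshev.psi_mono hvx
      have h2 : Real.exp v ≤ Real.exp u₀ * (1 + η / 2) := by
        calc Real.exp v ≤ Real.exp (u₀ + η / 4) := Real.exp_le_exp.2 hv2
          _ = Real.exp u₀ * Real.exp (η / 4) := Real.exp_add _ _
          _ ≤ _ := by
            gcongr
            have := Real.exp_bound_div_one_sub_of_interval (x := η / 4) (by linarith) (by linarith)
            refine this.trans ?_
            rw [div_le_iff₀ (by linarith)]
            nlinarith
      nlinarith
    · rw [abs_of_nonpos hs] at hE
      refine hC (1 + 1 / u₀) (η / 16) (u₀ - η / 8) (-1) _ _ _ (by linarith) (by linarith) (by linarith) (by simp)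
        (by positivity) (by linarith) ?_
      intro v hv
      rw [abs_le] at hv
      have hv1 : v ≤ u₀ := by linarith
      have hv2 : u₀ - η / 4 ≤ v := by linarith
      refine ⟨by linarith, by linarith, ?_⟩
      have hvx : Real.exp v ≤ Real.exp u₀ := Real.exp_le_exp.2 hv1
      have hv0 : 1 < Real.exp v := by rw [Real.one_lt_exp_iff]; linarith
      rw [pE_eq hv0]
      have h1 := Chebyshev.psi_mono hvx
      have h2 : Real.exp u₀ * (1 - η / 4) ≤ Real.exp v := by
        calc Real.exp u₀ * (1 - η / 4) ≤ Real.exp u₀ * Real.exp (-(η / 4)) := by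
              gcongr
              exact Real.one_sub_le_exp_neg _
          _ = Real.exp (u₀ - η / 4) := by rw [← Real.exp_add]; rfl
          _ ≤ _ := Real.exp_le_exp.2 hv2
      nlinarith
  have h5 : Real.exp (-(u₀ + 3)) ≤ Real.exp (-((1 + 1 / u₀) * (u₀ + 1))) := by
    apply Real.exp_le_exp.2
    have : (1 + 1 / u₀) * (u₀ + 1) = u₀ + 2 + 1 / u₀ := by field_simp; ring
    linarith
  have h6 : 2 * (η / 16) * (Real.exp (-(u₀ + 3)) * ((u₀ / 2) ^ k * (η / 2 * Real.exp u₀))) ≤ C := by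
    refine le_trans ?_ key
    gcongr
  have h7 : 2 * (η / 16) * (Real.exp (-(u₀ + 3)) * ((u₀ / 2) ^ k * (η / 2 * Real.exp u₀))) *
      (16 * Real.exp 3 * 2 ^ k) = η ^ 2 * u₀ ^ k := by
    rw [Real.exp_neg, Real.exp_add, div_pow]
    field_simp
  rw [← h7]
  gcongr

lemma psi_bound (A : ℕ) : ∃ C : ℝ, 0 ≤ C ∧ ∀ x : ℝ, Real.exp 2 ≤ x → |Chebyshev.psi x - x| * Real.log x ^ A ≤ C * x := by
  obtain ⟨C, hC0, hC⟩ := eta_bound (2 * A)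
  have hl : 0 ≤ Real.log 4 := Real.log_nonneg (by norm_num)
  refine ⟨(Real.log 4 + 5) * Real.sqrt C, by positivity, fun x hx => ?_⟩
  have hx0 : 0 < x := (Real.exp_pos 2).trans_le hx
  have hx1 : 1 < x := lt_of_lt_of_le (by rw [Real.one_lt_exp_iff]; norm_num) hx
  have hu : 2 ≤ Real.log x := (Real.le_log_iff_exp_le hx0).2 hx
  have hb := pE_abs_le hx0.le
  rw [← pE_eq hx1]
  set η := |pE x| / x / (Real.log 4 + 5) with hη
  have hE : |pE x| = η * x * (Real.log 4 + 5) := by rw [hη]; field_simp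
  have hη0 : 0 ≤ η := by positivity
  have hη1 : η ≤ 1 := by
    rw [hη, div_div, div_le_one (by positivity)]; linarith
  have := hC (Real.log x) η hu hη0 hη1 (by
    rw [Real.exp_log hx0, hE]
    have : 0 ≤ η * x := by positivity
    nlinarith)
  have h2 : η * Real.log x ^ A ≤ Real.sqrt C := by
    apply Real.le_sqrt_of_sq_le
    rw [mul_pow, ← pow_mul, mul_comm A 2]; exact this
  rw [hE]
  calc η * x * (Real.log 4 + 5) * Real.log x ^ A = (η * Real.log x ^ A) * (x * (Real.log 4 + 5)) := by ring
    _ ≤ Real.sqrt C * (x * (Real.log 4 + 5)) := by gcongr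
    _ = _ := by ring

lemma log_succ_le {x : ℝ} (hx : 8 ≤ x) : Real.log (x + 1) ≤ 2 * Real.log x := by
  have : 2 * Real.log x = Real.log (x ^ 2) := by rw [Real.log_pow]; norm_num
  rw [this]
  exact Real.log_le_log (by linarith) (by nlinarith)

lemma exp_two_le : Real.exp 2 ≤ 8 := by
  have h := Real.exp_one_lt_d9
  have e : Real.exp 2 = Real.exp 1 * Real.exp 1 := by rw [← Real.exp_add]; norm_num
  have := Real.exp_pos 1
  rw [e]; nlinarith

lemma log_ge_two {x : ℝ} (hx : 8 ≤ x) : 2 ≤ Real.log x :=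
  (Real.le_log_iff_exp_le (by linarith)).2 (exp_two_le.trans hx)

lemma log_tele {x : ℝ} (hx : 8 ≤ x) :
    1 / (x * Real.log x ^ 2) ≤ 4 * (1 / Real.log x - 1 / Real.log (x + 1)) := by
  have h1 := log_ge_two hx
  have h2 := log_ge_two (x := x + 1) (by linarith)
  have h3 := log_succ_le hx
  have h4 : 1 / (2 * x) ≤ Real.log (x + 1) - Real.log x := by
    rw [← Real.log_div (by linarith) (by linarith)]
    refine le_trans ?_ (Real.one_sub_inv_le_log_of_pos (by positivity))
    rw [inv_div, one_sub_div (by linarith), add_sub_cancel_left]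
    exact one_div_le_one_div_of_le (by linarith) (by linarith)
  rw [div_sub_div _ _ (by linarith) (by linarith), one_mul, mul_one]
  calc 1 / (x * Real.log x ^ 2) = 4 * ((1 / (2 * x)) / (Real.log x * (2 * Real.log x))) := by field_simp; norm_num
    _ ≤ _ := by
      have h5 : 0 ≤ Real.log (x + 1) - Real.log x := le_trans (by positivity) h4
      gcongr

lemma summable_aux : Summable (fun n : ℕ => 1 / (((n:ℝ) + 8) * Real.log ((n:ℝ) + 8) ^ 2)) := by
  have hn : ∀ n : ℕ, (8:ℝ) ≤ (n:ℝ) + 8 := fun n => by have := n.cast_nonneg (α := ℝ); linarith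
  refine summable_of_sum_range_le (c := 4 * (1 / Real.log 8)) (fun n => by have := hn n; positivity) (fun n => ?_)
  calc _ ≤ ∑ i ∈ Finset.range n, 4 * ((fun i : ℕ => 1 / Real.log ((i:ℝ) + 8)) i - (fun i : ℕ => 1 / Real.log ((i:ℝ) + 8)) (i + 1)) := by
        refine Finset.sum_le_sum (fun i _ => ?_)
        have := log_tele (hn i)
        simp only
        push_cast
        rw [show (i:ℝ) + 1 + 8 = i + 8 + 1 by ring]
        exact this
    _ ≤ _ := by
        rw [← Finset.mul_sum, Finset.sum_range_sub']
        have := log_ge_two (hn n)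
        have : 0 ≤ 1 / Real.log ((n:ℝ) + 8) := by positivity
        simp at this ⊢
        exact this

/-- The weight `log^l x / x`. -/
noncomputable def cW (l : ℕ) (x : ℝ) : ℝ := Real.log x ^ l / x

lemma cW_lip (l : ℕ) {x : ℝ} (hx : 8 ≤ x) {y z : ℝ} (hy : y ∈ Set.Icc x (x+1)) (hz : z ∈ Set.Icc x (x+1)) :
    |cW l y - cW l z| ≤ (l + 1) * 2 ^ l * Real.log x ^ l / x ^ 2 := by
  have hd : ∀ t ∈ Set.Icc x (x+1), HasDerivAt (cW l)
      (((l : ℝ) * Real.log t ^ (l - 1) * t⁻¹ * t - Real.log t ^ l * 1) / t ^ 2) t := by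
    intro t ht
    have h0 : t ≠ 0 := by linarith [ht.1]
    exact ((Real.hasDerivAt_log h0).pow l).div (hasDerivAt_id t) h0
  have hb : ∀ t ∈ Set.Icc x (x+1), ‖((l : ℝ) * Real.log t ^ (l - 1) * t⁻¹ * t - Real.log t ^ l * 1) / t ^ 2‖
      ≤ (l + 1) * 2 ^ l * Real.log x ^ l / x ^ 2 := by
    intro t ht
    have h0 : 0 < t := by linarith [ht.1]
    have h1 := log_ge_two hx
    have ht1 : Real.log x ≤ Real.log t := Real.log_le_log (by linarith) ht.1
    have ht2 : Real.log t ≤ 2 * Real.log x :=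
      (Real.log_le_log h0 ht.2).trans (log_succ_le hx)
    have hp : Real.log t ^ (l - 1) ≤ Real.log t ^ l := pow_le_pow_right₀ (by linarith) (by omega)
    have hq : Real.log t ^ l ≤ 2 ^ l * Real.log x ^ l := by
      rw [← mul_pow]; gcongr
      linarith
    rw [norm_div, Real.norm_eq_abs, Real.norm_eq_abs, abs_of_pos (by positivity : 0 < t ^ 2),
      mul_assoc _ t⁻¹ t, inv_mul_cancel₀ h0.ne', mul_one, mul_one]
    have hp0 : 0 ≤ Real.log t ^ (l - 1) := pow_nonneg (by linarith) _
    have hp1 : 0 ≤ Real.log t ^ l := pow_nonneg (by linarith) _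
    have hl : (0:ℝ) ≤ l := l.cast_nonneg
    have hnum : |(l : ℝ) * Real.log t ^ (l - 1) - Real.log t ^ l| ≤ (l + 1) * 2 ^ l * Real.log x ^ l := by
      have a1 : (l:ℝ) * Real.log t ^ (l - 1) ≤ l * Real.log t ^ l := by gcongr
      have a2 : ((l:ℝ) + 1) * Real.log t ^ l ≤ (l + 1) * (2 ^ l * Real.log x ^ l) := by gcongr
      have a3 : 0 ≤ (l:ℝ) * Real.log t ^ (l - 1) := by positivity
      rw [abs_le]; constructor <;> nlinarith
    have : 0 ≤ (l + 1) * 2 ^ l * Real.log x ^ l := (abs_nonneg _).trans hnum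
    have hx0 : 0 < x := by linarith
    gcongr
    exact ht.1
  have := (convex_Icc x (x+1)).norm_image_sub_le_of_norm_hasDerivWithin_le
    (fun t ht => (hd t ht).hasDerivWithinAt) hb hz hy
  refine this.trans ?_
  have h1 := log_ge_two hx
  have hyz : ‖y - z‖ ≤ 1 := by
    rw [Real.norm_eq_abs, abs_le]; constructor <;> linarith [hy.1, hy.2, hz.1, hz.2]
  refine mul_le_of_le_one_right ?_ hyz
  positivity

lemma gW_diff (l : ℕ) {x : ℝ} (hx : 8 ≤ x) : ∃ ξ ∈ Set.Icc x (x+1),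
    Real.log (x+1) ^ (l+1) / (l+1) - Real.log x ^ (l+1) / (l+1) = cW l ξ := by
  have hl : (l:ℝ) + 1 ≠ 0 := by positivity
  have hd : ∀ t, 0 < t → HasDerivAt (fun t : ℝ => Real.log t ^ (l+1) / (l+1)) (cW l t) t := by
    intro t ht
    have := ((Real.hasDerivAt_log ht.ne').pow (l+1)).div_const ((l:ℝ)+1)
    convert! this using 1
    rw [cW]; push_cast
    field_simp
  obtain ⟨ξ, hξ, h⟩ := exists_hasDerivAt_eq_slope (fun t : ℝ => Real.log t ^ (l+1) / (l+1)) (cW l)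
    (show x < x + 1 by linarith) (fun t ht => (hd t (by linarith [ht.1])).continuousAt.continuousWithinAt)
    (fun t ht => hd t (by linarith [ht.1]))
  refine ⟨ξ, Set.Ioo_subset_Icc_self hξ, ?_⟩
  rw [h]; simp

lemma psi_succ (N : ℕ) : Chebyshev.psi ((N:ℝ) + 1) = Chebyshev.psi N + ArithmeticFunction.vonMangoldt (N + 1) := by
  have : ((N:ℝ) + 1) = ((N + 1 : ℕ) : ℝ) := by push_cast; rfl
  rw [this, Chebyshev.psi, Chebyshev.psi, Nat.floor_natCast, Nat.floor_natCast,
    Finset.sum_Ioc_succ_top (Nat.zero_le N)]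

lemma one_add_E_bound (l : ℕ) : ∃ K : ℝ, 0 ≤ K ∧ ∀ᶠ x : ℝ in atTop,
    (1 + |Chebyshev.psi x - x|) * Real.log x ^ (l + 2) ≤ K * x := by
  obtain ⟨C, hC0, hC⟩ := psi_bound (l + 2)
  refine ⟨1 + C, by positivity, ?_⟩
  have h := (Real.isLittleO_pow_log_id_atTop (n := l + 2)).bound (zero_lt_one' ℝ)
  filter_upwards [h, eventually_ge_atTop (Real.exp 2)] with x h1 h2
  have hx0 : 0 < x := (Real.exp_pos 2).trans_le h2
  have := hC x h2
  rw [Real.norm_eq_abs, id, Real.norm_eq_abs, abs_of_pos hx0] at h1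
  have := (le_abs_self _).trans h1
  nlinarith

/-- Existence of the generalized Stieltjes-type constants: for every natural number `l`,
the sequence `N ↦ ∑_{k=2}^N Λ(k)(log k)^l / k − (log N)^{l+1}/(l+1)` converges as `N → ∞`,
where `Λ` is the von Mangoldt function. -/
theorem stieltjes_type_constants_exist (l : ℕ) :
    ∃ L : ℝ, Filter.Tendsto
      (fun N : ℕ => (∑ k ∈ Finset.Icc 2 N,
          ArithmeticFunction.vonMangoldt k * (Real.log k) ^ l / k) -
        (Real.log N) ^ (l + 1) / (l + 1))
      Filter.atTop (𝓝 L) := by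
  set S : ℕ → ℝ := fun N : ℕ => (∑ k ∈ Finset.Icc 2 N,
          ArithmeticFunction.vonMangoldt k * (Real.log k) ^ l / k) -
        (Real.log N) ^ (l + 1) / (l + 1) with hS
  obtain ⟨K, hK0, hK⟩ := one_add_E_bound l
  obtain ⟨x₀, hx₀⟩ := eventually_atTop.1 hK
  obtain ⟨m, hm⟩ := exists_nat_ge x₀
  set T : ℕ → ℝ := fun N => S N - (Chebyshev.psi N - N) * cW l N with hT
  have hEc : Tendsto (fun n : ℕ => (Chebyshev.psi n - n) * cW l n) atTop (𝓝 0) := by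
    have hlog : Tendsto (fun n : ℕ => K / Real.log n ^ 2) atTop (𝓝 0) := by
      refine Tendsto.div_atTop tendsto_const_nhds ?_
      exact (tendsto_pow_atTop two_ne_zero).comp (Real.tendsto_log_atTop.comp tendsto_natCast_atTop_atTop)
    refine squeeze_zero_norm' ?_ hlog
    filter_upwards [eventually_ge_atTop (m + 8)] with n hn
    have hn1 : (m:ℝ) + 8 ≤ n := by exact_mod_cast hn
    have hm0 : (0:ℝ) ≤ m := m.cast_nonneg
    have hx := hx₀ n (by linarith)
    have hl := log_ge_two (x := n) (by linarith)
    have hn0 : (0:ℝ) < n := by linarith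
    rw [norm_mul, Real.norm_eq_abs, Real.norm_eq_abs, cW, abs_of_nonneg (by positivity : 0 ≤ Real.log n ^ l / n),
      le_div_iff₀ (by positivity)]
    have hp : 0 ≤ Real.log n ^ (l + 2) := by positivity
    rw [show |Chebyshev.psi n - n| * (Real.log n ^ l / n) * Real.log n ^ 2 =
      |Chebyshev.psi n - n| * Real.log n ^ (l + 2) / n by ring, div_le_iff₀ hn0]
    nlinarith
  have hc : CauchySeq (fun n => T (n + (m + 8))) := by
    have hsum : Summable (fun n : ℕ => (K * ((l + 1) * 2 ^ l)) * (1 / ((((n + m : ℕ) : ℝ) + 8) * Real.log (((n + m : ℕ) : ℝ) + 8) ^ 2))) :=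
      ((summable_nat_add_iff m).2 summable_aux).mul_left _
    refine cauchySeq_of_dist_le_of_summable _ (fun n => ?_) hsum
    set N : ℕ := n + (m + 8) with hN
    have hNs : n.succ + (m + 8) = N + 1 := by omega
    have hNc : ((n + m : ℕ) : ℝ) + 8 = (N : ℝ) := by rw [hN]; push_cast; ring
    rw [hNs, hNc]
    have hmN : (m:ℝ) + 8 ≤ N := by rw [hN]; push_cast; linarith [n.cast_nonneg (α := ℝ)]
    have hm0 : (0:ℝ) ≤ m := m.cast_nonneg
    have hN8 : (8:ℝ) ≤ N := by linarith
    have hx := hx₀ N (by linarith)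
    have hl := log_ge_two hN8
    have hN0 : (0:ℝ) < N := by linarith
    obtain ⟨ξ, hξ, hg⟩ := gW_diff l hN8
    have hdiff : T (N + 1) - T N = (cW l (N + 1) - cW l ξ) + (Chebyshev.psi N - N) * (cW l N - cW l (N + 1)) := by
      rw [← hg]
      simp only [hT, hS]
      rw [Finset.sum_Icc_succ_top (by omega)]
      push_cast
      rw [psi_succ]
      have : ArithmeticFunction.vonMangoldt (N + 1) * Real.log ((N:ℝ) + 1) ^ l / ((N:ℝ) + 1) =
        ArithmeticFunction.vonMangoldt (N + 1) * cW l (N + 1) := by rw [cW]; ring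
      rw [this]
      ring
    have m1 : (N:ℝ) ∈ Set.Icc (N:ℝ) (N + 1) := ⟨le_rfl, by linarith⟩
    have m2 : (N:ℝ) + 1 ∈ Set.Icc (N:ℝ) (N + 1) := ⟨by linarith, le_rfl⟩
    have b1 := cW_lip l hN8 m2 hξ
    have b2 := cW_lip l hN8 m1 m2
    rw [dist_comm, Real.dist_eq, hdiff]
    calc _ ≤ |cW l (N + 1) - cW l ξ| + |Chebyshev.psi N - N| * |cW l N - cW l (N + 1)| := by
          rw [← abs_mul]; exact abs_add_le _ _
      _ ≤ (l + 1) * 2 ^ l * Real.log N ^ l / N ^ 2 + |Chebyshev.psi N - N| * ((l + 1) * 2 ^ l * Real.log N ^ l / N ^ 2) := by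
          gcongr
      _ = ((1 + |Chebyshev.psi N - N|) * Real.log N ^ (l + 2)) * ((l + 1) * 2 ^ l / (N ^ 2 * Real.log N ^ 2)) := by
          field_simp; ring
      _ ≤ (K * N) * ((l + 1) * 2 ^ l / (N ^ 2 * Real.log N ^ 2)) := by gcongr
      _ = _ := by field_simp
  obtain ⟨L, hL⟩ := cauchySeq_tendsto_of_complete hc
  refine ⟨L, ?_⟩
  have hTL : Tendsto T atTop (𝓝 L) := (tendsto_add_atTop_iff_nat (m + 8)).1 hL
  have := hTL.add hEc
  rw [add_zero] at this
  refine this.congr (fun n => ?_)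
  simp only [hT]; ring
end
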